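/- arXiv:2001.02945 — 5 statements merged into one kernel-verified Lean document; each statement's English description precedes it below -/
import Mathlib

section
/- Let p be a prime and let n, k1, k2 be positive integers. Let G be a group of order 2^n · p generated by elements ρ0, ρ1, ρ2 satisfying ρ0^2 = ρ1^2 = ρ2^2 = (ρ0ρ2)^2 = (ρ0ρ1)^{k1} = (ρ1ρ2)^{k2} = 1. Then p divides k1 or p divides k2. -/
open scoped Pointwise

section

variable {G : Type*} [Group G]

/-- Two involutions whose product has 2-power order lie in a common Sylow 2-subgroup. -/
theorem exists_sylow_two_of_involutions {a b : G} {m : ℕ} (ha : a ^ 2 = 1) (hb : b ^ 2 = 1)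
    (hab : orderOf (a * b) ∣ 2 ^ m) : ∃ S : Sylow 2 G, a ∈ S ∧ b ∈ S := by
  have hZ : IsPGroup 2 (Subgroup.zpowers (a * b)) := by
    obtain ⟨j, -, hj⟩ := (Nat.dvd_prime_pow Nat.prime_two).1 hab
    exact IsPGroup.of_card (n := j) (by rw [Nat.card_zpowers, hj])
  have hA : IsPGroup 2 (Subgroup.zpowers a) := by
    obtain ⟨j, -, hj⟩ := (Nat.dvd_prime_pow Nat.prime_two).1
      (show orderOf a ∣ 2 ^ 1 from by simpa using orderOf_dvd_of_pow_eq_one ha)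
    exact IsPGroup.of_card (n := j) (by rw [Nat.card_zpowers, hj])
  have ha' : a⁻¹ = a := inv_eq_of_mul_eq_one_left (by rw [← sq, ha])
  have hb' : b⁻¹ = b := inv_eq_of_mul_eq_one_left (by rw [← sq, hb])
  have hconj : a * (a * b) * a⁻¹ = (a * b)⁻¹ := by
    rw [mul_inv_rev, hb', ha', ← mul_assoc a a b, ← sq, ha, one_mul]
  have hnorm : Subgroup.zpowers a ≤ Subgroup.normalizer (Subgroup.zpowers (a * b) : Set G) := by
    rw [Subgroup.zpowers_le, Subgroup.mem_normalizer_iff]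
    have key : ∀ h ∈ Subgroup.zpowers (a * b), a * h * a⁻¹ ∈ Subgroup.zpowers (a * b) := by
      rintro _ ⟨i, rfl⟩
      refine ⟨-i, ?_⟩
      simp only [← conj_zpow, hconj, inv_zpow, zpow_neg]
    intro h
    refine ⟨key h, fun hh => ?_⟩
    have := key _ hh
    rw [ha'] at this
    have e : a * (a * h * a) * a = h := by
      rw [show a * (a * h * a) * a = a ^ 2 * h * a ^ 2 by simp only [sq, mul_assoc], ha]; simp
    rwa [e] at this
  obtain ⟨S, hS⟩ := (hA.to_sup_of_normal_right' hZ hnorm).exists_le_sylow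
  have haS : a ∈ S := hS (Subgroup.mem_sup_left (Subgroup.mem_zpowers a))
  have habS : a * b ∈ S := hS (Subgroup.mem_sup_right (Subgroup.mem_zpowers _))
  exact ⟨S, haS, (Subgroup.mul_mem_cancel_left S.1 haS).1 habS⟩

/-- A proper subgroup of a finite `q`-subgroup is properly contained in its normalizer there. -/
theorem IsPGroup.exists_mem_normalizer_notMem [Finite G] {q : ℕ} [Fact q.Prime] {D S : Subgroup G}
    (hS : IsPGroup q S) (hDS : D < S) :
    ∃ x ∈ S, x ∉ D ∧ x ∈ Subgroup.normalizer (D : Set G) := by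
  have := hS.isNilpotent
  have hlt : D.subgroupOf S < ⊤ := by
    rw [lt_top_iff_ne_top, Ne, Subgroup.subgroupOf_eq_top]
    exact hDS.not_ge
  obtain ⟨x, hx, hxD⟩ := SetLike.exists_of_lt
    (Group.normalizerCondition_of_isNilpotent (G := S) _ hlt)
  refine ⟨x, x.2, hxD, ?_⟩
  rw [← Subgroup.subgroupOf_normalizer_eq hDS.le] at hx
  exact hx

/-- In a group of order `q ^ n * p`, if a `q`-subgroup is normalized by an element of order `p`,
then it lies in every Sylow `q`-subgroup. -/
theorem Sylow.le_of_card_eq_of_prime_dvd_normalizer [Finite G] {q p n : ℕ} [Fact q.Prime]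
    [Fact p.Prime] (hqp : q ≠ p) (hcard : Nat.card G = q ^ n * p) {D : Subgroup G} {S : Sylow q G}
    (hDS : D ≤ S) (hp : p ∣ Nat.card (Subgroup.normalizer (D : Set G))) (T : Sylow q G) :
    D ≤ T := by
  obtain ⟨⟨u, huN⟩, hu⟩ := exists_prime_orderOf_dvd_card' p hp
  rw [Subgroup.orderOf_mk] at hu
  have hq : q.Prime := Fact.out
  have hp' : p.Prime := Fact.out
  have hcop : Nat.Coprime p q := (Nat.coprime_primes hp' hq).2 hqp.symm
  have hScard : Nat.card S = q ^ n := by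
    rw [Sylow.card_eq_multiplicity, hcard, Nat.factorization_mul (pow_ne_zero _ hq.ne_zero)
      hp'.ne_zero, hq.factorization_pow, hp'.factorization]
    simp [hqp.symm]
  have hcompl : Subgroup.IsComplement' (Subgroup.zpowers u) (S : Subgroup G) := by
    apply Subgroup.isComplement'_of_coprime
    · rw [Nat.card_zpowers, hu, hcard, mul_comm]
      exact congrArg (· * p) hScard
    · rw [Nat.card_zpowers, hu]
      exact hScard ▸ hcop.pow_right n
  obtain ⟨g, rfl⟩ := MulAction.exists_smul_eq G S T
  obtain ⟨⟨⟨v, hv⟩, ⟨s, hs⟩⟩, rfl⟩ := hcompl.2 g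
  have hvN : v ∈ Subgroup.normalizer (D : Set G) := (Subgroup.zpowers_le.2 huN) hv
  have hsS : s • S = S := Sylow.smul_eq_iff_mem_normalizer.2 (Subgroup.le_normalizer hs)
  intro d hd
  dsimp only
  rw [mul_smul, hsS]
  change d ∈ MulAut.conj v • (S : Subgroup G)
  rw [Subgroup.mem_pointwise_smul_iff_inv_smul_mem, ← map_inv, MulAut.smul_def,
    MulAut.conj_apply]
  exact hDS ((Subgroup.mem_normalizer_iff.1 (inv_mem hvN) d).1 hd)

/-- In a group of order `q ^ n * p`, the intersection of two distinct Sylow `q`-subgroups lies in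
every Sylow `q`-subgroup. -/
theorem Sylow.inf_le_of_card_eq [Finite G] {q p n : ℕ} [Fact q.Prime] [Fact p.Prime]
    (hqp : q ≠ p) (hcard : Nat.card G = q ^ n * p) {A B : Sylow q G} (hAB : A ≠ B)
    (C : Sylow q G) : (A ⊓ B : Subgroup G) ≤ C := by
  obtain ⟨⟨S, T⟩, ⟨hST, hle⟩, hmax⟩ := Set.Finite.exists_maximalFor
    (fun X : Sylow q G × Sylow q G => (X.1 ⊓ X.2 : Subgroup G))
    {X | X.1 ≠ X.2 ∧ (A ⊓ B : Subgroup G) ≤ (X.1 : Subgroup G) ⊓ X.2}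
    (Set.toFinite _) ⟨(A, B), hAB, le_rfl⟩
  refine hle.trans ?_
  dsimp only at hST hle hmax ⊢
  by_cases hp : p ∣ Nat.card (Subgroup.normalizer ((S ⊓ T : Subgroup G) : Set G))
  · exact Sylow.le_of_card_eq_of_prime_dvd_normalizer hqp hcard inf_le_left hp C
  exfalso
  have hN : IsPGroup q (Subgroup.normalizer ((S ⊓ T : Subgroup G) : Set G)) := by
    have hdvd := Subgroup.card_subgroup_dvd_card
      (Subgroup.normalizer ((S ⊓ T : Subgroup G) : Set G))
    rw [hcard] at hdvd
    obtain ⟨j, -, hj⟩ := (Nat.dvd_prime_pow Fact.out).1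
      (((Nat.Prime.coprime_iff_not_dvd Fact.out).2 hp).symm.dvd_of_dvd_mul_right hdvd)
    exact IsPGroup.of_card hj
  obtain ⟨R, hR⟩ := hN.exists_le_sylow
  have key : ∀ U : Sylow q G, (S ⊓ T : Subgroup G) < U → R = U := by
    intro U hU
    by_contra hne
    obtain ⟨x, hxU, hxD, hxN⟩ := U.2.exists_mem_normalizer_notMem hU
    have hle' : (S ⊓ T : Subgroup G) ≤ (R : Subgroup G) ⊓ U :=
      le_inf (Subgroup.le_normalizer.trans hR) hU.le
    exact hxD (hmax (j := (R, U)) ⟨hne, hle.trans hle'⟩ hle' ⟨hR hxN, hxU⟩)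
  have hlt : ∀ U V : Sylow q G, U ≠ V → (U ⊓ V : Subgroup G) < U := by
    intro U V hUV
    refine inf_le_left.lt_of_ne fun h => hUV (Sylow.ext ?_)
    exact (U.3 V.2 (inf_eq_left.1 h)).symm
  exact hST ((key S (hlt S T hST)).symm.trans
    (key T (inf_comm (T : Subgroup G) S ▸ hlt T S hST.symm)))

end

/-- Theorem 3.1: if a group of order `2^n * p` is generated by three "involutions"
`ρ0, ρ1, ρ2` with `(ρ0 ρ2)^2 = (ρ0 ρ1)^{k1} = (ρ1 ρ2)^{k2} = 1`,
then `p ∣ k1` or `p ∣ k2`. -/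
theorem stmt_0 {G : Type*} [Group G] [Finite G] (p n k1 k2 : ℕ)
    (hp : p.Prime) (hn : 0 < n) (hk1 : 0 < k1) (hk2 : 0 < k2)
    (ρ0 ρ1 ρ2 : G) (hgen : Subgroup.closure {ρ0, ρ1, ρ2} = ⊤)
    (hcard : Nat.card G = 2 ^ n * p)
    (h0 : ρ0 ^ 2 = 1) (h1 : ρ1 ^ 2 = 1) (h2 : ρ2 ^ 2 = 1)
    (h02 : (ρ0 * ρ2) ^ 2 = 1)
    (h01 : (ρ0 * ρ1) ^ k1 = 1) (h12 : (ρ1 * ρ2) ^ k2 = 1) :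
    p ∣ k1 ∨ p ∣ k2 := by
  by_contra! hpk
  have horder : ∀ (g : G) (k : ℕ), ¬ p ∣ k → g ^ k = 1 → orderOf g ∣ 2 ^ n := by
    intro g k hk hg
    refine Nat.Coprime.dvd_of_dvd_mul_right ?_ (hcard ▸ orderOf_dvd_natCard g)
    exact (((Nat.Prime.coprime_iff_not_dvd hp).2 hk).coprime_dvd_right
      (orderOf_dvd_of_pow_eq_one hg)).symm
  rcases eq_or_ne p 2 with rfl | hp2
  · have hone : ∀ (g : G) (k : ℕ), ¬ 2 ∣ k → g ^ k = 1 → g = 1 := by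
      intro g k hk hg
      have hcop : Nat.Coprime (2 ^ n) k := ((Nat.Prime.coprime_iff_not_dvd hp).2 hk).pow_left n
      exact orderOf_eq_one_iff.1 (Nat.eq_one_of_dvd_coprimes hcop (horder g k hk hg)
        (orderOf_dvd_of_pow_eq_one hg))
    have inv_eq : ∀ g : G, g ^ 2 = 1 → g⁻¹ = g := fun g hg =>
      inv_eq_of_mul_eq_one_left (by rw [← sq, hg])
    have e01 : ρ0 = ρ1 := by
      rw [eq_inv_of_mul_eq_one_left (hone _ _ hpk.1 h01), inv_eq _ h1]
    have e12 : ρ1 = ρ2 := by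
      rw [eq_inv_of_mul_eq_one_left (hone _ _ hpk.2 h12), inv_eq _ h2]
    subst e01 e12
    have hz : Subgroup.zpowers ρ0 = ⊤ := by
      rw [Subgroup.zpowers_eq_closure, ← hgen]; simp
    have hcard2 : Nat.card G ∣ 2 := by
      rw [← Subgroup.card_top, ← hz, Nat.card_zpowers]
      exact orderOf_dvd_of_pow_eq_one h0
    have hle := Nat.le_of_dvd two_pos hcard2
    have h2n : 2 ^ 1 ≤ 2 ^ n := Nat.pow_le_pow_right two_pos hn
    omega
  · have : Fact p.Prime := ⟨hp⟩
    have hp2' : ¬ p ∣ 2 := fun h => hp2 ((Nat.prime_dvd_prime_iff_eq hp Nat.prime_two).1 h)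
    have no_common : ∀ S : Sylow 2 G, ρ0 ∈ S → ρ1 ∈ S → ρ2 ∈ S → False := by
      intro S m0 m1 m2
      have htop : (S : Subgroup G) = ⊤ := by
        rw [eq_top_iff, ← hgen, Subgroup.closure_le]
        rintro x (rfl | rfl | rfl) <;> assumption
      obtain ⟨j, hj⟩ := IsPGroup.iff_card.1 S.2
      have hpj : p ∣ 2 ^ j := by
        rw [← hj, show Nat.card S.toSubgroup = Nat.card G by rw [htop, Subgroup.card_top], hcard]
        exact dvd_mul_left _ _
      exact hp2' (hp.dvd_of_dvd_pow hpj)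
    obtain ⟨A, hA0, hA1⟩ := exists_sylow_two_of_involutions h0 h1 (horder _ _ hpk.1 h01)
    obtain ⟨B, hB1, hB2⟩ := exists_sylow_two_of_involutions h1 h2 (horder _ _ hpk.2 h12)
    obtain ⟨C, hC0, hC2⟩ := exists_sylow_two_of_involutions h0 h2 (horder _ _ hp2' h02)
    rcases eq_or_ne A B with rfl | hAB
    · exact no_common A hA0 hA1 hB2
    · exact no_common C hC0 (Sylow.inf_le_of_card_eq hp2.symm hcard hAB C ⟨hA1, hB1⟩) hC2
end

section
/- Let p be an odd prime, let n be a positive integer, and let G be a group of order 2^n · p generated by elements ρ0, ρ1, ρ2 with ρ0^2 = ρ1^2 = ρ2^2 = (ρ0ρ2)^2 = 1. Let k1 be the order of the element ρ0ρ1 and k2 the order of the element ρ1ρ2. Then there exist non-negative integers s and t such that either (k1 = 2^s · p and k2 = 2^t), or (k1 = 2^s and k2 = 2^t · p), or (k1 = 2^s · p and k2 = 2^t · p). -/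
/-- In a finite `q`-group `S`, a subgroup `D < S` is normalized by an element of `S` outside `D`. -/
lemma exists_mem_normalizer_of_lt_isPGroup {G : Type*} [Group G] [Finite G] {q : ℕ}
    [Fact q.Prime] {S D : Subgroup G} (hS : IsPGroup q S) (hD : D < S) :
    ∃ x ∈ S, x ∉ D ∧ x ∈ Subgroup.normalizer (D : Set G) := by
  have := hS.isNilpotent
  have hlt : D.subgroupOf S < ⊤ := by
    rw [lt_top_iff_ne_top, Ne, Subgroup.subgroupOf_eq_top]
    exact hD.not_ge
  have hlt' := Group.normalizerCondition_of_isNilpotent _ hlt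
  rw [← Subgroup.subgroupOf_normalizer_eq hD.le] at hlt'
  obtain ⟨x, hx, hxD⟩ := SetLike.exists_of_lt hlt'
  exact ⟨x, x.2, fun h => hxD (Subgroup.mem_subgroupOf.2 h), Subgroup.mem_subgroupOf.1 hx⟩

lemma Sylow.card_eq_of_card_eq_pow_mul {G : Type*} [Group G] [Finite G] {p q n : ℕ}
    (hpq : p.Coprime q) [Fact q.Prime] (hcard : Nat.card G = q ^ n * p) (S : Sylow q G) :
    Nat.card S = q ^ n := by
  obtain ⟨k, hk⟩ := S.isPGroup'.exists_card_eq
  have hdvd : q ^ n ∣ Nat.card S := S.pow_dvd_card_of_pow_dvd_card (hcard ▸ dvd_mul_right _ _)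
  refine Nat.dvd_antisymm ?_ hdvd
  have h := S.1.card_subgroup_dvd_card
  rw [hcard] at h
  refine Nat.Coprime.dvd_of_dvd_mul_right ?_ h
  rw [hk]
  exact (hpq.symm).pow_left k

/-- The intersection of two distinct Sylow `q`-subgroups that is maximal among such intersections
is contained in a normal `q`-subgroup, in a group of order `q ^ n * p`. -/
lemma Sylow.inf_le_normalCore_of_maximal {G : Type*} [Group G] [Finite G] {p q n : ℕ}
    [Fact p.Prime] [Fact q.Prime] (hpq : p ≠ q) (hcard : Nat.card G = q ^ n * p)
    {S T : Sylow q G} (hST : S ≠ T)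
    (hmax : ∀ U V : Sylow q G, U ≠ V → ¬ (S ⊓ T : Subgroup G) < (U ⊓ V : Subgroup G)) :
    (S ⊓ T : Subgroup G) ≤ (S : Subgroup G).normalCore := by
  have hp : p.Prime := Fact.out
  have hq : q.Prime := Fact.out
  have hcop : p.Coprime q := (Nat.coprime_primes hp hq).2 hpq
  have hcardS (U : Sylow q G) := U.card_eq_of_card_eq_pow_mul hcop hcard
  have hnle (U V : Sylow q G) (hUV : U ≠ V) : ¬ (U : Subgroup G) ≤ V := fun h =>
    hUV (Sylow.ext (U.3 V.2 h).symm)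
  set D : Subgroup G := S ⊓ T
  -- a `q`-subgroup containing the normalizer of `D` would force `S = T`
  have hN : p ∣ Nat.card (Subgroup.normalizer (D : Set G)) := by
    by_contra hpN
    have hNq : IsPGroup q (Subgroup.normalizer (D : Set G)) := by
      refine IsPGroup.of_card_dvd_pow (n := n) ?_
      have h := (Subgroup.normalizer (D : Set G)).card_subgroup_dvd_card
      rw [hcard] at h
      exact Nat.Coprime.dvd_of_dvd_mul_right ((hp.coprime_iff_not_dvd.2 hpN).symm) h
    obtain ⟨U, hU⟩ := hNq.exists_le_sylow
    have key (R : Sylow q G) (hR : D < R) : R = U := by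
      by_contra hne
      obtain ⟨x, hxR, hxD, hxN⟩ := exists_mem_normalizer_of_lt_isPGroup R.2 hR
      refine hmax R U hne (lt_of_le_of_ne ?_ fun h => hxD (h ▸ ⟨hxR, hU hxN⟩))
      exact le_inf hR.le (Subgroup.le_normalizer.trans hU)
    refine hST ((key S ?_).trans (key T ?_).symm)
    · exact inf_lt_left.2 (hnle S T hST)
    · exact inf_lt_right.2 (hnle T S hST.symm)
  obtain ⟨z, hz⟩ := exists_prime_orderOf_dvd_card' p hN
  have hzord : Nat.card (Subgroup.zpowers (z : G)) = p := by
    rw [Nat.card_zpowers, Subgroup.orderOf_coe, hz]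
  have hcompl : Subgroup.IsComplement' (S : Subgroup G) (Subgroup.zpowers (z : G)) := by
    refine Subgroup.isComplement'_of_coprime ?_ ?_
    · rw [hzord, hcard]; congr 1; exact hcardS S
    · rw [hzord]
      have : Nat.card (S : Subgroup G) = q ^ n := hcardS S
      rw [this]
      exact hcop.symm.pow_left n
  intro d hd g
  obtain ⟨⟨s, y⟩, rfl⟩ := hcompl.2 g
  have hy : (y : G) ∈ Subgroup.normalizer (D : Set G) :=
    (Subgroup.zpowers_le.2 z.2) y.2
  have hyd : (y : G) * d * (y : G)⁻¹ ∈ (S : Subgroup G) :=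
    ((Subgroup.mem_normalizer_iff.1 hy d).1 hd).1
  have := mul_mem (mul_mem s.2 hyd) (inv_mem s.2)
  simpa [mul_assoc] using this

/-- A group of order `q ^ n * p` has a nontrivial normal `q`-subgroup or a normal subgroup of
order `p`. -/
lemma exists_normal_isPGroup_or_normal_card_eq_prime {G : Type*} [Group G] [Finite G] {p q n : ℕ}
    [Fact p.Prime] [Fact q.Prime] (hpq : p ≠ q) (hcard : Nat.card G = q ^ n * p) :
    (∃ K : Subgroup G, K.Normal ∧ K ≠ ⊥ ∧ IsPGroup q K) ∨
      ∃ P : Subgroup G, P.Normal ∧ Nat.card P = p := by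
  have hp : p.Prime := Fact.out
  have hq : q.Prime := Fact.out
  have hcop : p.Coprime q := (Nat.coprime_primes hp hq).2 hpq
  have hcardS (U : Sylow q G) : Nat.card U = q ^ n :=
    U.card_eq_of_card_eq_pow_mul hcop hcard
  rw [or_iff_not_imp_left]
  intro hK
  push Not at hK
  let P : Sylow p G := default
  have hPcard : Nat.card P = p := by
    simpa using P.card_eq_of_card_eq_pow_mul (n := 1)
      (hcop.symm.pow_left n) (by rw [hcard, pow_one, mul_comm])
  suffices hlt : q ^ n < p by
    refine ⟨P, ?_, hPcard⟩
    have hindex : (P : Subgroup G).index = q ^ n := by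
      have h := (P : Subgroup G).card_mul_index
      rw [hcard, mul_comm] at h
      exact Nat.eq_of_mul_eq_mul_right hp.pos (by rw [← h]; congr 1; exact hPcard.symm)
    have hle : Nat.card (Sylow p G) ≤ q ^ n :=
      Nat.le_of_dvd (pow_pos hq.pos n) (hindex ▸ P.card_dvd_index)
    have hone : Nat.card (Sylow p G) = 1 :=
      (card_sylow_modEq_one p G).eq_of_lt_of_lt (hle.trans_lt hlt) hp.one_lt
    have := (Nat.card_eq_one_iff_unique.1 hone).1
    exact P.normal_of_subsingleton
  by_cases hsub : Subsingleton (Sylow q G)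
  · let S : Sylow q G := default
    have hS : (S : Subgroup G) = ⊥ := by
      by_contra hne
      exact hK S S.normal_of_subsingleton hne S.2
    have h1 : Nat.card (S : Subgroup G) = 1 := by rw [hS, Subgroup.card_bot]
    rw [← hcardS S]
    exact h1.trans_lt hp.one_lt
  · obtain ⟨S₀, T₀, hne₀⟩ := (not_subsingleton_iff_nontrivial.1 hsub).exists_pair_ne
    obtain ⟨D, ⟨S, T, hST, rfl⟩, hmax⟩ := wellFounded_gt.has_min
      {D : Subgroup G | ∃ S T : Sylow q G, S ≠ T ∧ (S ⊓ T : Subgroup G) = D}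
      ⟨_, S₀, T₀, hne₀, rfl⟩
    have hle := Sylow.inf_le_normalCore_of_maximal hpq hcard hST
      fun U V hUV => hmax _ ⟨U, V, hUV, rfl⟩
    have hcore : (S : Subgroup G).normalCore = ⊥ := by
      by_contra hne
      exact hK _ inferInstance hne (S.2.to_le (Subgroup.normalCore_le _))
    rw [hcore] at hle
    have hinj := Subgroup.mul_injective_of_disjoint (disjoint_iff_inf_le.2 hle)
    have h := Nat.card_le_card_of_injective _ hinj
    rw [Nat.card_prod, hcard] at h
    have hle' : q ^ n ≤ p := by
      refine Nat.le_of_mul_le_mul_left (le_trans (le_of_eq ?_) h) (pow_pos hq.pos n)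
      exact congrArg₂ (· * ·) (hcardS S).symm (hcardS T).symm
    refine lt_of_le_of_ne hle' fun h => hpq ?_
    exact (Nat.prime_dvd_prime_iff_eq hp hq).1 (hp.dvd_of_dvd_pow h.symm.dvd)

/-- Elements centralizing a subgroup of order `p`, of order prime to `p`, lie in every complement
whose order is prime to `p`. -/
lemma mem_of_isComplement'_of_commute {G : Type*} [Group G] [Finite G] {p : ℕ} (hp : p.Prime)
    {P Q : Subgroup G} (hP : Nat.card P = p) (hQ : ¬ p ∣ Nat.card Q)
    (hPQ : P.IsComplement' Q) {g : G} (hg : ∀ x ∈ P, Commute g x) (hord : ¬ p ∣ orderOf g) :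
    g ∈ Q := by
  obtain ⟨⟨u, r⟩, rfl⟩ := hPQ.2 g
  dsimp only at hg hord ⊢
  have hur : Commute (u : G) r := by
    have h : (u : G) * r * u = u * (u * r) := (hg u u.2).eq
    rw [mul_assoc] at h
    exact (mul_left_cancel h).symm
  have hpow : ((u : G) * r) ^ Nat.card Q = 1 := by
    rw [← orderOf_dvd_iff_pow_eq_one]
    have h := orderOf_dvd_natCard ((u : G) * r)
    rw [← hPQ.card_mul_card, hP] at h
    exact Nat.Coprime.dvd_of_dvd_mul_left ((hp.coprime_iff_not_dvd.2 hord).symm) h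
  have hu : (u : G) = 1 := by
    rw [hur.mul_pow] at hpow
    have hr : (r : G) ^ Nat.card Q = 1 := by
      exact_mod_cast congrArg Subtype.val (pow_card_eq_one' (x := r))
    have hup : (u : G) ^ p = 1 := by
      rw [← hP]; exact_mod_cast congrArg Subtype.val (pow_card_eq_one' (x := u))
    rw [hr, mul_one] at hpow
    have := Nat.dvd_gcd (orderOf_dvd_of_pow_eq_one hup) (orderOf_dvd_of_pow_eq_one hpow)
    rw [(hp.coprime_iff_not_dvd.2 hQ).gcd_eq_one, Nat.dvd_one] at this
    exact orderOf_eq_one_iff.1 this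
  rw [hu, one_mul]
  exact r.2

/-- An involution acts on a normal subgroup of prime order trivially or by inversion. -/
lemma commute_or_conj_eq_inv_of_mul_self {G : Type*} [Group G] {p : ℕ} (hp : p.Prime)
    {P : Subgroup G} (hPn : P.Normal) (hP : Nat.card P = p) {a : G} (ha : a * a = 1) :
    (∀ x ∈ P, Commute a x) ∨ ∀ x ∈ P, a * x * a = x⁻¹ := by
  have := Fact.mk hp
  have hcyc : IsCyclic P := isCyclic_of_prime_card hP
  have hainv : a⁻¹ = a := inv_eq_of_mul_eq_one_left ha
  refine or_iff_not_imp_right.2 fun hinv => ?_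
  push Not at hinv
  obtain ⟨x, hx, hxne⟩ := hinv
  have hy : a * x * a ∈ P := by simpa [hainv] using hPn.conj_mem x hx a
  have hcomm : (a * x * a) * x = x * (a * x * a) := by
    let := hcyc.commGroup
    exact congrArg Subtype.val (mul_comm (⟨_, hy⟩ : P) ⟨x, hx⟩)
  have hw : Commute a (x * (a * x * a)) := by
    have h : a * (x * (a * x * a)) = (a * x * a) * x * a := by simp only [mul_assoc]
    rw [Commute, SemiconjBy, h, hcomm]
  have hwne : (⟨x * (a * x * a), mul_mem hx hy⟩ : P) ≠ 1 := fun h =>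
    hxne (eq_inv_of_mul_eq_one_right (congrArg Subtype.val h))
  intro v hv
  obtain ⟨k, hk⟩ := Subgroup.mem_zpowers_iff.1
    (mem_zpowers_of_prime_card (g' := (⟨v, hv⟩ : P)) hP hwne)
  have hk' : (x * (a * x * a)) ^ k = v := by simpa using congrArg Subtype.val hk
  rw [← hk']
  exact hw.zpow_right k

/-- A group of order `2 ^ n * p` with a normal subgroup of order `p` is not generated by involutions
whose pairwise products have order prime to `p`. -/
lemma closure_ne_top_of_normal_card_eq_prime {G : Type*} [Group G] [Finite G] {p n : ℕ}
    (hp : p.Prime) (hp2 : p ≠ 2) (hcard : Nat.card G = 2 ^ n * p) {P : Subgroup G}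
    (hPn : P.Normal) (hP : Nat.card P = p) {X : Set G} (hX : ∀ a ∈ X, a * a = 1)
    (hXX : ∀ a ∈ X, ∀ b ∈ X, ¬ p ∣ orderOf (a * b)) : Subgroup.closure X ≠ ⊤ := by
  have := Fact.mk hp
  have := Fact.mk Nat.prime_two
  have hcop : p.Coprime 2 := (Nat.coprime_primes hp Nat.prime_two).2 hp2
  have hcardS (U : Sylow 2 G) : Nat.card (U : Subgroup G) = 2 ^ n :=
    U.card_eq_of_card_eq_pow_mul hcop hcard
  have hndvd (U : Sylow 2 G) : ¬ p ∣ Nat.card (U : Subgroup G) := by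
    rw [hcardS U, ← hp.coprime_iff_not_dvd]
    exact hcop.pow_right n
  have hcompl (U : Sylow 2 G) : P.IsComplement' U := by
    refine Subgroup.isComplement'_of_coprime ?_ ?_
    · rw [hP, hcard, hcardS, mul_comm]
    · rw [hP, hcardS]; exact hcop.pow_right n
  suffices h : ∃ Q : Sylow 2 G, X ⊆ (Q : Subgroup G) by
    obtain ⟨Q, hQ⟩ := h
    intro htop
    have hQtop : (Q : Subgroup G) = ⊤ :=
      top_le_iff.1 (htop ▸ (Subgroup.closure_le _).2 hQ)
    apply hndvd Q
    rw [hQtop, Subgroup.card_top, hcard]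
    exact dvd_mul_left _ _
  have hord (a : G) (ha : a ∈ X) : ¬ p ∣ orderOf a := fun h =>
    hp2 ((Nat.prime_dvd_prime_iff_eq hp Nat.prime_two).1
      (h.trans (orderOf_dvd_of_pow_eq_one (by rw [sq, hX a ha]))))
  by_cases hc : ∀ a ∈ X, ∀ x ∈ P, Commute a x
  · exact ⟨default, fun a ha =>
      mem_of_isComplement'_of_commute hp hP (hndvd _) (hcompl _) (hc a ha) (hord a ha)⟩
  push Not at hc
  obtain ⟨b, hb, x, hx, hbx⟩ := hc
  have hbinv := (commute_or_conj_eq_inv_of_mul_self hp hPn hP (hX b hb)).resolve_left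
    fun h => hbx (h x hx)
  have hbP : IsPGroup 2 (Subgroup.zpowers b) := by
    refine IsPGroup.of_card_dvd_pow (n := 1) ?_
    rw [Nat.card_zpowers, pow_one]
    exact orderOf_dvd_of_pow_eq_one (by rw [sq, hX b hb])
  obtain ⟨Q, hQ⟩ := hbP.exists_le_sylow
  have hbQ : b ∈ (Q : Subgroup G) := hQ (Subgroup.mem_zpowers b)
  refine ⟨Q, fun a ha => ?_⟩
  rcases commute_or_conj_eq_inv_of_mul_self hp hPn hP (hX a ha) with hac | hainv
  · exact mem_of_isComplement'_of_commute hp hP (hndvd _) (hcompl _) hac (hord a ha)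
  refine (Subgroup.mul_mem_cancel_right _ hbQ).1 ?_
  refine mem_of_isComplement'_of_commute hp hP (hndvd _) (hcompl _) (fun y hy => ?_) (hXX a ha b hb)
  have hswap {c : G} (hcX : c ∈ X) (hc : ∀ x ∈ P, c * x * c = x⁻¹) {x : G} (hx : x ∈ P) :
      c * x = x⁻¹ * c := by
    rw [← hc x hx, mul_assoc _ c c, hX c hcX, mul_one]
  rw [Commute, SemiconjBy, mul_assoc, hswap hb hbinv hy, ← mul_assoc,
    hswap ha hainv (inv_mem hy), inv_inv, mul_assoc]

/-- A group of order `2 ^ n * p`, `p` an odd prime, is not generated by involutions whose pairwise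
products have order prime to `p`. -/
theorem closure_ne_top_of_not_dvd_orderOf_mul {p : ℕ} (hp : p.Prime) (hp2 : p ≠ 2) (n : ℕ)
    {G : Type*} [Group G] [Finite G] (hcard : Nat.card G = 2 ^ n * p) {X : Set G}
    (hX : ∀ a ∈ X, a * a = 1) (hXX : ∀ a ∈ X, ∀ b ∈ X, ¬ p ∣ orderOf (a * b)) :
    Subgroup.closure X ≠ ⊤ := by
  have := Fact.mk hp
  have := Fact.mk Nat.prime_two
  induction n using Nat.strong_induction_on generalizing G with
  | _ n ih =>
  rcases exists_normal_isPGroup_or_normal_card_eq_prime hp2 hcard with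
    ⟨K, hKn, hKne, hK⟩ | ⟨P, hPn, hP⟩
  · intro htop
    obtain ⟨k, hk⟩ := hK.exists_card_eq
    have hk0 : k ≠ 0 := by
      rintro rfl
      exact hKne (Subgroup.card_eq_one.1 (by simpa using hk))
    have hmul := K.card_mul_index
    rw [hcard, hk] at hmul
    have hkn : k ≤ n := by
      have h : 2 ^ k ∣ 2 ^ n := by
        refine Nat.Coprime.dvd_of_dvd_mul_right ?_ (hmul ▸ dvd_mul_right _ _)
        exact ((Nat.coprime_primes hp Nat.prime_two).2 hp2).symm.pow_left k
      exact (Nat.pow_dvd_pow_iff_le_right (by norm_num)).1 h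
    have hq : Nat.card (G ⧸ K) = 2 ^ (n - k) * p := by
      have h2 : 2 ^ n = 2 ^ k * 2 ^ (n - k) := by rw [← pow_add]; congr 1; omega
      rw [h2, mul_assoc] at hmul
      exact Nat.eq_of_mul_eq_mul_left (by positivity) hmul
    refine ih (n - k) (by omega) hq (X := QuotientGroup.mk' K '' X) ?_ ?_ ?_
    · rintro _ ⟨a, ha, rfl⟩
      rw [← map_mul, hX a ha, map_one]
    · rintro _ ⟨a, ha, rfl⟩ _ ⟨b, hb, rfl⟩ h
      rw [← map_mul] at h
      exact hXX a ha b hb (h.trans (orderOf_map_dvd _ _))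
    · rw [← MonoidHom.map_closure, htop,
        Subgroup.map_top_of_surjective _ (QuotientGroup.mk'_surjective K)]
  · exact closure_ne_top_of_normal_card_eq_prime hp hp2 hcard hPn hP hX hXX

lemma exists_eq_pow_or_eq_pow_mul_of_dvd {p q n k : ℕ} (hp : p.Prime) (hq : q.Prime)
    (hk : k ∣ q ^ n * p) : (¬ p ∣ k ∧ ∃ s, k = q ^ s) ∨ ∃ s, k = q ^ s * p := by
  by_cases h : p ∣ k
  · obtain ⟨m, rfl⟩ := h
    rw [mul_comm] at hk
    obtain ⟨s, -, rfl⟩ := (Nat.dvd_prime_pow hq).1 (Nat.dvd_of_mul_dvd_mul_right hp.pos hk)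
    exact .inr ⟨s, mul_comm _ _⟩
  · obtain ⟨s, -, rfl⟩ := (Nat.dvd_prime_pow hq).1
      (Nat.Coprime.dvd_of_dvd_mul_right (hp.coprime_iff_not_dvd.2 h).symm hk)
    exact .inl ⟨h, s, rfl⟩

/-- Theorem 1.2: possible Schläfli types of regular 3-polytopes of order `2^n * p`. -/
theorem stmt_1 {G : Type*} [Group G] [Finite G] (p n : ℕ)
    (hp : p.Prime) (hodd : Odd p) (hn : 0 < n)
    (ρ0 ρ1 ρ2 : G) (hgen : Subgroup.closure {ρ0, ρ1, ρ2} = ⊤)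
    (hcard : Nat.card G = 2 ^ n * p)
    (h0 : ρ0 ^ 2 = 1) (h1 : ρ1 ^ 2 = 1) (h2 : ρ2 ^ 2 = 1)
    (h02 : (ρ0 * ρ2) ^ 2 = 1)
    (k1 k2 : ℕ) (hk1 : k1 = orderOf (ρ0 * ρ1)) (hk2 : k2 = orderOf (ρ1 * ρ2)) :
    ∃ s t : ℕ,
      (k1 = 2 ^ s * p ∧ k2 = 2 ^ t) ∨
      (k1 = 2 ^ s ∧ k2 = 2 ^ t * p) ∨
      (k1 = 2 ^ s * p ∧ k2 = 2 ^ t * p) := by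
  subst hk1 hk2
  have hdvd (g : G) : orderOf g ∣ 2 ^ n * p := hcard ▸ orderOf_dvd_natCard g
  have hp2 : p ≠ 2 := by rintro rfl; exact absurd hodd (by decide)
  rcases exists_eq_pow_or_eq_pow_mul_of_dvd hp Nat.prime_two (hdvd (ρ0 * ρ1)) with
    ⟨hn1, s, hs⟩ | ⟨s, hs⟩ <;>
  rcases exists_eq_pow_or_eq_pow_mul_of_dvd hp Nat.prime_two (hdvd (ρ1 * ρ2)) with
    ⟨hn2, t, ht⟩ | ⟨t, ht⟩
  · refine absurd hgen (closure_ne_top_of_not_dvd_orderOf_mul hp hp2 n hcard ?_ ?_)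
    · rintro a (rfl | rfl | rfl) <;> rwa [← sq]
    · have hinv {a b : G} (ha : a ^ 2 = 1) (hb : b ^ 2 = 1) :
          orderOf (b * a) = orderOf (a * b) := by
        rw [← orderOf_inv, mul_inv_rev, inv_eq_of_mul_eq_one_left (sq a ▸ ha),
          inv_eq_of_mul_eq_one_left (sq b ▸ hb)]
      have hsq {a : G} (ha : a ^ 2 = 1) : ¬ p ∣ orderOf a := fun h =>
        hp2 ((Nat.prime_dvd_prime_iff_eq hp Nat.prime_two).1
          (h.trans (orderOf_dvd_of_pow_eq_one ha)))
      have hself {a : G} (ha : a ^ 2 = 1) : ¬ p ∣ orderOf (a * a) := by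
        rw [← sq, ha, orderOf_one]
        exact hp.not_dvd_one
      rintro a (rfl | rfl | rfl) b (rfl | rfl | rfl)
      · exact hself h0
      · exact hn1
      · exact hsq h02
      · rwa [hinv h0 h1]
      · exact hself h1
      · exact hn2
      · rw [hinv h0 h2]; exact hsq h02
      · rwa [hinv h1 h2]
      · exact hself h2
  · exact ⟨s, t, .inr (.inl ⟨hs, ht⟩)⟩
  · exact ⟨s, t, .inl ⟨hs, ht⟩⟩
  · exact ⟨s, t, .inr (.inr ⟨hs, ht⟩)⟩
end

section
/- Let s, t, n be integers with s ≥ 2, t ≥ 2, n ≥ s + t + 1 and n − s − t odd, and let ℓ1, ℓ2 be odd positive integers. Let G be the presented group on generators ρ0, ρ1, ρ2 with relation set {ρ0^2, ρ1^2, ρ2^2, (ρ0ρ1)^{2^s·ℓ1}, (ρ1ρ2)^{2^t·ℓ2}, (ρ0ρ2)^2, [(ρ0ρ1)^4, ρ2], [ρ0, (ρ1ρ2)^4], [(ρ0ρ1)^2, ρ2]^{2^{(n−s−t−1)/2}}}, where [x, y] = x⁻¹y⁻¹xy. Then G has order 2^n · ℓ1 · ℓ2, G is solvable, in G the images of ρ0,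 ρ1, ρ2 and ρ0ρ2 have order exactly 2, the image of ρ0ρ1 has order exactly 2^s·ℓ1, the image of ρ1ρ2 has order exactly 2^t·ℓ2, and the triple of images of (ρ0, ρ1, ρ2) satisfies the intersection property in G. -/
namespace Stmt9

def r0 : FreeGroup (Fin 3) := FreeGroup.of 0
def r1 : FreeGroup (Fin 3) := FreeGroup.of 1
def r2 : FreeGroup (Fin 3) := FreeGroup.of 2

/-- The commutator `[x, y] = x⁻¹ y⁻¹ x y` as used in the paper. -/
def pc (x y : FreeGroup (Fin 3)) : FreeGroup (Fin 3) := x⁻¹ * y⁻¹ * x * y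

/-- The relations of the presented group `G` of Theorem 4.1, case `n - s - t` odd. -/
def rels (s t n l1 l2 : ℕ) : Set (FreeGroup (Fin 3)) :=
  {r0 ^ 2, r1 ^ 2, r2 ^ 2,
   (r0 * r1) ^ (2 ^ s * l1), (r1 * r2) ^ (2 ^ t * l2), (r0 * r2) ^ 2,
   pc ((r0 * r1) ^ 4) r2, pc r0 ((r1 * r2) ^ 4),
   (pc ((r0 * r1) ^ 2) r2) ^ (2 ^ ((n - s - t - 1) / 2))}

/-- The image of the `i`-th generator. -/
def g (s t n l1 l2 : ℕ) (i : Fin 3) : PresentedGroup (rels s t n l1 l2) :=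
  PresentedGroup.of i

/-- The intersection property for a triple of elements. -/
def InterProp {G : Type*} [Group G] (ρ : Fin 3 → G) : Prop :=
  ∀ I J : Set (Fin 3),
    Subgroup.closure (ρ '' I) ⊓ Subgroup.closure (ρ '' J) =
      Subgroup.closure (ρ '' (I ∩ J))

section Words

variable {G : Type*} [Group G]

theorem inv_eq_self_of_sq {a : G} (ha : a ^ 2 = 1) : a⁻¹ = a :=
  inv_eq_of_mul_eq_one_right (by rw [← sq, ha])

theorem conj_zpow_of_swap {a b z : G} (h : a * b = z * a) (p : ℤ) : a * b ^ p = z ^ p * a :=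
  SemiconjBy.zpow_right (x := b) (y := z) h p

/-- Words in a quotient of the Coxeter group `[4, 4]`: a translation times an element of the
point stabiliser. -/
theorem exists_word_of_four_four {a b c : G} (ha : a ^ 2 = 1) (hb : b ^ 2 = 1) (hc : c ^ 2 = 1)
    (hac : (a * c) ^ 2 = 1) (hab : (a * b) ^ 4 = 1) (hbc : (b * c) ^ 4 = 1)
    (g : G) (hg : g ∈ Subgroup.closure {a, b, c}) :
    ∃ p q r e : ℤ, g = (a * b * c * b) ^ p * (b * a * b * c) ^ q * (b * c) ^ r * b ^ e := by
  have ha' := inv_eq_self_of_sq ha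
  have hb' := inv_eq_self_of_sq hb
  have hc' := inv_eq_self_of_sq hc
  have hac' := inv_eq_self_of_sq hac
  simp only [mul_inv_rev, ha', hc'] at hac'
  have haa : ∀ z, a * (a * z) = z := fun z => by rw [← mul_assoc, ← sq, ha, one_mul]
  have hbb : ∀ z, b * (b * z) = z := fun z => by rw [← mul_assoc, ← sq, hb, one_mul]
  have hcc : ∀ z, c * (c * z) = z := fun z => by rw [← mul_assoc, ← sq, hc, one_mul]
  have hca : ∀ z, c * (a * z) = a * (c * z) := fun z => by
    rw [← mul_assoc, hac', mul_assoc]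
  have hab2 : b * a * b * a = a * b * a * b := by
    have : ((a * b) ^ 2)⁻¹ = (a * b) ^ 2 := inv_eq_self_of_sq (by rw [← pow_mul, hab])
    simpa [sq, ha', hb', mul_assoc] using this
  have hbc2 : c * b * c * b = b * c * b * c := by
    have : ((b * c) ^ 2)⁻¹ = (b * c) ^ 2 := inv_eq_self_of_sq (by rw [← pow_mul, hbc])
    simpa [sq, hc', hb', mul_assoc] using this
  set u := a * b * c * b with hu
  set v := b * a * b * c with hv
  have ui : u⁻¹ = b * c * b * a := by simp [hu, ha', hb', hc', mul_assoc]
  have vi : v⁻¹ = c * b * a * b := by simp [hv, ha', hb', hc', mul_assoc]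
  have wi : (b * c)⁻¹ = c * b := by simp [hb', hc']
  have au : a * u = u⁻¹ * a := by
    rw [ui, hu]; simp only [mul_assoc, haa, ← sq, ha, mul_one]
  have av : a * v = v * a := by
    rw [hv]
    calc a * (b * a * b * c) = (a * b * a * b) * c := by simp only [mul_assoc]
      _ = b * a * b * (a * c) := by rw [← hab2]; simp only [mul_assoc]
      _ = b * a * b * c * a := by rw [← hac']; simp only [mul_assoc]
  have bu : b * u = v * b := by rw [hu, hv]; simp only [mul_assoc]
  have bv : b * v = u * b := by
    rw [hu, hv]; simp only [mul_assoc, hbb, ← sq, hb, mul_one]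
  have cu : c * u = u * c := by
    rw [hu]
    calc c * (a * b * c * b) = a * (c * b * c * b) := by simp only [mul_assoc, hca]
      _ = a * b * c * b * c := by rw [hbc2]; simp only [mul_assoc]
  have cv : c * v = v⁻¹ * c := by
    rw [vi, hv]; simp only [mul_assoc]
  have bw : b * (b * c) = (b * c)⁻¹ * b := by
    rw [wi]; simp only [mul_assoc, hbb, ← sq, hb, mul_one]
  have uv : Commute u v := by
    calc u * v = a * b * (c * a) * b * c := by
          rw [hu, hv]; simp only [mul_assoc, hbb]
      _ = (a * b * a * b) * (b * c * b * c) := by rw [hac']; simp only [mul_assoc, hbb]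
      _ = (b * a * b) * (a * c) * (b * c * b) := by
          rw [← hab2, ← hbc2]; simp only [mul_assoc]
      _ = v * u := by rw [← hac', hu, hv]; simp only [mul_assoc]
  have key : ∀ x ∈ ({a, b, c} : Set G), ∀ p q r e : ℤ, ∃ p' q' r' e' : ℤ,
      x * (u ^ p * v ^ q * (b * c) ^ r * b ^ e) = u ^ p' * v ^ q' * (b * c) ^ r' * b ^ e' := by
    have swap : ∀ r e : ℤ, b * ((b * c) ^ r * b ^ e) = (b * c) ^ (-r) * b ^ (1 + e) := fun r e => by
      rw [← mul_assoc, conj_zpow_of_swap bw, mul_assoc, inv_zpow', zpow_one_add]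
    rintro x (rfl | rfl | rfl) p q r e
    · refine ⟨1 - p, q, 1 - r, 1 + e, ?_⟩
      have hx : x = u * ((b * c) * b) := by
        have hinv : (b * c * b)⁻¹ = b * c * b := by simp [hb', hc', mul_assoc]
        rw [← mul_inv_eq_iff_eq_mul, hinv, hu]
        simp only [mul_assoc]
      calc x * (u ^ p * v ^ q * (b * c) ^ r * b ^ e)
          = (x * u ^ p) * v ^ q * ((b * c) ^ r * b ^ e) := by simp only [mul_assoc]
        _ = u ^ (-p) * (x * v ^ q) * ((b * c) ^ r * b ^ e) := by
          rw [conj_zpow_of_swap au, inv_zpow']; simp only [mul_assoc]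
        _ = u ^ (-p) * v ^ q * x * ((b * c) ^ r * b ^ e) := by
          rw [conj_zpow_of_swap av]; simp only [mul_assoc]
        _ = u ^ (-p) * (v ^ q * u) * (b * c) * (b * ((b * c) ^ r * b ^ e)) := by
          conv_lhs => rw [hx]
          simp only [mul_assoc]
        _ = _ := by
          rw [swap, ← (uv.zpow_right q).eq, sub_eq_neg_add, zpow_add_one, sub_eq_add_neg,
            zpow_add (b * c), zpow_one (b * c)]
          simp only [mul_assoc]
    · refine ⟨q, p, -r, 1 + e, ?_⟩
      calc x * (u ^ p * v ^ q * (x * c) ^ r * x ^ e)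
          = (x * u ^ p) * v ^ q * ((x * c) ^ r * x ^ e) := by simp only [mul_assoc]
        _ = v ^ p * (x * v ^ q) * ((x * c) ^ r * x ^ e) := by
          rw [conj_zpow_of_swap bu]; simp only [mul_assoc]
        _ = v ^ p * u ^ q * (x * ((x * c) ^ r * x ^ e)) := by
          rw [conj_zpow_of_swap bv]; simp only [mul_assoc]
        _ = _ := by
          rw [swap, ← ((uv.zpow_left q).zpow_right p).eq]
          simp only [mul_assoc]
    · refine ⟨p, -q, -1 - r, 1 + e, ?_⟩
      have hx : x = (b * x)⁻¹ * b := by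
        rw [wi]; simp only [mul_assoc, ← sq, hb, mul_one]
      calc x * (u ^ p * v ^ q * (b * x) ^ r * b ^ e)
          = (x * u ^ p) * v ^ q * ((b * x) ^ r * b ^ e) := by simp only [mul_assoc]
        _ = u ^ p * (x * v ^ q) * ((b * x) ^ r * b ^ e) := by
          rw [conj_zpow_of_swap cu]; simp only [mul_assoc]
        _ = u ^ p * v ^ (-q) * (x * ((b * x) ^ r * b ^ e)) := by
          rw [conj_zpow_of_swap cv, inv_zpow']; simp only [mul_assoc]
        _ = u ^ p * v ^ (-q) * ((b * x)⁻¹ * (b * ((b * x) ^ r * b ^ e))) := by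
          rw [← mul_assoc (b * x)⁻¹, ← hx]
        _ = _ := by
          rw [swap, sub_eq_add_neg, zpow_add (b * x), zpow_neg_one]
          simp only [mul_assoc]
  induction hg using Subgroup.closure_induction_left with
  | one => exact ⟨0, 0, 0, 0, by simp⟩
  | mul_left x hx y _ ih =>
    obtain ⟨p, q, r, e, rfl⟩ := ih
    exact key x hx p q r e
  | inv_mul_cancel x hx y _ ih =>
    obtain ⟨p, q, r, e, rfl⟩ := ih
    have : x⁻¹ = x := by rcases hx with (rfl | rfl | rfl) <;> assumption
    rw [this]
    exact key x hx p q r e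

theorem zpowers_normal_of_closure_eq_top {S : Set G} (hS : Subgroup.closure S = ⊤) {x : G}
    (h : ∀ s ∈ S, s * x * s⁻¹ = x ∨ s * x * s⁻¹ = x⁻¹) : (Subgroup.zpowers x).Normal := by
  rw [← Subgroup.normalizer_eq_top_iff, eq_top_iff, ← hS, Subgroup.closure_le]
  intro s hs
  have hmap : (Subgroup.zpowers x).map (MulAut.conj s).toMonoidHom = Subgroup.zpowers x := by
    rw [MonoidHom.map_zpowers]
    rcases h s hs with h | h <;> simp [h]
  simp only [SetLike.mem_coe, Subgroup.mem_normalizer_iff]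
  intro k
  conv_rhs => rw [← hmap]
  exact (Subgroup.mem_map_iff_mem (MulAut.conj s).injective).symm

theorem conj_mul_pow_eq_inv_left {a b : G} (ha : a ^ 2 = 1) (hb : b ^ 2 = 1) (k : ℕ) :
    a * (a * b) ^ k * a⁻¹ = ((a * b) ^ k)⁻¹ := by
  rw [← conj_pow, ← inv_pow, mul_inv_rev, inv_eq_self_of_sq ha, inv_eq_self_of_sq hb, ← mul_assoc a,
    ← sq, ha, one_mul]

theorem conj_mul_pow_eq_inv_right {a b : G} (ha : a ^ 2 = 1) (hb : b ^ 2 = 1) (k : ℕ) :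
    b * (a * b) ^ k * b⁻¹ = ((a * b) ^ k)⁻¹ := by
  rw [← conj_pow, ← inv_pow, mul_inv_rev, inv_eq_self_of_sq ha, inv_eq_self_of_sq hb]
  simp only [mul_assoc, ← sq, hb, mul_one]

theorem exists_word {a b c : G} (ha : a ^ 2 = 1) (hb : b ^ 2 = 1) (hc : c ^ 2 = 1)
    (hac : (a * c) ^ 2 = 1) (hx : Commute ((a * b) ^ 4) c) (hy : Commute a ((b * c) ^ 4))
    (htop : Subgroup.closure {a, b, c} = ⊤) (g : G) :
    ∃ i p q r e : ℤ, g = (a * b) ^ (4 * i) *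
      ((a * b * c * b) ^ p * (b * a * b * c) ^ q * ((b * c) ^ r * b ^ e)) := by
  have hA : (Subgroup.zpowers ((a * b) ^ 4)).Normal := by
    refine zpowers_normal_of_closure_eq_top htop ?_
    rintro s (rfl | rfl | rfl)
    · exact Or.inr (conj_mul_pow_eq_inv_left ha hb 4)
    · exact Or.inr (conj_mul_pow_eq_inv_right ha hb 4)
    · exact Or.inl (by rw [← hx.eq, mul_inv_cancel_right])
  have hB : (Subgroup.zpowers ((b * c) ^ 4)).Normal := by
    refine zpowers_normal_of_closure_eq_top htop ?_
    rintro s (rfl | rfl | rfl)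
    · exact Or.inl (by rw [hy.eq, mul_inv_cancel_right])
    · exact Or.inr (conj_mul_pow_eq_inv_left hb hc 4)
    · exact Or.inr (conj_mul_pow_eq_inv_right hb hc 4)
  set H := Subgroup.zpowers ((a * b) ^ 4) ⊔ Subgroup.zpowers ((b * c) ^ 4) with hH
  let π := QuotientGroup.mk' H
  have hπ : ∀ z ∈ H, π z = 1 := fun z hz => (QuotientGroup.eq_one_iff z).2 hz
  obtain ⟨p, q, r, e, h⟩ := exists_word_of_four_four (a := π a) (b := π b) (c := π c)
    (by rw [← map_pow, ha, map_one]) (by rw [← map_pow, hb, map_one])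
    (by rw [← map_pow, hc, map_one]) (by rw [← map_mul, ← map_pow, hac, map_one])
    (by rw [← map_mul, ← map_pow]
        exact hπ _ (Subgroup.mem_sup_left (Subgroup.mem_zpowers _)))
    (by rw [← map_mul, ← map_pow]
        exact hπ _ (Subgroup.mem_sup_right (Subgroup.mem_zpowers _)))
    (π g) (by
      have := Subgroup.mem_map_of_mem π (htop ▸ Subgroup.mem_top g : g ∈ Subgroup.closure {a, b, c})
      simpa [MonoidHom.map_closure, Set.image_insert_eq] using this)
  simp only [← map_mul, ← map_zpow] at h
  set w := (a * b * c * b) ^ p * (b * a * b * c) ^ q with hw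
  have hmem : g * (w * (b * c) ^ r * b ^ e)⁻¹ ∈ H := by
    rw [← QuotientGroup.eq_one_iff]
    change π _ = 1
    rw [map_mul, map_inv, h, mul_inv_cancel]
  obtain ⟨_, ⟨i, rfl⟩, _, ⟨j, rfl⟩, hij⟩ := Subgroup.mem_sup_of_normal_left.1 hmem
  obtain ⟨k, hk⟩ := hB.conj_mem _ (Subgroup.zpow_mem_zpowers ((b * c) ^ 4) j) w⁻¹
  refine ⟨i, p, q, 4 * k + r, e, ?_⟩
  simp only [inv_inv] at hk hij
  rw [← hw, eq_comm, zpow_mul, zpow_add, zpow_mul]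
  have hk' : w * ((b * c) ^ 4) ^ k = ((b * c) ^ 4) ^ j * w := by
    rw [hk]; group
  have hg := eq_mul_inv_iff_mul_eq.1 hij
  norm_cast at hk' hg ⊢
  rw [← hg]
  simp only [mul_assoc]
  rw [← mul_assoc w, hk', mul_assoc]

end Words

section Models

open DihedralGroup

/-- The reflection `(x, y) ↦ (1 - x, y)` of the square torus of side `M`. -/
def torusA (M : ℕ) : Equiv.Perm (ZMod M × ZMod M) where
  toFun z := (1 - z.1, z.2)
  invFun z := (1 - z.1, z.2)
  left_inv z := by simp
  right_inv z := by simp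

/-- The reflection `(x, y) ↦ (y, x)` of the square torus of side `M`. -/
def torusB (M : ℕ) : Equiv.Perm (ZMod M × ZMod M) where
  toFun z := (z.2, z.1)
  invFun z := (z.2, z.1)
  left_inv z := by simp
  right_inv z := by simp

/-- The reflection `(x, y) ↦ (x, -y)` of the square torus of side `M`. -/
def torusC (M : ℕ) : Equiv.Perm (ZMod M × ZMod M) where
  toFun z := (z.1, -z.2)
  invFun z := (z.1, -z.2)
  left_inv z := by simp
  right_inv z := by simp

theorem torusA_apply (M : ℕ) (z : ZMod M × ZMod M) : torusA M z = (1 - z.1, z.2) := rfl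
theorem torusB_apply (M : ℕ) (z : ZMod M × ZMod M) : torusB M z = (z.2, z.1) := rfl
theorem torusC_apply (M : ℕ) (z : ZMod M × ZMod M) : torusC M z = (z.1, -z.2) := rfl

/-- The translation of the square torus of side `M` by `w`. -/
def torusT (M : ℕ) : Multiplicative (ZMod M × ZMod M) →* Equiv.Perm (ZMod M × ZMod M) :=
  MulAction.toPermHom _ _

theorem torusT_apply (M : ℕ) (w z : ZMod M × ZMod M) :
    torusT M (.ofAdd w) z = w + z := rfl

theorem torus_u (M : ℕ) :
    torusA M * torusB M * torusC M * torusB M = torusT M (.ofAdd (1, 0)) := by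
  ext z <;> simp [torusT_apply, torusA_apply, torusB_apply, torusC_apply]

theorem torus_v (M : ℕ) :
    torusB M * torusA M * torusB M * torusC M = torusT M (.ofAdd (0, 1)) := by
  ext z <;> simp [torusT_apply, torusA_apply, torusB_apply, torusC_apply]

theorem torus_translation (M : ℕ) (p q : ℤ) :
    (torusA M * torusB M * torusC M * torusB M) ^ p *
      (torusB M * torusA M * torusB M * torusC M) ^ q =
        torusT M (.ofAdd ((p : ZMod M), (q : ZMod M))) := by
  rw [torus_u, torus_v, ← map_zpow (torusT M), ← map_zpow (torusT M), ← map_mul,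
    ← ofAdd_zsmul, ← ofAdd_zsmul, ← ofAdd_add]
  simp

theorem torus_ab_pow_four (M : ℕ) : (torusA M * torusB M) ^ 4 = 1 := by
  ext z <;> simp [pow_succ, torusA_apply, torusB_apply]

theorem torus_bc_pow_four (M : ℕ) : (torusB M * torusC M) ^ 4 = 1 := by
  ext z <;> simp [pow_succ, torusC_apply, torusB_apply]

theorem torus_pc_pow (m : ℕ) :
    (((torusA (2 * m) * torusB (2 * m)) ^ 2)⁻¹ * (torusC (2 * m))⁻¹ *
      (torusA (2 * m) * torusB (2 * m)) ^ 2 * torusC (2 * m)) ^ m = 1 := by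
  have h : ((torusA (2 * m) * torusB (2 * m)) ^ 2)⁻¹ * (torusC (2 * m))⁻¹ *
      (torusA (2 * m) * torusB (2 * m)) ^ 2 * torusC (2 * m) =
      torusT (2 * m) (.ofAdd (0, 2)) := by
    rw [mul_assoc, mul_assoc, inv_mul_eq_iff_eq_mul, inv_mul_eq_iff_eq_mul]
    ext z <;> simp [torusT_apply, pow_succ, torusA_apply, torusB_apply, torusC_apply]
    ring
  have h2 : (m : ZMod (2 * m)) * 2 = 0 := by
    have := ZMod.natCast_self (2 * m)
    push_cast at this
    exact (mul_comm _ _).trans this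
  have h0 : m • ((0, 2) : ZMod (2 * m) × ZMod (2 * m)) = 0 := by simp [h2]
  rw [h, ← map_pow, ← ofAdd_nsmul, h0, ofAdd_zero, map_one]

instance dihedralGroup_isSolvable (k : ℕ) : Group.IsSolvable (DihedralGroup k) := by
  let rot : Multiplicative (ZMod k) →* DihedralGroup k :=
    { toFun := fun i => r i.toAdd, map_one' := rfl, map_mul' := fun i j => (r_mul_r _ _).symm }
  let sgn : DihedralGroup k →* Multiplicative (ZMod 2) :=
    { toFun := fun d => match d with
        | r _ => 1
        | sr _ => .ofAdd 1
      map_one' := rfl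
      map_mul' := by rintro (i | i) (j | j) <;> first
        | rfl
        | exact (by decide : (1 : Multiplicative (ZMod 2)) = .ofAdd 1 * .ofAdd 1) }
  refine Group.isSolvable_of_ker_le_range rot sgn ?_
  rintro (i | i) hi
  · exact ⟨.ofAdd i, rfl⟩
  · exact absurd hi (by change ¬ (Multiplicative.ofAdd (1 : ZMod 2) = 1); decide)

end Models

section Combined

open DihedralGroup

open scoped commutatorElement

theorem even_and_dvd_of_r_zpow_mul_sr_zpow {k : ℕ} {z : ZMod k} {j e : ℤ}
    (h : r (1 : ZMod k) ^ j * sr z ^ e = 1) : Even e ∧ (k : ℤ) ∣ j := by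
  rcases Int.even_or_odd' e with ⟨e, rfl | rfl⟩
  · refine ⟨even_two_mul e, ?_⟩
    have h2 : sr z ^ (2 : ℤ) = 1 := by rw [zpow_two, sr_mul_self]
    rw [zpow_mul, h2, one_zpow, mul_one] at h
    simpa [orderOf_r_one] using orderOf_dvd_iff_zpow_eq_one.2 h
  · have h2 : sr z ^ (2 : ℤ) = 1 := by rw [zpow_two, sr_mul_self]
    rw [zpow_add_one, zpow_mul, h2, one_zpow, one_mul, r_zpow, r_mul_sr, one_def] at h
    cases h

variable {G : Type*} [Group G] {a b c : G} {n₁ n₂ m : ℕ}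

theorem exists_fin_pow_eq_zpow {x : G} {k : ℕ} (hk : 0 < k) (hx : x ^ k = 1) (i : ℤ) :
    ∃ j : Fin k, x ^ i = x ^ (j : ℕ) := by
  have hk' : (k : ℤ) ≠ 0 := by omega
  have h0 := Int.emod_nonneg i hk'
  have h1 := Int.emod_lt_of_pos i (by omega : (0 : ℤ) < k)
  refine ⟨⟨(i % k).toNat, by omega⟩, ?_⟩
  rw [← zpow_natCast, Int.toNat_of_nonneg h0, ← zpow_eq_zpow_emod' i hx]

/-- A group generated by `a, b, c` with the relations of the presentation, together with
its actions on a square torus, on its point group, and on the two dihedral quotients. -/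
structure Actions (a b c : G) (n₁ n₂ m : ℕ) where
  ha : a ^ 2 = 1
  hb : b ^ 2 = 1
  hc : c ^ 2 = 1
  hab : (a * b) ^ (4 * n₁) = 1
  hbc : (b * c) ^ (4 * n₂) = 1
  hac : (a * c) ^ 2 = 1
  hx : Commute ((a * b) ^ 4) c
  hy : Commute a ((b * c) ^ 4)
  hv : (((a * b) ^ 2)⁻¹ * c⁻¹ * (a * b) ^ 2 * c) ^ m = 1
  htop : Subgroup.closure {a, b, c} = ⊤
  face : G →* DihedralGroup (4 * n₁)
  face_a : face a = sr 0
  face_b : face b = sr 1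
  face_c : face c = 1
  vert : G →* DihedralGroup (4 * n₂)
  vert_a : vert a = 1
  vert_b : vert b = sr 0
  vert_c : vert c = sr 1
  torus : G →* Equiv.Perm (ZMod (2 * m) × ZMod (2 * m))
  torus_a : torus a = torusA _
  torus_b : torus b = torusB _
  torus_c : torus c = torusC _
  point : G →* DihedralGroup 4
  point_a : point a = sr 0
  point_b : point b = sr 1
  point_c : point c = sr 2

namespace Actions

theorem orderOf_ab (A : Actions a b c n₁ n₂ m) : orderOf (a * b) = 4 * n₁ := by
  refine Nat.dvd_antisymm (orderOf_dvd_of_pow_eq_one A.hab) ?_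
  have := orderOf_map_dvd A.face (a * b)
  rwa [map_mul, A.face_a, A.face_b, sr_mul_sr, sub_zero, orderOf_r_one] at this

theorem orderOf_bc (A : Actions a b c n₁ n₂ m) : orderOf (b * c) = 4 * n₂ := by
  refine Nat.dvd_antisymm (orderOf_dvd_of_pow_eq_one A.hbc) ?_
  have := orderOf_map_dvd A.vert (b * c)
  rwa [map_mul, A.vert_b, A.vert_c, sr_mul_sr, sub_zero, orderOf_r_one] at this

theorem orderOf_a (A : Actions a b c n₁ n₂ m) : orderOf a = 2 :=
  orderOf_eq_prime A.ha fun h => by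
    have := congrArg A.face h
    rw [A.face_a, map_one, one_def] at this
    cases this

theorem orderOf_b (A : Actions a b c n₁ n₂ m) : orderOf b = 2 :=
  orderOf_eq_prime A.hb fun h => by
    have := congrArg A.face h
    rw [A.face_b, map_one, one_def] at this
    cases this

theorem orderOf_c (A : Actions a b c n₁ n₂ m) : orderOf c = 2 :=
  orderOf_eq_prime A.hc fun h => by
    have := congrArg A.vert h
    rw [A.vert_c, map_one, one_def] at this
    cases this

theorem orderOf_ac (A : Actions a b c n₁ n₂ m) : orderOf (a * c) = 2 :=
  orderOf_eq_prime A.hac fun h => by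
    have := congrArg A.face h
    rw [map_mul, A.face_a, A.face_c, mul_one, map_one, one_def] at this
    cases this

theorem v_pow (A : Actions a b c n₁ n₂ m) : (b * a * b * c) ^ (2 * m) = 1 := by
  have ha := inv_eq_self_of_sq A.ha
  have hb := inv_eq_self_of_sq A.hb
  have hc := inv_eq_self_of_sq A.hc
  have hac := inv_eq_self_of_sq A.hac
  rw [mul_inv_rev, ha, hc] at hac
  have haa : ∀ z, a * (a * z) = z := fun z => by rw [← mul_assoc, ← sq, A.ha, one_mul]
  have hca : ∀ z, c * (a * z) = a * (c * z) := fun z => by rw [← mul_assoc, hac, mul_assoc]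
  rw [pow_mul, ← A.hv]
  congr 1
  simp only [sq, mul_inv_rev, ha, hb, hc, mul_assoc, hca, haa]

theorem u_pow (A : Actions a b c n₁ n₂ m) : (a * b * c * b) ^ (2 * m) = 1 := by
  have h : a * b * c * b = b * (b * a * b * c) * b⁻¹ := by
    rw [inv_eq_self_of_sq A.hb]
    simp only [← mul_assoc, ← sq, A.hb, one_mul]
  rw [h, conj_pow, A.v_pow, mul_one, mul_inv_cancel]

theorem torus_word_zero (A : Actions a b c n₁ n₂ m) (i p q r e : ℤ) :
    A.torus ((a * b) ^ (4 * i) *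
      ((a * b * c * b) ^ p * (b * a * b * c) ^ q * ((b * c) ^ r * b ^ e))) 0 =
      ((p : ZMod (2 * m)), (q : ZMod (2 * m))) := by
  have hB : torusB (2 * m) ∈ MulAction.stabilizer _ (0 : ZMod (2 * m) × ZMod (2 * m)) := rfl
  have hC : torusC (2 * m) ∈ MulAction.stabilizer _ (0 : ZMod (2 * m) × ZMod (2 * m)) := by
    change torusC _ _ = _
    simp [torusC_apply]
  have hw : ((torusB (2 * m) * torusC (2 * m)) ^ r * torusB (2 * m) ^ e) 0 = 0 :=
    mul_mem (zpow_mem (mul_mem hB hC) r) (zpow_mem hB e)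
  simp only [map_mul, map_zpow, A.torus_a, A.torus_b, A.torus_c]
  rw [zpow_mul, show ((torusA (2 * m) * torusB (2 * m)) ^ (4 : ℤ)) = 1 from torus_ab_pow_four _,
    one_zpow, one_mul, torus_translation, Equiv.Perm.mul_apply, hw, torusT_apply, add_zero]

theorem exists_word (A : Actions a b c n₁ n₂ m) (g : G) : ∃ i p q r e : ℤ, g = (a * b) ^ (4 * i) *
      ((a * b * c * b) ^ p * (b * a * b * c) ^ q * ((b * c) ^ r * b ^ e)) :=
  Stmt9.exists_word A.ha A.hb A.hc A.hac A.hx A.hy A.htop g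

theorem face_ab (A : Actions a b c n₁ n₂ m) : A.face (a * b) = r 1 := by
  rw [map_mul, A.face_a, A.face_b, sr_mul_sr, sub_zero]

theorem vert_bc (A : Actions a b c n₁ n₂ m) : A.vert (b * c) = r 1 := by
  rw [map_mul, A.vert_b, A.vert_c, sr_mul_sr, sub_zero]

theorem vert_ab_pow_four (A : Actions a b c n₁ n₂ m) : A.vert (a * b) ^ 4 = 1 := by
  rw [map_mul, A.vert_a, A.vert_b, one_mul]
  simp [pow_succ]

/-- An element fixing the origin of the torus and trivial in both dihedral quotients is trivial. -/
theorem eq_one_of_trivial_actions (A : Actions a b c n₁ n₂ m) {g : G}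
    (ht : A.torus g 0 = 0) (hf : A.face g = 1) (hvt : A.vert g = 1) : g = 1 := by
  obtain ⟨i, p, q, r, e, rfl⟩ := A.exists_word g
  rw [A.torus_word_zero, Prod.mk_eq_zero, ZMod.intCast_zmod_eq_zero_iff_dvd,
    ZMod.intCast_zmod_eq_zero_iff_dvd] at ht
  obtain ⟨⟨p, rfl⟩, ⟨q, rfl⟩⟩ := ht
  have hu : (a * b * c * b) ^ ((2 * m : ℕ) : ℤ) = 1 := by rw [zpow_natCast, A.u_pow]
  have hv : (b * a * b * c) ^ ((2 * m : ℕ) : ℤ) = 1 := by rw [zpow_natCast, A.v_pow]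
  have h4 : A.vert (a * b) ^ (4 : ℤ) = 1 := A.vert_ab_pow_four
  rw [zpow_mul _ _ p, hu, zpow_mul _ _ q, hv, one_zpow, one_zpow, one_mul, one_mul] at hf hvt ⊢
  rw [map_mul, map_zpow, zpow_mul, h4, one_zpow, one_mul, map_mul, map_zpow, map_zpow, A.vert_bc,
    A.vert_b] at hvt
  obtain ⟨⟨e, rfl⟩, ⟨j, rfl⟩⟩ := even_and_dvd_of_r_zpow_mul_sr_zpow hvt
  have hb2 : b ^ (e + e) = 1 := by
    rw [← two_mul, zpow_mul, zpow_ofNat, A.hb, one_zpow]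
  have hbc : (b * c) ^ (((4 * n₂ : ℕ) : ℤ) * j) = 1 := by
    rw [zpow_mul, zpow_natCast, A.hbc, one_zpow]
  rw [hb2, hbc, mul_one, mul_one] at hf ⊢
  rw [map_zpow, A.face_ab] at hf
  have hd := orderOf_dvd_iff_zpow_eq_one.2 hf
  rw [orderOf_r_one, ← A.orderOf_ab] at hd
  exact orderOf_dvd_iff_zpow_eq_one.1 hd

theorem isSolvable (A : Actions a b c n₁ n₂ m) : Group.IsSolvable G := by
  let f : G →* (DihedralGroup (4 * n₁) × DihedralGroup (4 * n₂)) × DihedralGroup 4 :=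
    (A.face.prod A.vert).prod A.point
  have htrans : ∀ g ∈ f.ker, ∃ w, A.torus g = torusT _ w := by
    intro g hg
    have hp : A.point g = 1 := congrArg Prod.snd hg
    obtain ⟨i, p, q, j, e, rfl⟩ := A.exists_word g
    simp only [map_mul, map_zpow, A.point_a, A.point_b, A.point_c] at hp
    have h₁ : (sr 0 * sr 1 : DihedralGroup 4) ^ (4 : ℤ) = 1 := by decide
    have h₂ : (sr 0 * sr 1 * sr 2 * sr 1 : DihedralGroup 4) = 1 := by decide
    have h₃ : (sr 1 * sr 0 * sr 1 * sr 2 : DihedralGroup 4) = 1 := by decide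
    have h₄ : (sr 1 * sr 2 : DihedralGroup 4) = r 1 := by decide
    rw [zpow_mul, h₁, h₂, h₃, h₄, one_zpow, one_zpow, one_zpow, one_mul, one_mul, one_mul] at hp
    obtain ⟨⟨e, rfl⟩, ⟨j, rfl⟩⟩ := even_and_dvd_of_r_zpow_mul_sr_zpow hp
    refine ⟨.ofAdd ((p : ZMod (2 * m)), (q : ZMod (2 * m))), ?_⟩
    have hab : (torusA (2 * m) * torusB (2 * m)) ^ (4 : ℤ) = 1 := torus_ab_pow_four _
    have hbc : (torusB (2 * m) * torusC (2 * m)) ^ ((4 : ℕ) : ℤ) = 1 := torus_bc_pow_four _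
    have hb : torusB (2 * m) ^ (2 : ℤ) = 1 := rfl
    simp only [map_mul, map_zpow, A.torus_a, A.torus_b, A.torus_c]
    rw [← two_mul, zpow_mul _ 4, zpow_mul _ (2 : ℤ), zpow_mul _ ((4 : ℕ) : ℤ), hab, hbc, hb,
      torus_translation]
    simp
  have hcomm : ∀ g ∈ f.ker, ∀ h ∈ f.ker, g * h = h * g := by
    intro g hg h hh
    have hgh : ⁅g, h⁆ ∈ f.ker := Subgroup.commutator_le_left _ _
      (Subgroup.commutator_mem_commutator hg hh)
    obtain ⟨w, hw⟩ := htrans g hg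
    obtain ⟨w', hw'⟩ := htrans h hh
    have hk : f ⁅g, h⁆ = 1 := hgh
    rw [← commutatorElement_eq_one_iff_mul_comm]
    refine A.eq_one_of_trivial_actions ?_ (congrArg (fun z => z.1.1) hk)
      (congrArg (fun z => z.1.2) hk)
    rw [map_commutatorElement, hw, hw', ← map_commutatorElement,
      commutatorElement_eq_one_iff_mul_comm.2 (mul_comm w w'), map_one]
    rfl
  have : Group.IsSolvable f.ker :=
    Group.isSolvable_of_comm fun g h => Subtype.ext (hcomm g g.2 h h.2)
  exact Group.isSolvable_of_ker_le_range f.ker.subtype f (by simp)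

theorem card_eq (A : Actions a b c n₁ n₂ m) (h₁ : 0 < n₁) (h₂ : 0 < n₂) (hm : 0 < m) :
    Nat.card G = n₁ * (2 * m) * (2 * m) * (4 * n₂) * 2 := by
  let F : Fin n₁ × Fin (2 * m) × Fin (2 * m) × Fin (4 * n₂) × Fin 2 → G := fun z =>
    (a * b) ^ (4 * (z.1 : ℕ)) * ((a * b * c * b) ^ (z.2.1 : ℕ) *
      (b * a * b * c) ^ (z.2.2.1 : ℕ) * ((b * c) ^ (z.2.2.2.1 : ℕ) * b ^ (z.2.2.2.2 : ℕ)))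
  have hF : Function.Bijective F := by
    constructor
    · rintro ⟨i, p, q, j, e⟩ ⟨i', p', q', j', e'⟩ h
      simp only [F] at h
      have ht := A.torus_word_zero i p q j e
      have ht' := A.torus_word_zero i' p' q' j' e'
      norm_cast at ht ht'
      rw [h, ht', Prod.mk.injEq, ZMod.natCast_eq_natCast_iff', ZMod.natCast_eq_natCast_iff',
        Nat.mod_eq_of_lt p.2, Nat.mod_eq_of_lt p'.2, Nat.mod_eq_of_lt q.2, Nat.mod_eq_of_lt q'.2]
        at ht
      obtain rfl : p' = p := Fin.ext ht.1
      obtain rfl : q' = q := Fin.ext ht.2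
      have hvt := congrArg A.vert h
      have hz : ∀ k : ℕ, A.vert ((a * b) ^ (4 * k)) = 1 := fun k => by
        rw [map_pow, pow_mul, A.vert_ab_pow_four, one_pow]
      rw [map_mul, map_mul A.vert ((a * b) ^ _), hz, hz, one_mul, one_mul, map_mul,
        map_mul A.vert (_ * _) (_ * b ^ (e' : ℕ)), mul_right_inj, map_mul, map_mul,
        map_pow, map_pow, map_pow, map_pow, A.vert_bc, A.vert_b, r_one_pow, r_one_pow] at hvt
      have hje : j = j' ∧ e = e' := by
        have hcast : ∀ k k' : Fin (4 * n₂), ((k : ℕ) : ZMod (4 * n₂)) = (k' : ℕ) → k = k' := by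
          intro k k' hk
          rw [ZMod.natCast_eq_natCast_iff', Nat.mod_eq_of_lt k.2, Nat.mod_eq_of_lt k'.2] at hk
          exact Fin.ext hk
        fin_cases e <;> fin_cases e' <;> simp at hvt ⊢
        · exact hcast _ _ hvt
        · exact hcast _ _ hvt
      obtain ⟨rfl, rfl⟩ := hje
      have hi := pow_injOn_Iio_orderOf (x := a * b)
        (by rw [Set.mem_Iio, A.orderOf_ab]; have := i.2; omega)
        (by rw [Set.mem_Iio, A.orderOf_ab]; have := i'.2; omega) (mul_right_cancel h)
      obtain rfl : i = i' := Fin.ext (by omega)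
      rfl
    · intro g
      obtain ⟨i, p, q, j, e, rfl⟩ := A.exists_word g
      obtain ⟨i', hi⟩ := exists_fin_pow_eq_zpow h₁ (by rw [← pow_mul, A.hab] :
        ((a * b) ^ 4) ^ n₁ = 1) i
      obtain ⟨p', hp⟩ := exists_fin_pow_eq_zpow (by omega) A.u_pow p
      obtain ⟨q', hq⟩ := exists_fin_pow_eq_zpow (by omega) A.v_pow q
      obtain ⟨j', hj⟩ := exists_fin_pow_eq_zpow (by omega) A.hbc j
      obtain ⟨e', he⟩ := exists_fin_pow_eq_zpow (by omega) A.hb e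
      refine ⟨(i', p', q', j', e'), ?_⟩
      simp only [F]
      rw [hp, hq, hj, he, pow_mul, ← hi, zpow_mul]
      norm_cast
  rw [← Nat.card_eq_of_bijective F hF]
  simp only [Nat.card_prod, Nat.card_fin]
  ring

end Actions

end Combined

section Presentation

open DihedralGroup

variable {s t n l1 l2 : ℕ}

/-- The universal property of the presentation. -/
theorem exists_hom {K : Type*} [Group K] {a b c : K} (ha : a ^ 2 = 1) (hb : b ^ 2 = 1)
    (hc : c ^ 2 = 1) (hab : (a * b) ^ (2 ^ s * l1) = 1) (hbc : (b * c) ^ (2 ^ t * l2) = 1)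
    (hac : (a * c) ^ 2 = 1) (hx : Commute ((a * b) ^ 4) c) (hy : Commute a ((b * c) ^ 4))
    (hv : (((a * b) ^ 2)⁻¹ * c⁻¹ * (a * b) ^ 2 * c) ^ 2 ^ ((n - s - t - 1) / 2) = 1) :
    ∃ f : PresentedGroup (rels s t n l1 l2) →* K,
      f (g s t n l1 l2 0) = a ∧ f (g s t n l1 l2 1) = b ∧ f (g s t n l1 l2 2) = c := by
  have hpc : ∀ {x y : K}, Commute x y → x⁻¹ * y⁻¹ * x * y = 1 := fun {x y} h => by
    rw [mul_assoc, h.eq]; group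
  have h : ∀ w ∈ rels s t n l1 l2, FreeGroup.lift ![a, b, c] w = 1 := by
    rintro w (rfl | rfl | rfl | rfl | rfl | rfl | rfl | rfl | rfl) <;>
      simp only [pc, r0, r1, r2, map_mul, map_pow, map_inv, FreeGroup.lift_apply_of] <;>
      first
      | assumption
      | exact hpc hx
      | exact hpc hy
  refine ⟨PresentedGroup.toGroup h, ?_, ?_, ?_⟩ <;> exact PresentedGroup.toGroup.of h

theorem closure_g :
    Subgroup.closure {g s t n l1 l2 0, g s t n l1 l2 1, g s t n l1 l2 2} = ⊤ := by
  rw [← PresentedGroup.closure_range_of]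
  congr 1
  ext z
  simp only [Set.mem_insert_iff, Set.mem_singleton_iff, Set.mem_range, Fin.exists_fin_succ]
  simp [g, eq_comm]

theorem relations (s t n l1 l2 : ℕ) :
    let a := g s t n l1 l2 0
    let b := g s t n l1 l2 1
    let c := g s t n l1 l2 2
    a ^ 2 = 1 ∧ b ^ 2 = 1 ∧ c ^ 2 = 1 ∧ (a * b) ^ (2 ^ s * l1) = 1 ∧
      (b * c) ^ (2 ^ t * l2) = 1 ∧ (a * c) ^ 2 = 1 ∧ Commute ((a * b) ^ 4) c ∧
      Commute a ((b * c) ^ 4) ∧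
      (((a * b) ^ 2)⁻¹ * c⁻¹ * (a * b) ^ 2 * c) ^ 2 ^ ((n - s - t - 1) / 2) = 1 := by
  intro a b c
  have hpc : ∀ {x y : PresentedGroup (rels s t n l1 l2)}, x⁻¹ * y⁻¹ * x * y = 1 →
      Commute x y := fun {x y} h => by
    rw [mul_assoc, ← mul_inv_rev, inv_mul_eq_one] at h
    exact h.symm
  have h : ∀ w ∈ rels s t n l1 l2, PresentedGroup.mk (rels s t n l1 l2) w = 1 :=
    fun w hw => PresentedGroup.one_of_mem hw
  refine ⟨h (r0 ^ 2) ?_, h (r1 ^ 2) ?_, h (r2 ^ 2) ?_, h ((r0 * r1) ^ (2 ^ s * l1)) ?_,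
    h ((r1 * r2) ^ (2 ^ t * l2)) ?_, h ((r0 * r2) ^ 2) ?_, hpc (h (pc ((r0 * r1) ^ 4) r2) ?_),
    hpc (h (pc r0 ((r1 * r2) ^ 4)) ?_),
    h ((pc ((r0 * r1) ^ 2) r2) ^ (2 ^ ((n - s - t - 1) / 2))) ?_⟩ <;> simp [rels]

/-- A generating triple with retractions onto all of its standard subgroups satisfies the
intersection property. -/
theorem interProp_of_retractions {G : Type*} [Group G] {ρ : Fin 3 → G}
    (h : ∀ I : Set (Fin 3), ∃ f : G →* G, (∀ i ∈ I, f (ρ i) = ρ i) ∧ ∀ i ∉ I, f (ρ i) = 1) :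
    InterProp ρ := by
  intro I J
  refine le_antisymm ?_ (le_inf (Subgroup.closure_mono (Set.image_mono Set.inter_subset_left))
    (Subgroup.closure_mono (Set.image_mono Set.inter_subset_right)))
  rintro x ⟨hI, hJ⟩
  obtain ⟨f, hf, hf'⟩ := h I
  have hfix : f x = x := by
    refine MonoidHom.eqOn_closure (f := f) (g := MonoidHom.id G) ?_ hI
    rintro _ ⟨i, hi, rfl⟩
    exact hf i hi
  have hle : Subgroup.closure (ρ '' J) ≤ (Subgroup.closure (ρ '' (I ∩ J))).comap f := by
    rw [Subgroup.closure_le]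
    rintro _ ⟨i, hi, rfl⟩
    by_cases hiI : i ∈ I
    · simpa [hf i hiI] using Subgroup.subset_closure (Set.mem_image_of_mem ρ (Set.mem_inter hiI hi))
    · simp [hf' i hiI]
  simpa [hfix] using hle hJ

/-- Killing any set of generators gives an endomorphism of the presented group. -/
theorem exists_retraction (hs : 2 ∣ 2 ^ s * l1) (ht : 2 ∣ 2 ^ t * l2) (I : Set (Fin 3)) :
    ∃ f : PresentedGroup (rels s t n l1 l2) →* PresentedGroup (rels s t n l1 l2),
      (∀ i ∈ I, f (g s t n l1 l2 i) = g s t n l1 l2 i) ∧ ∀ i ∉ I, f (g s t n l1 l2 i) = 1 := by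
  classical
  obtain ⟨ha, hb, hc, hab, hbc, hac, hx, hy, hv⟩ := relations s t n l1 l2
  have even_pow : ∀ {k : ℕ} {z : PresentedGroup (rels s t n l1 l2)}, 2 ∣ k → z ^ 2 = 1 →
      z ^ k = 1 := by
    rintro _ z ⟨k, rfl⟩ hz
    rw [pow_mul, hz, one_pow]
  set a := g s t n l1 l2 0
  set b := g s t n l1 l2 1
  set c := g s t n l1 l2 2
  have ha4 := even_pow (by decide : 2 ∣ 4) ha
  have hb4 := even_pow (by decide : 2 ∣ 4) hb
  have hc4 := even_pow (by decide : 2 ∣ 4) hc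
  have := even_pow hs ha
  have := even_pow hs hb
  have := even_pow ht hb
  have := even_pow ht hc
  suffices H : ∃ f : PresentedGroup (rels s t n l1 l2) →* PresentedGroup (rels s t n l1 l2),
      f a = (if 0 ∈ I then a else 1) ∧ f b = (if 1 ∈ I then b else 1) ∧
        f c = (if 2 ∈ I then c else 1) by
    obtain ⟨f, h0, h1, h2⟩ := H
    refine ⟨f, fun i hi => ?_, fun i hi => ?_⟩ <;> fin_cases i
    · exact h0.trans (if_pos hi)
    · exact h1.trans (if_pos hi)
    · exact h2.trans (if_pos hi)
    · exact h0.trans (if_neg hi)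
    · exact h1.trans (if_neg hi)
    · exact h2.trans (if_neg hi)
  apply exists_hom <;> by_cases h0 : (0 : Fin 3) ∈ I <;> by_cases h1 : (1 : Fin 3) ∈ I <;>
    by_cases h2 : (2 : Fin 3) ∈ I <;> simp [*]

theorem nonempty_actions {n₁ n₂ : ℕ} (h₁ : 2 ^ s * l1 = 4 * n₁) (h₂ : 2 ^ t * l2 = 4 * n₂) :
    Nonempty (Actions (g s t n l1 l2 0) (g s t n l1 l2 1) (g s t n l1 l2 2) n₁ n₂
      (2 ^ ((n - s - t - 1) / 2))) := by
  obtain ⟨ha, hb, hc, hab, hbc, hac, hx, hy, hv⟩ := relations s t n l1 l2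
  have sr_sq : ∀ {k : ℕ} (z : ZMod k), sr z ^ 2 = 1 := fun z => by rw [sq, sr_mul_self]
  have sr_four : ∀ {k : ℕ} (z : ZMod k), sr z ^ 4 = 1 := fun z => by
    rw [show 4 = 2 * 2 from rfl, pow_mul, sr_sq, one_pow]
  have hr : ∀ k : ℕ, (sr 0 * sr 1 : DihedralGroup k) ^ k = 1 := fun k => by
    rw [sr_mul_sr, sub_zero, r_one_pow_n]
  obtain ⟨face, f0, f1, f2⟩ := exists_hom (s := s) (t := t) (n := n) (l1 := l1) (l2 := l2)
    (a := (sr 0 : DihedralGroup (4 * n₁))) (b := sr 1) (c := 1) (sr_sq _) (sr_sq _)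
    (one_pow _) (by rw [h₁, hr]) (by rw [mul_one, h₂, pow_mul, sr_four, one_pow])
    (by rw [mul_one, sr_sq]) (Commute.one_right _)
    (by rw [mul_one, sr_four]; exact Commute.one_right _) (by simp)
  obtain ⟨vert, v0, v1, v2⟩ := exists_hom (s := s) (t := t) (n := n) (l1 := l1) (l2 := l2)
    (a := 1) (b := (sr 0 : DihedralGroup (4 * n₂))) (c := sr 1) (one_pow _) (sr_sq _) (sr_sq _)
    (by rw [one_mul, h₁, pow_mul, sr_four, one_pow]) (by rw [h₂, hr]) (by rw [one_mul, sr_sq])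
    (by rw [one_mul, sr_four]; exact Commute.one_left _) (Commute.one_left _)
    (by rw [one_mul, sr_sq]; simp)
  obtain ⟨torus, t0, t1, t2⟩ := exists_hom (s := s) (t := t) (n := n) (l1 := l1) (l2 := l2)
    (a := torusA (2 * 2 ^ ((n - s - t - 1) / 2))) (b := torusB _) (c := torusC _)
    (by ext z <;> simp [sq, torusA_apply]) rfl
    (by ext z <;> simp [sq, torusC_apply])
    (by rw [h₁, pow_mul, torus_ab_pow_four, one_pow])
    (by rw [h₂, pow_mul, torus_bc_pow_four, one_pow])
    (by ext z <;> simp [sq, torusA_apply, torusC_apply])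
    (by rw [torus_ab_pow_four]; exact Commute.one_left _)
    (by rw [torus_bc_pow_four]; exact Commute.one_right _) (torus_pc_pow _)
  obtain ⟨point, p0, p1, p2⟩ := exists_hom (s := s) (t := t) (n := n) (l1 := l1) (l2 := l2)
    (a := (sr 0 : DihedralGroup 4)) (b := sr 1) (c := sr 2) (by decide) (by decide) (by decide)
    (by rw [h₁, pow_mul, hr 4, one_pow])
    (by rw [h₂, pow_mul, show (sr 1 * sr 2 : DihedralGroup 4) ^ 4 = 1 by decide, one_pow])
    (by decide) (by rw [hr 4]; exact Commute.one_left _)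
    (by rw [show (sr 1 * sr 2 : DihedralGroup 4) ^ 4 = 1 by decide]; exact Commute.one_right _)
    (by
      rw [show (((sr 0 * sr 1 : DihedralGroup 4) ^ 2)⁻¹ * (sr 2)⁻¹ * (sr 0 * sr 1) ^ 2 * sr 2) = 1
        by decide, one_pow])
  exact ⟨{ ha := ha, hb := hb, hc := hc, hab := h₁ ▸ hab, hbc := h₂ ▸ hbc, hac := hac, hx := hx,
           hy := hy, hv := hv, htop := closure_g, face := face, face_a := f0, face_b := f1,
           face_c := f2, vert := vert, vert_a := v0, vert_b := v1, vert_c := v2,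
           torus := torus, torus_a := t0, torus_b := t1, torus_c := t2,
           point := point, point_a := p0, point_b := p1, point_c := p2 }⟩

end Presentation

/-- Theorem 4.1, case `n - s - t` odd: the group `G` is a solvable string C-group of
order `2^n ℓ1 ℓ2` and Schläfli type `{2^s ℓ1, 2^t ℓ2}`. -/
theorem stmt_9 (s t n l1 l2 : ℕ) (hs : 2 ≤ s) (ht : 2 ≤ t) (hn : s + t + 1 ≤ n)
    (hnst : Odd (n - s - t)) (hl1 : Odd l1) (hl2 : Odd l2)
    (hl1' : 0 < l1) (hl2' : 0 < l2) :
    Nat.card (PresentedGroup (rels s t n l1 l2)) = 2 ^ n * l1 * l2 ∧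
    IsSolvable (PresentedGroup (rels s t n l1 l2)) ∧
    orderOf (g s t n l1 l2 0) = 2 ∧ orderOf (g s t n l1 l2 1) = 2 ∧
    orderOf (g s t n l1 l2 2) = 2 ∧
    orderOf (g s t n l1 l2 0 * g s t n l1 l2 2) = 2 ∧
    orderOf (g s t n l1 l2 0 * g s t n l1 l2 1) = 2 ^ s * l1 ∧
    orderOf (g s t n l1 l2 1 * g s t n l1 l2 2) = 2 ^ t * l2 ∧
    InterProp ![g s t n l1 l2 0, g s t n l1 l2 1, g s t n l1 l2 2] := by
  obtain ⟨s, rfl⟩ := Nat.exists_eq_add_of_le' hs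
  obtain ⟨t, rfl⟩ := Nat.exists_eq_add_of_le' ht
  have h₁ : 2 ^ (s + 2) * l1 = 4 * (2 ^ s * l1) := by ring
  have h₂ : 2 ^ (t + 2) * l2 = 4 * (2 ^ t * l2) := by ring
  obtain ⟨A⟩ := nonempty_actions (s := s + 2) (t := t + 2) (n := n) h₁ h₂
  refine ⟨?_, A.isSolvable, A.orderOf_a, A.orderOf_b, A.orderOf_c, A.orderOf_ac,
    A.orderOf_ab.trans h₁.symm, A.orderOf_bc.trans h₂.symm, ?_⟩
  · rw [A.card_eq (by positivity) (by positivity) (by positivity)]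
    obtain ⟨k, hk⟩ := hnst
    have hk' : (n - (s + 2) - (t + 2) - 1) / 2 = k := by omega
    have hn' : n = s + t + 5 + k + k := by omega
    rw [hk', hn']
    ring
  · have hg : ![g (s + 2) (t + 2) n l1 l2 0, g (s + 2) (t + 2) n l1 l2 1,
        g (s + 2) (t + 2) n l1 l2 2] = g (s + 2) (t + 2) n l1 l2 := by
      ext i
      fin_cases i <;> rfl
    rw [hg]
    exact interProp_of_retractions (exists_retraction ⟨2 * (2 ^ s * l1), by rw [h₁]; ring⟩
      ⟨2 * (2 ^ t * l2), by rw [h₂]; ring⟩)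

end Stmt9
end

section
/- Let s, t, n be integers with s ≥ 2, t ≥ 2, n ≥ s + t + 1 and n − s − t even, and let ℓ1, ℓ2 be odd positive integers. Let G be the presented group on generators ρ0, ρ1, ρ2 with relation set {ρ0^2, ρ1^2, ρ2^2, (ρ0ρ1)^{2^s·ℓ1}, (ρ1ρ2)^{2^t·ℓ2}, (ρ0ρ2)^2, [(ρ0ρ1)^4, ρ2], [ρ0, (ρ1ρ2)^4], [(ρ0ρ1)^2, (ρ1ρ2)^2]^{2^{(n−s−t−2)/2}}}, where [x, y] = x⁻¹y⁻¹xy. Then G has order 2^n · ℓ1 · ℓ2, G is solvable, in G the images of ρ0, ρ1, ρ2 and ρ0ρ2 have order exactly 2, the image of ρ0ρ1 has order exactly 2^s·ℓ1, the image of ρ1ρ2 has order exactly 2^t·ℓ2, and the triple of images of (ρ0, ρ1, ρ2) satisfies the intersection property in G. -/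
namespace Stmt10

def r0 : FreeGroup (Fin 3) := FreeGroup.of 0
def r1 : FreeGroup (Fin 3) := FreeGroup.of 1
def r2 : FreeGroup (Fin 3) := FreeGroup.of 2

/-- The commutator `[x, y] = x⁻¹ y⁻¹ x y` as used in the paper. -/
def pc (x y : FreeGroup (Fin 3)) : FreeGroup (Fin 3) := x⁻¹ * y⁻¹ * x * y

/-- The relations of the presented group `G` of Theorem 4.1, case `n - s - t` even. -/
def rels (s t n l1 l2 : ℕ) : Set (FreeGroup (Fin 3)) :=
  {r0 ^ 2, r1 ^ 2, r2 ^ 2,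
   (r0 * r1) ^ (2 ^ s * l1), (r1 * r2) ^ (2 ^ t * l2), (r0 * r2) ^ 2,
   pc ((r0 * r1) ^ 4) r2, pc r0 ((r1 * r2) ^ 4),
   (pc ((r0 * r1) ^ 2) ((r1 * r2) ^ 2)) ^ (2 ^ ((n - s - t - 2) / 2))}

/-- The image of the `i`-th generator. -/
def g (s t n l1 l2 : ℕ) (i : Fin 3) : PresentedGroup (rels s t n l1 l2) :=
  PresentedGroup.of i

/-- The intersection property for a triple of elements. -/
def InterProp {G : Type*} [Group G] (ρ : Fin 3 → G) : Prop :=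
  ∀ I J : Set (Fin 3),
    Subgroup.closure (ρ '' I) ⊓ Subgroup.closure (ρ '' J) =
      Subgroup.closure (ρ '' (I ∩ J))

section StringRelations

variable {H : Type*} [Group H] {x y w : H}

/-- The relations satisfied by the generators independently of the parameters. -/
structure StringRel (x y w : H) : Prop where
  sq_left : x * x = 1
  sq_mid : y * y = 1
  sq_right : w * w = 1
  comm : x * w = w * x
  comm_left : (x * y) ^ 4 * w = w * (x * y) ^ 4
  comm_right : x * (y * w) ^ 4 = (y * w) ^ 4 * x

/-- The square of the translation `x y w y`. -/
def transSq (x y w : H) : H := (x * y * w * y) ^ 2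

namespace StringRel

theorem inv_left (h : StringRel x y w) : x⁻¹ = x := inv_eq_of_mul_eq_one_left h.sq_left

theorem inv_mid (h : StringRel x y w) : y⁻¹ = y := inv_eq_of_mul_eq_one_left h.sq_mid

theorem inv_right (h : StringRel x y w) : w⁻¹ = w := inv_eq_of_mul_eq_one_left h.sq_right

theorem left_cancel (h : StringRel x y w) (a : H) : x * (x * a) = a := by
  rw [← mul_assoc, h.sq_left, one_mul]

theorem mid_cancel (h : StringRel x y w) (a : H) : y * (y * a) = a := by
  rw [← mul_assoc, h.sq_mid, one_mul]

theorem right_cancel (h : StringRel x y w) (a : H) : w * (w * a) = a := by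
  rw [← mul_assoc, h.sq_right, one_mul]

theorem reverse (h : StringRel x y w) : StringRel w y x where
  sq_left := h.sq_right
  sq_mid := h.sq_mid
  sq_right := h.sq_left
  comm := h.comm.symm
  comm_left := by
    have e : (w * y) ^ 4 = ((y * w) ^ 4)⁻¹ := by
      rw [← inv_pow, mul_inv_rev, h.inv_mid, h.inv_right]
    have c : Commute x ((y * w) ^ 4) := h.comm_right
    rw [e]
    exact c.inv_right.eq.symm
  comm_right := by
    have e : (y * x) ^ 4 = ((x * y) ^ 4)⁻¹ := by
      rw [← inv_pow, mul_inv_rev, h.inv_mid, h.inv_left]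
    have c : Commute ((x * y) ^ 4) w := h.comm_left
    rw [e]
    exact c.inv_left.eq.symm

theorem transSq_reverse (h : StringRel x y w) : transSq w y x = (y * transSq x y w * y)⁻¹ := by
  simp only [transSq, pow_two, mul_inv_rev, h.inv_left, h.inv_mid, h.inv_right, mul_assoc,
    h.mid_cancel]

theorem left_conj_transSq (h : StringRel x y w) : x * transSq x y w * x = (transSq x y w)⁻¹ := by
  simp only [transSq, pow_two, mul_inv_rev, h.inv_left, h.inv_mid, h.inv_right, mul_assoc,
    h.left_cancel]

theorem right_conj_transSq (h : StringRel x y w) : w * transSq x y w * w = transSq x y w := by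
  have hv : x * (y * w * y * w * y * w * y) = y * w * y * w * y * w * y * x := by
    have e : y * w * y * w * y * w * y = (y * w) ^ 4 * w := by
      simp only [pow_succ, pow_zero, one_mul, mul_assoc, h.sq_right, mul_one]
    rw [e, ← mul_assoc, h.comm_right, mul_assoc, h.comm, mul_assoc]
  have e : w * (y * w * y) * x * (y * w * y) * w = y * w * y * x * (y * w * y) := by
    calc w * (y * w * y) * x * (y * w * y) * w
        = y * w * y * (y * w * y * w * y * w * y * x) * (y * w * y * w * y * w * y)
            * (y * w * y) := by
          simp only [mul_assoc, h.mid_cancel, h.right_cancel, h.sq_mid, mul_one]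
      _ = y * w * y * x * (y * w * y) := by
          rw [← hv]
          simp only [mul_assoc, h.mid_cancel, h.right_cancel]
  calc w * transSq x y w * w = x * (w * (y * w * y) * x * (y * w * y) * w) := by
        simp only [transSq, pow_two, ← mul_assoc, h.comm]
    _ = transSq x y w := by
        rw [e]
        simp only [transSq, pow_two, mul_assoc]

theorem left_conj_mid_transSq (h : StringRel x y w) :
    x * (y * transSq x y w * y) * x = y * transSq x y w * y := by
  have e := h.reverse.right_conj_transSq
  rw [h.transSq_reverse] at e
  simpa [h.inv_left, mul_assoc] using congrArg (·⁻¹) e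

theorem right_conj_mid_transSq (h : StringRel x y w) :
    w * (y * transSq x y w * y) * w = (y * transSq x y w * y)⁻¹ := by
  have e := h.reverse.left_conj_transSq
  rw [h.transSq_reverse, inv_inv] at e
  simpa [h.inv_right, mul_assoc] using congrArg (·⁻¹) e

theorem commute_of_conj {a b : H} (ha : a * a = 1) (e : a * b * a = b) : Commute a b := by
  have : a⁻¹ = a := inv_eq_of_mul_eq_one_left ha
  rw [commute_iff_eq, ← mul_inv_eq_iff_eq_mul, this, e]

theorem commute_transSq (h : StringRel x y w) :
    Commute (transSq x y w) (y * transSq x y w * y) := by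
  have c₁ : Commute x (y * transSq x y w * y) :=
    commute_of_conj h.sq_left h.left_conj_mid_transSq
  have c₂ : Commute (y * w * y) (y * transSq x y w * y) := by
    refine commute_of_conj ?_ ?_
    · simp only [mul_assoc, h.mid_cancel, h.right_cancel, h.sq_mid]
    · calc y * w * y * (y * transSq x y w * y) * (y * w * y)
          = y * (w * transSq x y w * w) * y := by simp only [mul_assoc, h.mid_cancel]
        _ = _ := by rw [h.right_conj_transSq]
  have c₃ := (c₁.mul_left c₂).pow_left 2
  simpa only [transSq, mul_assoc] using c₃

theorem commutator_eq (h : StringRel x y w) :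
    ((x * y) ^ 2)⁻¹ * ((y * w) ^ 2)⁻¹ * (x * y) ^ 2 * (y * w) ^ 2
      = transSq x y w * (y * transSq x y w * y) := by
  have e₁ : y * x * y * transSq x y w * (y * x * y) = transSq x y w := by
    calc y * x * y * transSq x y w * (y * x * y)
        = y * (x * (y * transSq x y w * y) * x) * y := by simp only [mul_assoc]
      _ = _ := by
        rw [h.left_conj_mid_transSq]
        simp only [mul_assoc, h.mid_cancel, h.sq_mid, mul_one]
  have hwx (a : H) : w * (x * a) = x * (w * a) := by rw [← mul_assoc, ← h.comm, mul_assoc]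
  calc ((x * y) ^ 2)⁻¹ * ((y * w) ^ 2)⁻¹ * (x * y) ^ 2 * (y * w) ^ 2
      = y * x * y * (w * transSq x y w * w) * (w * y * x * y * w) := by
        simp only [transSq, pow_two, mul_inv_rev, h.inv_left, h.inv_mid, h.inv_right, mul_assoc,
          h.right_cancel, h.mid_cancel, hwx]
    _ = (y * x * y * transSq x y w * (y * x * y)) * (y * x * y * w * y * x * y * w) := by
        rw [h.right_conj_transSq]
        simp only [mul_assoc, h.mid_cancel, h.left_cancel]
    _ = _ := by
        rw [e₁]
        simp only [transSq, pow_two, mul_assoc, h.mid_cancel, h.sq_mid, mul_one]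

end StringRel

end StringRelations

section Dihedral

open DihedralGroup

theorem exists_zpow_of_mem_closure_involutions {H : Type*} [Group H] {p q : H} (hp : p * p = 1)
    (hq : q * q = 1) {a : H} (ha : a ∈ Subgroup.closure {p, q}) :
    ∃ i : ℤ, a = (p * q) ^ i ∨ a = p * (p * q) ^ i := by
  have ip : p⁻¹ = p := inv_eq_of_mul_eq_one_left hp
  have iq : q⁻¹ = q := inv_eq_of_mul_eq_one_left hq
  have key (i : ℤ) : q * (p * q) ^ i = p * (p * q) ^ (i + 1) := by
    rw [add_comm, zpow_add, zpow_one, ← mul_assoc, ← mul_assoc, hp, one_mul]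
  have key' (i : ℤ) : q * (p * (p * q) ^ i) = (p * q) ^ (i - 1) := by
    rw [sub_eq_add_neg, add_comm, zpow_add, zpow_neg_one, mul_inv_rev, ip, iq, mul_assoc]
  induction ha using Subgroup.closure_induction_left with
  | one => exact ⟨0, Or.inl (zpow_zero _).symm⟩
  | mul_left u hu v _ ih =>
    obtain ⟨i, rfl | rfl⟩ := ih <;> obtain rfl | rfl := hu
    · exact ⟨i, Or.inr rfl⟩
    · exact ⟨i + 1, Or.inr (key i)⟩
    · exact ⟨i, Or.inl (by rw [← mul_assoc, hp, one_mul])⟩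
    · exact ⟨i - 1, Or.inl (key' i)⟩
  | inv_mul_cancel u hu v _ ih =>
    obtain ⟨i, rfl | rfl⟩ := ih <;> obtain rfl | rfl := hu
    · exact ⟨i, Or.inr (by rw [ip])⟩
    · exact ⟨i + 1, Or.inr (by rw [iq, key i])⟩
    · exact ⟨i, Or.inl (by rw [inv_mul_cancel_left])⟩
    · exact ⟨i - 1, Or.inl (by rw [iq, key' i])⟩

/-- A homomorphism onto a dihedral group is injective on the subgroup generated by two
involutions mapping to the standard ones. -/
theorem eq_one_of_mem_closure_involutions {H : Type*} [Group H] {N : ℕ} {p q : H}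
    (hp : p * p = 1) (hq : q * q = 1) (hpq : (p * q) ^ N = 1) (π : H →* DihedralGroup N)
    (πp : π p = sr 0) (πq : π q = sr 1) {a : H} (ha : a ∈ Subgroup.closure {p, q})
    (ha' : π a = 1) : a = 1 := by
  obtain ⟨i, rfl | rfl⟩ := exists_zpow_of_mem_closure_involutions hp hq ha
  · have hi : (i : ZMod N) = 0 := by
      simpa [πp, πq, ← r_zero, r_zpow] using ha'
    obtain ⟨j, rfl⟩ := (ZMod.intCast_zmod_eq_zero_iff_dvd i N).mp hi
    rw [zpow_mul, zpow_natCast, hpq, one_zpow]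
  · simp [πp, πq, one_def, -r_zero] at ha'

/-- The parity of the number of factors `sr 1` in a word in `sr 0` and `sr 1`. -/
def parity {N : ℕ} (hN : 2 ∣ N) : DihedralGroup N →* Multiplicative (ZMod 2) where
  toFun
    | r i => Multiplicative.ofAdd (ZMod.castHom hN (ZMod 2) i)
    | sr i => Multiplicative.ofAdd (ZMod.castHom hN (ZMod 2) i)
  map_one' := by simp [one_def, -r_zero]
  map_mul' := by
    have h2 (i j : ZMod 2) : i - j = j + i := by revert i j; decide
    rintro (i | i) (j | j) <;>
      simp only [r_mul_r, r_mul_sr, sr_mul_r, sr_mul_sr, map_add, map_sub, ofAdd_add, h2]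

@[simp]
theorem parity_sr_zero {N : ℕ} (hN : 2 ∣ N) : parity hN (sr 0) = 1 := by
  simp [parity]

@[simp]
theorem parity_sr_one {N : ℕ} (hN : 2 ∣ N) :
    parity hN (sr 1) = Multiplicative.ofAdd 1 := by
  simp only [parity, MonoidHom.coe_mk, OneHom.coe_mk, map_one]

theorem eq_pow_of_parity_eq_one {N : ℕ} [NeZero N] (hN : 2 ∣ N) {u : DihedralGroup N}
    (hu : parity hN u = 1) : ∃ j : ℕ, u = r 2 ^ j ∨ u = sr 0 * r 2 ^ j := by
  have key (i : ZMod N) (hi : ZMod.castHom hN (ZMod 2) i = 0) : ∃ j : ℕ, r i = r 2 ^ j := by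
    rw [← ZMod.natCast_zmod_val i, map_natCast, ZMod.natCast_eq_zero_iff] at hi
    obtain ⟨j, hj⟩ := hi
    refine ⟨j, ?_⟩
    rw [r_pow, ← ZMod.natCast_zmod_val i, hj]
    push_cast
    rfl
  rcases u with i | i
  · obtain ⟨j, hj⟩ := key i (ofAdd_eq_one.mp hu)
    exact ⟨j, Or.inl hj⟩
  · obtain ⟨j, hj⟩ := key i (ofAdd_eq_one.mp hu)
    exact ⟨j, Or.inr (by rw [← hj, sr_mul_r, zero_add])⟩

theorem isSolvable_dihedralGroup (N : ℕ) : Group.IsSolvable (DihedralGroup N) := by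
  let rot : Multiplicative (ZMod N) →* DihedralGroup N :=
    { toFun := fun i => r i.toAdd
      map_one' := rfl
      map_mul' := fun _ _ => rfl }
  let refl : DihedralGroup N →* Multiplicative (ZMod 2) :=
    { toFun := fun
        | r _ => 1
        | sr _ => Multiplicative.ofAdd 1
      map_one' := rfl
      map_mul' := by
        rintro (i | i) (j | j)
        iterate 3 rfl
        exact (by decide : (1 : Multiplicative (ZMod 2)) = .ofAdd 1 * .ofAdd 1) }
  refine Group.isSolvable_of_ker_le_range rot refl ?_
  rintro (i | i) hi
  · exact ⟨Multiplicative.ofAdd i, rfl⟩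
  · have : Multiplicative.ofAdd (1 : ZMod 2) = 1 := hi
    exact absurd this (by decide)

/-- The fibre product of two dihedral groups over the parity has index two. -/
theorem card_parity_ker {N M : ℕ} (hN : 2 ∣ N) (hM : 2 ∣ M) :
    Nat.card ((parity hN).coprod (parity hM)).ker = 2 * N * M := by
  have hs : Function.Surjective ((parity hN).coprod (parity hM)) := by
    intro c
    have : c = 1 ∨ c = Multiplicative.ofAdd 1 := by revert c; decide
    obtain rfl | rfl := this
    · exact ⟨1, map_one _⟩
    · exact ⟨(sr 1, 1), by simp⟩
  have h := ((parity hN).coprod (parity hM)).ker.card_mul_index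
  rw [Subgroup.index_ker, MonoidHom.range_eq_top.mpr hs, Subgroup.card_top, Nat.card_prod,
    DihedralGroup.nat_card, DihedralGroup.nat_card] at h
  have h2 : Nat.card (Multiplicative (ZMod 2)) = 2 := by simp
  rw [h2] at h
  linarith

theorem range_prod_eq_ker_parity {H : Type*} [Group H] {N M : ℕ} [NeZero N] [NeZero M]
    (hN : 2 ∣ N) (hM : 2 ∣ M) (π : H →* DihedralGroup N × DihedralGroup M) {x y w : H}
    (hx : π x = (sr 0, 1)) (hy : π y = (sr 1, sr 1)) (hw : π w = (1, sr 0))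
    (hgen : Subgroup.closure {x, y, w} = ⊤) :
    π.range = ((parity hN).coprod (parity hM)).ker := by
  have h11 : (Multiplicative.ofAdd 1 : Multiplicative (ZMod 2)) * Multiplicative.ofAdd 1 = 1 := by
    decide
  apply le_antisymm
  · rw [← MonoidHom.comap_bot, MonoidHom.range_eq_map, ← hgen, Subgroup.map_le_iff_le_comap,
      Subgroup.closure_le]
    rintro a (rfl | rfl | rfl) <;> simp [hx, hy, hw, h11]
  · have h1 (u : DihedralGroup N) (hu : parity hN u = 1) : (u, 1) ∈ π.range := by
      have e : π ((x * y) ^ 2) = (r 2, 1) := by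
        simp [hx, hy, pow_two, one_add_one_eq_two]
      obtain ⟨j, rfl | rfl⟩ := eq_pow_of_parity_eq_one hN hu
      · exact ⟨((x * y) ^ 2) ^ j, by rw [map_pow, e, Prod.pow_mk, one_pow]⟩
      · exact ⟨x * ((x * y) ^ 2) ^ j, by
          rw [map_mul, map_pow, e, hx, Prod.pow_mk, Prod.mk_mul_mk, one_pow, one_mul]⟩
    have h2 (v : DihedralGroup M) (hv : parity hM v = 1) : (1, v) ∈ π.range := by
      have e : π ((w * y) ^ 2) = (1, r 2) := by
        simp [hw, hy, pow_two, one_add_one_eq_two]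
      obtain ⟨j, rfl | rfl⟩ := eq_pow_of_parity_eq_one hM hv
      · exact ⟨((w * y) ^ 2) ^ j, by rw [map_pow, e, Prod.pow_mk, one_pow]⟩
      · exact ⟨w * ((w * y) ^ 2) ^ j, by
          rw [map_mul, map_pow, e, hw, Prod.pow_mk, Prod.mk_mul_mk, one_pow, one_mul]⟩
    have h3 (u : DihedralGroup N) (v : DihedralGroup M) (hu : parity hN u = 1)
        (hv : parity hM v = 1) : (u, v) ∈ π.range := by
      simpa using mul_mem (h1 u hu) (h2 v hv)
    rintro ⟨u, v⟩ huv
    have huv' : parity hN u * parity hM v = 1 := huv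
    have hc (c d : Multiplicative (ZMod 2)) (h : c * d = 1) : c = 1 ∧ d = 1 ∨
        c * Multiplicative.ofAdd 1 = 1 ∧ d * Multiplicative.ofAdd 1 = 1 := by
      revert c d; decide
    obtain ⟨hu, hv⟩ | ⟨hu, hv⟩ := hc _ _ huv'
    · exact h3 u v hu hv
    · have hm := h3 (u * sr 1) (v * sr 1) (by simpa using hu) (by simpa using hv)
      rw [← Prod.mk_mul_mk, ← hy] at hm
      exact (Subgroup.mul_mem_cancel_right _ (π.mem_range.mpr ⟨y, rfl⟩)).mp hm

end Dihedral

section Translations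

theorem mem_closure_pair_iff_zpow {H : Type*} [Group H] {z z' : H} (hc : Commute z z') {a : H} :
    a ∈ Subgroup.closure {z, z'} ↔ ∃ i j : ℤ, a = z ^ i * z' ^ j := by
  constructor
  · intro ha
    induction ha using Subgroup.closure_induction with
    | mem u hu =>
      obtain rfl | rfl := hu
      · exact ⟨1, 0, by simp⟩
      · exact ⟨0, 1, by simp⟩
    | one => exact ⟨0, 0, by simp⟩
    | mul u v _ _ hu hv =>
      obtain ⟨i, j, rfl⟩ := hu
      obtain ⟨i', j', rfl⟩ := hv
      refine ⟨i + i', j + j', ?_⟩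
      rw [(hc.zpow_zpow i' j).symm.mul_mul_mul_comm, zpow_add, zpow_add]
    | inv u _ hu =>
      obtain ⟨i, j, rfl⟩ := hu
      refine ⟨-i, -j, ?_⟩
      rw [mul_inv_rev, ← zpow_neg, ← zpow_neg, (hc.zpow_zpow _ _).eq]
  · rintro ⟨i, j, rfl⟩
    exact mul_mem (zpow_mem (Subgroup.subset_closure (by simp)) i)
      (zpow_mem (Subgroup.subset_closure (by simp)) j)

theorem card_closure_pair {H : Type*} [Group H] {z z' : H} (hc : Commute z z') {m : ℕ}
    (hm : 0 < m) (h1 : z ^ m * z' ^ m = 1) (h2 : z ^ (2 * m) = 1)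
    (h3 : ∀ i j : ℤ, z ^ i * z' ^ j = 1 → (2 * m : ℤ) ∣ i + j ∧ (2 * m : ℤ) ∣ i - j) :
    Nat.card (Subgroup.closure {z, z'}) = 2 * m * m := by
  have hm' : (m : ℤ) ≠ 0 := by omega
  let F : Fin (2 * m) × Fin m → H := fun p => z ^ (p.1 : ℤ) * z' ^ (p.2 : ℤ)
  have hF : Function.Injective F := by
    rintro ⟨⟨i, hi⟩, ⟨j, hj⟩⟩ ⟨⟨i', hi'⟩, ⟨j', hj'⟩⟩ h
    have e : z ^ ((i : ℤ) - i') * z' ^ ((j : ℤ) - j') = 1 := by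
      have h' : z ^ (i : ℤ) * z' ^ (j : ℤ) = z ^ (i' : ℤ) * z' ^ (j' : ℤ) := h
      calc z ^ ((i : ℤ) - i') * z' ^ ((j : ℤ) - j')
          = z ^ (-(i' : ℤ)) * (z ^ (i : ℤ) * z' ^ (j : ℤ)) * z' ^ (-(j' : ℤ)) := by group
        _ = 1 := by rw [h']; group
    obtain ⟨d1, d2⟩ := h3 _ _ e
    have d3 : (2 * m : ℤ) ∣ 2 * ((j : ℤ) - j') := by
      rw [show 2 * ((j : ℤ) - j') = ((i : ℤ) - i' + (j - j')) - (i - i' - (j - j')) by ring]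
      exact dvd_sub d1 d2
    have d4 : (m : ℤ) ∣ (j : ℤ) - j' := (mul_dvd_mul_iff_left two_ne_zero).mp d3
    have ej : (j : ℤ) - j' = 0 := Int.eq_zero_of_abs_lt_dvd d4 (by rw [abs_lt]; omega)
    rw [ej, sub_zero] at d2
    have ei : (i : ℤ) - i' = 0 := Int.eq_zero_of_abs_lt_dvd d2 (by rw [abs_lt]; omega)
    simp only [Prod.mk.injEq, Fin.mk.injEq]
    omega
  have hR : Set.range F = (Subgroup.closure {z, z'} : Set H) := by
    ext a
    rw [SetLike.mem_coe, mem_closure_pair_iff_zpow hc]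
    constructor
    · rintro ⟨p, rfl⟩
      exact ⟨_, _, rfl⟩
    · rintro ⟨i, j, rfl⟩
      have hz' : z' ^ (m : ℤ) = z ^ (-(m : ℤ)) := by
        rw [zpow_neg, zpow_natCast, zpow_natCast]
        exact eq_inv_of_mul_eq_one_right h1
      have hz : z ^ (2 * m : ℤ) = 1 := by exact_mod_cast h2
      have e1 : z' ^ j = z ^ (-(m : ℤ) * (j / m)) * z' ^ (j % m) := by
        conv_lhs => rw [← Int.mul_ediv_add_emod j m]
        rw [zpow_add, zpow_mul, hz', ← zpow_mul]
      set l : ℤ := i + -(m : ℤ) * (j / m) with hl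
      have e2 : z ^ l = z ^ (l % (2 * m)) := by
        conv_lhs => rw [← Int.mul_ediv_add_emod l (2 * m)]
        rw [zpow_add, zpow_mul, hz, one_zpow, one_mul]
      have n1 := Int.emod_nonneg l (b := 2 * m) (by omega)
      have n2 := Int.emod_lt_of_pos l (b := 2 * m) (by omega)
      have n3 := Int.emod_nonneg j hm'
      have n4 := Int.emod_lt_of_pos j (b := m) (by omega)
      refine ⟨(⟨(l % (2 * m)).toNat, by omega⟩, ⟨(j % m).toNat, by omega⟩), ?_⟩
      simp only [F]
      rw [Int.toNat_of_nonneg n1, Int.toNat_of_nonneg n3, ← e2, e1, ← mul_assoc, ← zpow_add]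
  have : Nat.card (Subgroup.closure {z, z'}) = Nat.card (Set.range F) := by rw [hR]; rfl
  rw [this, Nat.card_range_of_injective hF]
  simp

end Translations

section Models

variable {m : ℕ}

/-- The reflection `(u, v) ↦ (1 - v, 1 - u)` of the discrete torus. -/
def torusLeft (m : ℕ) : Equiv.Perm (ZMod m × ZMod m) where
  toFun p := (1 - p.2, 1 - p.1)
  invFun p := (1 - p.2, 1 - p.1)
  left_inv p := by simp
  right_inv p := by simp

/-- The reflection `(u, v) ↦ (u, -v)` of the discrete torus. -/
def torusMid (m : ℕ) : Equiv.Perm (ZMod m × ZMod m) where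
  toFun p := (p.1, -p.2)
  invFun p := (p.1, -p.2)
  left_inv p := by simp
  right_inv p := by simp

/-- The reflection `(u, v) ↦ (v, u)` of the discrete torus. -/
def torusRight (m : ℕ) : Equiv.Perm (ZMod m × ZMod m) where
  toFun p := (p.2, p.1)
  invFun p := (p.2, p.1)
  left_inv _ := rfl
  right_inv _ := rfl

/-- The translation of the discrete torus by a vector. -/
def torusTranslation (c : ZMod m × ZMod m) : Equiv.Perm (ZMod m × ZMod m) := Equiv.addRight c

theorem torusTranslation_zpow (c : ZMod m × ZMod m) (i : ℤ) :
    torusTranslation c ^ i = torusTranslation (i • c) := Equiv.zsmul_addRight c i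

theorem torus_rotation_left_sq (m : ℕ) (p : ZMod m × ZMod m) :
    ((torusLeft m * torusMid m) ^ 2) p = (2 - p.1, -p.2) := by
  ext <;> simp [pow_two, torusLeft, torusMid] ; ring

theorem torus_rotation_left_pow_four (m : ℕ) : (torusLeft m * torusMid m) ^ 4 = 1 := by
  ext p <;> simp [pow_mul _ 2 2, show 4 = 2 * 2 from rfl, pow_two ((_ : Equiv.Perm _) ^ 2), torus_rotation_left_sq]

theorem torus_rotation_right_sq (m : ℕ) (p : ZMod m × ZMod m) :
    ((torusMid m * torusRight m) ^ 2) p = (-p.1, -p.2) := by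
  ext <;> simp [pow_two, torusRight, torusMid]

theorem torus_rotation_right_pow_four (m : ℕ) : (torusMid m * torusRight m) ^ 4 = 1 := by
  ext p <;> simp [pow_mul _ 2 2, show 4 = 2 * 2 from rfl, pow_two ((_ : Equiv.Perm _) ^ 2), torus_rotation_right_sq]

theorem stringRel_torus (m : ℕ) : StringRel (torusLeft m) (torusMid m) (torusRight m) where
  sq_left := by ext p <;> simp [torusLeft]
  sq_mid := by ext p <;> simp [torusMid]
  sq_right := by ext p <;> simp [torusRight]
  comm := by ext p <;> simp [torusLeft, torusRight]
  comm_left := by rw [torus_rotation_left_pow_four, one_mul, mul_one]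
  comm_right := by rw [torus_rotation_right_pow_four, one_mul, mul_one]

theorem transSq_torus (m : ℕ) :
    transSq (torusLeft m) (torusMid m) (torusRight m) = torusTranslation (2, 2) := by
  ext p <;> simp [transSq, pow_two, torusLeft, torusMid, torusRight, torusTranslation] <;> ring

theorem mid_conj_transSq_torus (m : ℕ) :
    torusMid m * transSq (torusLeft m) (torusMid m) (torusRight m) * torusMid m =
      torusTranslation (2, -2) := by
  rw [transSq_torus]
  ext p <;> simp [torusMid, torusTranslation] ; ring

end Models

section Kernel

variable {H : Type*} [Group H] {x y w : H}

theorem closure_normal_of_involutions {T S : Set H} (hT : Subgroup.closure T = ⊤)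
    (hT2 : ∀ a ∈ T, a * a = 1) (hS : ∀ a ∈ T, ∀ s ∈ S, a * s * a ∈ Subgroup.closure S) :
    (Subgroup.closure S).Normal := by
  rw [← Subgroup.normalizer_eq_top_iff, eq_top_iff, ← hT, Subgroup.closure_le]
  intro a ha
  have hinv : a⁻¹ = a := inv_eq_of_mul_eq_one_left (hT2 a ha)
  have hconj (b : H) (hb : b ∈ Subgroup.closure S) : a * b * a⁻¹ ∈ Subgroup.closure S := by
    have hle : Subgroup.closure S ≤ (Subgroup.closure S).comap (MulAut.conj a).toMonoidHom := by
      rw [Subgroup.closure_le]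
      intro s hs
      simpa [hinv] using hS a ha s hs
    simpa using hle hb
  rw [SetLike.mem_coe, Subgroup.mem_normalizer_iff]
  refine fun b => ⟨hconj b, fun hb => ?_⟩
  have := hconj _ hb
  rwa [hinv, show a * (a * b * a) * a = a * a * b * (a * a) by simp only [mul_assoc], hT2 a ha,
    one_mul, mul_one] at this

namespace StringRel

theorem sq_of_mem (h : StringRel x y w) : ∀ a ∈ ({x, y, w} : Set H), a * a = 1 := by
  rintro a (rfl | rfl | rfl)
  exacts [h.sq_left, h.sq_mid, h.sq_right]

theorem mid_conj_mid (h : StringRel x y w) (a : H) : y * (y * a * y) * y = a := by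
  simp only [mul_assoc, h.mid_cancel, h.sq_mid, mul_one]

theorem normal_closure_transSq (h : StringRel x y w) (hgen : Subgroup.closure {x, y, w} = ⊤) :
    (Subgroup.closure {transSq x y w, y * transSq x y w * y}).Normal := by
  refine closure_normal_of_involutions hgen h.sq_of_mem ?_
  have m₁ : transSq x y w ∈ Subgroup.closure {transSq x y w, y * transSq x y w * y} :=
    Subgroup.subset_closure (by simp)
  have m₂ : y * transSq x y w * y ∈ Subgroup.closure {transSq x y w, y * transSq x y w * y} :=
    Subgroup.subset_closure (by simp)
  rintro a (rfl | rfl | rfl) s (rfl | rfl)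
  · rw [h.left_conj_transSq]; exact inv_mem m₁
  · rw [h.left_conj_mid_transSq]; exact m₂
  · exact m₂
  · rw [h.mid_conj_mid]; exact m₁
  · rw [h.right_conj_transSq]; exact m₁
  · rw [h.right_conj_mid_transSq]; exact inv_mem m₂

theorem normal_closure_right (h : StringRel x y w) (hgen : Subgroup.closure {x, y, w} = ⊤) :
    (Subgroup.closure {transSq x y w, y * transSq x y w * y, w, y * w * y}).Normal := by
  refine closure_normal_of_involutions hgen h.sq_of_mem ?_
  set E := Subgroup.closure {transSq x y w, y * transSq x y w * y, w, y * w * y}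
  have m₁ : transSq x y w ∈ E := Subgroup.subset_closure (by simp)
  have m₂ : y * transSq x y w * y ∈ E := Subgroup.subset_closure (by simp)
  have m₃ : w ∈ E := Subgroup.subset_closure (by simp)
  have m₄ : y * w * y ∈ E := Subgroup.subset_closure (by simp)
  rintro a (rfl | rfl | ha) s hs
  · obtain rfl | rfl | rfl | rfl := hs
    · rw [h.left_conj_transSq]; exact inv_mem m₁
    · rw [h.left_conj_mid_transSq]; exact m₂
    · rw [h.comm, mul_assoc, h.sq_left, mul_one]; exact m₃
    · have e : a * (y * w * y) * a = transSq a y w * (y * w * y) := by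
        simp only [transSq, pow_two, mul_assoc, h.mid_cancel, h.right_cancel, h.sq_mid, mul_one]
      rw [e]
      exact mul_mem m₁ m₄
  · obtain rfl | rfl | rfl | rfl := hs
    · exact m₂
    · rw [h.mid_conj_mid]; exact m₁
    · exact m₄
    · rw [h.mid_conj_mid]; exact m₃
  · rw [Set.mem_singleton_iff.mp ha]
    exact mul_mem (mul_mem m₃ (Subgroup.subset_closure hs)) m₃

theorem mem_closure_transSq_of_retractions (h : StringRel x y w)
    (hgen : Subgroup.closure {x, y, w} = ⊤) {φ ψ : H →* H} (φx : φ x = x) (φy : φ y = y)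
    (φw : φ w = 1) (ψx : ψ x = 1) (ψy : ψ y = y) (ψw : ψ w = w) {a : H} (φa : φ a = 1)
    (ψa : ψ a = 1) : a ∈ Subgroup.closure {transSq x y w, y * transSq x y w * y} := by
  have hN := h.normal_closure_transSq hgen
  have hE := h.normal_closure_right hgen
  set Z := Subgroup.closure {transSq x y w, y * transSq x y w * y}
  set E := Subgroup.closure {transSq x y w, y * transSq x y w * y, w, y * w * y}
  have haE : a ∈ E := by
    have e : (QuotientGroup.mk' E).comp φ = QuotientGroup.mk' E := by
      refine MonoidHom.eq_of_eqOn_dense hgen ?_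
      rintro b (rfl | rfl | rfl)
      · simp [φx]
      · simp [φy]
      · rw [MonoidHom.comp_apply, φw, map_one, eq_comm, QuotientGroup.mk'_apply,
          QuotientGroup.eq_one_iff]
        exact Subgroup.subset_closure (by simp)
    rw [← QuotientGroup.eq_one_iff, ← QuotientGroup.mk'_apply, ← e, MonoidHom.comp_apply, φa,
      map_one]
  have ψz : ψ (transSq x y w) = 1 := by
    simp only [transSq, pow_two, map_mul, ψx, ψy, ψw, mul_assoc, one_mul, h.mid_cancel,
      h.right_cancel, h.sq_mid]
  have e : Set.EqOn ((QuotientGroup.mk' Z).comp ψ) (QuotientGroup.mk' Z) E := by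
    refine MonoidHom.eqOn_closure ?_
    rintro b (rfl | rfl | rfl | rfl)
    · rw [MonoidHom.comp_apply, ψz, map_one, eq_comm, QuotientGroup.mk'_apply,
        QuotientGroup.eq_one_iff]
      exact Subgroup.subset_closure (by simp)
    · rw [MonoidHom.comp_apply, map_mul ψ, map_mul ψ, ψz, ψy, mul_one, h.sq_mid, map_one, eq_comm,
        QuotientGroup.mk'_apply, QuotientGroup.eq_one_iff]
      exact Subgroup.subset_closure (by simp)
    · simp [ψw]
    · simp [ψw, ψy]
  rw [← QuotientGroup.eq_one_iff, ← QuotientGroup.mk'_apply, ← e haE, MonoidHom.comp_apply, ψa,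
    map_one]

end StringRel

end Kernel

section Presentation

variable {s t n l1 l2 : ℕ}

theorem exists_hom {H : Type*} [Group H] {x y w : H} (h : StringRel x y w)
    (h01 : (x * y) ^ (2 ^ s * l1) = 1) (h12 : (y * w) ^ (2 ^ t * l2) = 1)
    (hc : (transSq x y w * (y * transSq x y w * y)) ^ (2 ^ ((n - s - t - 2) / 2)) = 1) :
    ∃ φ : PresentedGroup (rels s t n l1 l2) →* H,
      φ (g s t n l1 l2 0) = x ∧ φ (g s t n l1 l2 1) = y ∧ φ (g s t n l1 l2 2) = w := by
  have hrel : ∀ a ∈ rels s t n l1 l2, FreeGroup.lift ![x, y, w] a = 1 := by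
    rintro a (rfl | rfl | rfl | rfl | rfl | rfl | rfl | rfl | rfl)
    · simpa [r0, pow_two] using h.sq_left
    · simpa [r1, pow_two] using h.sq_mid
    · simpa [r2, pow_two] using h.sq_right
    · simpa [r0, r1] using h01
    · simpa [r1, r2] using h12
    · simp only [r0, r2, map_mul, map_pow, FreeGroup.lift_apply_of]
      change (x * w) ^ 2 = 1
      rw [pow_two, mul_assoc, ← mul_assoc w, ← h.comm, mul_assoc, h.left_cancel, h.sq_right]
    · have := h.comm_left
      simp only [pc, r0, r1, r2, map_mul, map_inv, map_pow, FreeGroup.lift_apply_of]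
      change ((x * y) ^ 4)⁻¹ * w⁻¹ * (x * y) ^ 4 * w = 1
      rw [mul_assoc, this]
      group
    · have := h.comm_right
      simp only [pc, r0, r1, r2, map_mul, map_inv, map_pow, FreeGroup.lift_apply_of]
      change x⁻¹ * ((y * w) ^ 4)⁻¹ * x * (y * w) ^ 4 = 1
      rw [mul_assoc, this]
      group
    · simp only [pc, r0, r1, r2, map_mul, map_inv, map_pow, FreeGroup.lift_apply_of]
      rw [← h.commutator_eq] at hc
      exact hc
  exact ⟨PresentedGroup.toGroup hrel, PresentedGroup.toGroup.of hrel,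
    PresentedGroup.toGroup.of hrel, PresentedGroup.toGroup.of hrel⟩

theorem mk_rel {a : FreeGroup (Fin 3)} (ha : a ∈ rels s t n l1 l2) :
    PresentedGroup.mk (rels s t n l1 l2) a = 1 :=
  PresentedGroup.one_of_mem ha

theorem stringRel_g :
    StringRel (g s t n l1 l2 0) (g s t n l1 l2 1) (g s t n l1 l2 2) := by
  have h0 : g s t n l1 l2 0 * g s t n l1 l2 0 = 1 := by
    rw [← pow_two]; exact mk_rel (a := r0 ^ 2) (by simp [rels])
  have h1 : g s t n l1 l2 1 * g s t n l1 l2 1 = 1 := by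
    rw [← pow_two]; exact mk_rel (a := r1 ^ 2) (by simp [rels])
  have h2 : g s t n l1 l2 2 * g s t n l1 l2 2 = 1 := by
    rw [← pow_two]; exact mk_rel (a := r2 ^ 2) (by simp [rels])
  have h02 : (g s t n l1 l2 0 * g s t n l1 l2 2) ^ 2 = 1 :=
    mk_rel (a := (r0 * r2) ^ 2) (by simp [rels])
  have ha : ((g s t n l1 l2 0 * g s t n l1 l2 1) ^ 4)⁻¹ * (g s t n l1 l2 2)⁻¹ *
      (g s t n l1 l2 0 * g s t n l1 l2 1) ^ 4 * g s t n l1 l2 2 = 1 :=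
    mk_rel (a := pc ((r0 * r1) ^ 4) r2) (by simp [rels])
  have hb : (g s t n l1 l2 0)⁻¹ * ((g s t n l1 l2 1 * g s t n l1 l2 2) ^ 4)⁻¹ *
      g s t n l1 l2 0 * (g s t n l1 l2 1 * g s t n l1 l2 2) ^ 4 = 1 :=
    mk_rel (a := pc r0 ((r1 * r2) ^ 4)) (by simp [rels])
  refine ⟨h0, h1, h2, ?_, ?_, ?_⟩
  · rw [pow_two, mul_eq_one_iff_eq_inv, mul_inv_rev, inv_eq_of_mul_eq_one_left h0,
      inv_eq_of_mul_eq_one_left h2] at h02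
    exact h02
  · rwa [mul_assoc, ← mul_inv_rev, inv_mul_eq_one, eq_comm] at ha
  · rwa [mul_assoc, ← mul_inv_rev, inv_mul_eq_one, eq_comm] at hb

theorem pow_left_g : (g s t n l1 l2 0 * g s t n l1 l2 1) ^ (2 ^ s * l1) = 1 :=
  mk_rel (a := (r0 * r1) ^ (2 ^ s * l1)) (by simp [rels])

theorem pow_right_g : (g s t n l1 l2 1 * g s t n l1 l2 2) ^ (2 ^ t * l2) = 1 :=
  mk_rel (a := (r1 * r2) ^ (2 ^ t * l2)) (by simp [rels])

theorem pow_transSq_g :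
    (transSq (g s t n l1 l2 0) (g s t n l1 l2 1) (g s t n l1 l2 2) *
      (g s t n l1 l2 1 * transSq (g s t n l1 l2 0) (g s t n l1 l2 1) (g s t n l1 l2 2) *
        g s t n l1 l2 1)) ^ (2 ^ ((n - s - t - 2) / 2)) = 1 := by
  rw [← stringRel_g.commutator_eq]
  exact mk_rel (a := (pc ((r0 * r1) ^ 2) ((r1 * r2) ^ 2)) ^ (2 ^ ((n - s - t - 2) / 2)))
    (by simp [rels])

theorem closure_g_eq_top :
    Subgroup.closure {g s t n l1 l2 0, g s t n l1 l2 1, g s t n l1 l2 2} = ⊤ := by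
  rw [eq_top_iff, ← PresentedGroup.closure_range_of, Subgroup.closure_le]
  rintro _ ⟨i, rfl⟩
  refine Subgroup.subset_closure ?_
  fin_cases i
  exacts [Or.inl rfl, Or.inr (Or.inl rfl), Or.inr (Or.inr rfl)]

end Presentation

section Degenerate

variable {H : Type*} [Group H] {x y w : H}

theorem pow_eq_one_of_involution {a : H} (ha : a * a = 1) {N : ℕ} (hN : 2 ∣ N) : a ^ N = 1 := by
  obtain ⟨j, rfl⟩ := hN
  rw [pow_mul, pow_two, ha, one_pow]

theorem stringRel_one_right (hx : x * x = 1) (hy : y * y = 1) : StringRel x y 1 where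
  sq_left := hx
  sq_mid := hy
  sq_right := one_mul 1
  comm := by simp
  comm_left := by simp
  comm_right := by simp [pow_eq_one_of_involution hy (N := 4) (by decide)]

theorem stringRel_one_mid (hx : x * x = 1) (hw : w * w = 1) (hxw : x * w = w * x) :
    StringRel x 1 w where
  sq_left := hx
  sq_mid := one_mul 1
  sq_right := hw
  comm := hxw
  comm_left := by simp [pow_eq_one_of_involution hx (N := 4) (by decide)]
  comm_right := by simp [pow_eq_one_of_involution hw (N := 4) (by decide)]

variable {s t n l1 l2 : ℕ}

theorem exists_hom_one_right (ht : 2 ∣ 2 ^ t * l2) (hx : x * x = 1) (hy : y * y = 1)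
    (hxy : (x * y) ^ (2 ^ s * l1) = 1) :
    ∃ φ : PresentedGroup (rels s t n l1 l2) →* H,
      φ (g s t n l1 l2 0) = x ∧ φ (g s t n l1 l2 1) = y ∧ φ (g s t n l1 l2 2) = 1 := by
  refine exists_hom (stringRel_one_right hx hy) hxy ?_ ?_
  · rw [mul_one, pow_eq_one_of_involution hy ht]
  · simp [transSq, mul_assoc, hy, hx, pow_two]

theorem exists_hom_one_left (hs : 2 ∣ 2 ^ s * l1) (hy : y * y = 1) (hw : w * w = 1)
    (hyw : (y * w) ^ (2 ^ t * l2) = 1) :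
    ∃ φ : PresentedGroup (rels s t n l1 l2) →* H,
      φ (g s t n l1 l2 0) = 1 ∧ φ (g s t n l1 l2 1) = y ∧ φ (g s t n l1 l2 2) = w := by
  have h := (stringRel_one_right hw hy).reverse
  refine exists_hom h ?_ hyw ?_
  · rw [one_mul, pow_eq_one_of_involution hy hs]
  · simp only [transSq, pow_two, mul_assoc, one_mul, h.mid_cancel, h.right_cancel, h.sq_mid,
      one_pow]

theorem exists_hom_one_mid (hs : 2 ∣ 2 ^ s * l1) (ht : 2 ∣ 2 ^ t * l2) (hx : x * x = 1)
    (hw : w * w = 1) (hxw : x * w = w * x) :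
    ∃ φ : PresentedGroup (rels s t n l1 l2) →* H,
      φ (g s t n l1 l2 0) = x ∧ φ (g s t n l1 l2 1) = 1 ∧ φ (g s t n l1 l2 2) = w := by
  have h := stringRel_one_mid hx hw hxw
  refine exists_hom h ?_ ?_ ?_
  · rw [mul_one, pow_eq_one_of_involution hx hs]
  · rw [one_mul, pow_eq_one_of_involution hw ht]
  · have e : transSq x 1 w = 1 := by
      rw [transSq, mul_one, mul_one, pow_two, mul_assoc, ← mul_assoc w, ← hxw, mul_assoc,
        h.left_cancel, hw]
    simp [e]

/-- The presented group retracts onto the subgroup generated by any subset of its generators. -/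
theorem exists_retraction (hs : 2 ∣ 2 ^ s * l1) (ht : 2 ∣ 2 ^ t * l2) (I : Set (Fin 3)) :
    ∃ φ : PresentedGroup (rels s t n l1 l2) →* PresentedGroup (rels s t n l1 l2),
      ∀ i, (i ∈ I → φ (g s t n l1 l2 i) = g s t n l1 l2 i) ∧
        (i ∉ I → φ (g s t n l1 l2 i) = 1) := by
  classical
  have h := stringRel_g (s := s) (t := t) (n := n) (l1 := l1) (l2 := l2)
  let f : Fin 3 → PresentedGroup (rels s t n l1 l2) :=
    fun i => if i ∈ I then g s t n l1 l2 i else 1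
  suffices hφ : ∃ φ : PresentedGroup (rels s t n l1 l2) →* PresentedGroup (rels s t n l1 l2),
      φ (g s t n l1 l2 0) = f 0 ∧ φ (g s t n l1 l2 1) = f 1 ∧ φ (g s t n l1 l2 2) = f 2 by
    obtain ⟨φ, h0, h1, h2⟩ := hφ
    have hf (i) : φ (g s t n l1 l2 i) = f i := by fin_cases i <;> assumption
    exact ⟨φ, fun i => ⟨fun hi => by rw [hf]; exact if_pos hi,
      fun hi => by rw [hf]; exact if_neg hi⟩⟩
  have hf0 : f 0 * f 0 = 1 := by simp only [f]; split_ifs <;> simp [h.sq_left]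
  have hf1 : f 1 * f 1 = 1 := by simp only [f]; split_ifs <;> simp [h.sq_mid]
  have hf2 : f 2 * f 2 = 1 := by simp only [f]; split_ifs <;> simp [h.sq_right]
  by_cases i2 : 2 ∈ I
  · by_cases i0 : 0 ∈ I
    · by_cases i1 : 1 ∈ I
      · exact ⟨MonoidHom.id _, by simp [f, i0, i1, i2]⟩
      · have e : f 1 = 1 := if_neg i1
        rw [e]
        refine exists_hom_one_mid hs ht hf0 hf2 ?_
        simp only [f, if_pos i0, if_pos i2]
        exact h.comm
    · have e : f 0 = 1 := if_neg i0
      rw [e]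
      refine exists_hom_one_left hs hf1 hf2 ?_
      simp only [f, if_pos i2]
      split_ifs
      · exact pow_right_g
      · rw [one_mul, pow_eq_one_of_involution h.sq_right ht]
  · have e : f 2 = 1 := if_neg i2
    rw [e]
    refine exists_hom_one_right ht hf0 hf1 ?_
    by_cases i0 : 0 ∈ I <;> by_cases i1 : 1 ∈ I <;> simp only [f, i0, i1, if_true, if_false]
    · exact pow_left_g
    · rw [mul_one, pow_eq_one_of_involution h.sq_left hs]
    · rw [one_mul, pow_eq_one_of_involution h.sq_mid hs]
    · rw [one_mul, one_pow]

end Degenerate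

/-- Compatible retractions onto the subgroups generated by subsets of a triple yield the
intersection property. -/
theorem interProp_of_retractions {H : Type*} [Group H] {ρ : Fin 3 → H}
    (h : ∀ I : Set (Fin 3), ∃ φ : H →* H, ∀ i, (i ∈ I → φ (ρ i) = ρ i) ∧ (i ∉ I → φ (ρ i) = 1)) :
    InterProp ρ := by
  intro I J
  apply le_antisymm
  · rintro a ⟨haI, haJ⟩
    obtain ⟨φ, hφ⟩ := h I
    have hfix : Set.EqOn φ (MonoidHom.id H) (Subgroup.closure (ρ '' I)) := by
      refine MonoidHom.eqOn_closure ?_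
      rintro _ ⟨i, hi, rfl⟩
      exact (hφ i).1 hi
    have hle : Subgroup.closure (ρ '' J) ≤ (Subgroup.closure (ρ '' (I ∩ J))).comap φ := by
      rw [Subgroup.closure_le]
      rintro _ ⟨j, hj, rfl⟩
      rw [SetLike.mem_coe, Subgroup.mem_comap]
      by_cases hjI : j ∈ I
      · rw [(hφ j).1 hjI]
        exact Subgroup.subset_closure ⟨j, ⟨hjI, hj⟩, rfl⟩
      · rw [(hφ j).2 hjI]
        exact one_mem _
    have ha : φ a = a := hfix haI
    rw [← ha]
    exact hle haJ
  · exact le_inf (Subgroup.closure_mono (Set.image_mono Set.inter_subset_left))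
      (Subgroup.closure_mono (Set.image_mono Set.inter_subset_right))

section Structure

open DihedralGroup

variable {s t n l1 l2 : ℕ}

theorem exists_hom_dihedral_left (ht : 2 ∣ 2 ^ t * l2) :
    ∃ π : PresentedGroup (rels s t n l1 l2) →* DihedralGroup (2 ^ s * l1),
      π (g s t n l1 l2 0) = sr 0 ∧ π (g s t n l1 l2 1) = sr 1 ∧ π (g s t n l1 l2 2) = 1 :=
  exists_hom_one_right ht (sr_mul_self 0) (sr_mul_self 1) (by simp)

theorem exists_hom_dihedral_right (hs : 2 ∣ 2 ^ s * l1) :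
    ∃ π : PresentedGroup (rels s t n l1 l2) →* DihedralGroup (2 ^ t * l2),
      π (g s t n l1 l2 0) = 1 ∧ π (g s t n l1 l2 1) = sr 1 ∧ π (g s t n l1 l2 2) = sr 0 :=
  exists_hom_one_left hs (sr_mul_self 1) (sr_mul_self 0) (by simp)

theorem exists_hom_torus (hs : 4 ∣ 2 ^ s * l1) (ht : 4 ∣ 2 ^ t * l2) {m : ℕ}
    (hm : m = 2 ^ ((n - s - t - 2) / 2)) :
    ∃ τ : PresentedGroup (rels s t n l1 l2) →* Equiv.Perm (ZMod (4 * m) × ZMod (4 * m)),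
      τ (g s t n l1 l2 0) = torusLeft _ ∧ τ (g s t n l1 l2 1) = torusMid _ ∧
        τ (g s t n l1 l2 2) = torusRight _ := by
  refine exists_hom (stringRel_torus (4 * m)) ?_ ?_ ?_
  · obtain ⟨j, hj⟩ := hs
    rw [hj, pow_mul, torus_rotation_left_pow_four, one_pow]
  · obtain ⟨j, hj⟩ := ht
    rw [hj, pow_mul, torus_rotation_right_pow_four, one_pow]
  · have h0 : (m : ZMod (4 * m)) * 4 = 0 := by
      have := ZMod.natCast_self (4 * m)
      push_cast at this
      linear_combination this
    rw [← hm, mid_conj_transSq_torus, transSq_torus, torusTranslation, torusTranslation,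
      ← Equiv.addRight_add, Equiv.nsmul_addRight]
    have e : m • ((2, -2) + (2, 2) : ZMod (4 * m) × ZMod (4 * m)) = 0 := by
      ext
      · simpa [show (2 : ZMod (4 * m)) + 2 = 4 by norm_num] using h0
      · simp
    rw [e, Equiv.addRight_zero]

theorem transSq_zpow_dvd (hs : 4 ∣ 2 ^ s * l1) (ht : 4 ∣ 2 ^ t * l2) (i j : ℤ)
    (h : transSq (g s t n l1 l2 0) (g s t n l1 l2 1) (g s t n l1 l2 2) ^ i *
      (g s t n l1 l2 1 * transSq (g s t n l1 l2 0) (g s t n l1 l2 1) (g s t n l1 l2 2) *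
        g s t n l1 l2 1) ^ j = 1) :
    (2 * (2 ^ ((n - s - t - 2) / 2) : ℕ) : ℤ) ∣ i + j ∧
      (2 * (2 ^ ((n - s - t - 2) / 2) : ℕ) : ℤ) ∣ i - j := by
  generalize hm : 2 ^ ((n - s - t - 2) / 2) = m
  obtain ⟨τ, τ0, τ1, τ2⟩ := exists_hom_torus (n := n) hs ht hm.symm
  have τz : τ (transSq (g s t n l1 l2 0) (g s t n l1 l2 1) (g s t n l1 l2 2)) =
      transSq (torusLeft _) (torusMid _) (torusRight _) := by
    simp only [transSq, map_mul, map_pow, τ0, τ1, τ2]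
  have e := congrArg τ h
  rw [map_mul, map_zpow, map_zpow, map_mul, map_mul, τz, τ1, mid_conj_transSq_torus, transSq_torus,
    torusTranslation_zpow, torusTranslation_zpow, map_one] at e
  have e0 := congrArg (fun f => f (0, 0)) e
  simp only [torusTranslation, Equiv.Perm.coe_mul, Function.comp_apply, Equiv.coe_addRight,
    Equiv.Perm.coe_one, id_eq, Prod.smul_mk, Prod.mk_add_mk, zero_add, Prod.mk.injEq,
    zsmul_eq_mul] at e0
  have key (c : ℤ) (hc : ((2 * c : ℤ) : ZMod (4 * m)) = 0) : (2 * m : ℤ) ∣ c := by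
    rw [ZMod.intCast_zmod_eq_zero_iff_dvd] at hc
    push_cast at hc
    rw [show (4 * m : ℤ) = 2 * (2 * m) by ring] at hc
    exact (mul_dvd_mul_iff_left two_ne_zero).mp hc
  constructor
  · apply key
    push_cast
    linear_combination e0.1
  · apply key
    push_cast
    linear_combination e0.2

theorem card_closure_transSq (hs : 4 ∣ 2 ^ s * l1) (ht : 4 ∣ 2 ^ t * l2) :
    Nat.card (Subgroup.closure
      {transSq (g s t n l1 l2 0) (g s t n l1 l2 1) (g s t n l1 l2 2),
        g s t n l1 l2 1 * transSq (g s t n l1 l2 0) (g s t n l1 l2 1) (g s t n l1 l2 2) *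
          g s t n l1 l2 1}) =
      2 * 2 ^ ((n - s - t - 2) / 2) * 2 ^ ((n - s - t - 2) / 2) := by
  have h := stringRel_g (s := s) (t := t) (n := n) (l1 := l1) (l2 := l2)
  have hp := pow_transSq_g (s := s) (t := t) (n := n) (l1 := l1) (l2 := l2)
  have h1 := hp
  rw [h.commute_transSq.mul_pow] at h1
  refine card_closure_pair h.commute_transSq (by positivity) h1 ?_ (transSq_zpow_dvd hs ht)
  set m := 2 ^ ((n - s - t - 2) / 2)
  have c : Commute (g s t n l1 l2 0)
      (g s t n l1 l2 1 * transSq (g s t n l1 l2 0) (g s t n l1 l2 1) (g s t n l1 l2 2) *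
        g s t n l1 l2 1) := StringRel.commute_of_conj h.sq_left h.left_conj_mid_transSq
  have e := (c.pow_right m).eq
  rw [eq_inv_of_mul_eq_one_right h1, ← mul_inv_eq_iff_eq_mul, ← inv_pow, ← conj_pow,
    h.inv_left, ← h.left_conj_transSq] at e
  rw [← mul_assoc, ← mul_assoc, h.sq_left, one_mul, mul_assoc, h.sq_left, mul_one,
    h.left_conj_transSq, inv_pow, eq_inv_iff_mul_eq_one] at e
  rw [two_mul, pow_add, e]

end Structure

section Order

open DihedralGroup

variable {s t n l1 l2 : ℕ}

theorem orderOf_eq_two_of_hom {H K : Type*} [Group H] [Group K] (π : H →* K) {a : H}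
    (ha : a * a = 1) (hπ : π a ≠ 1) : orderOf a = 2 :=
  orderOf_eq_prime (by rw [pow_two, ha]) fun h => hπ (by rw [h, map_one])

theorem sr_ne_one {N : ℕ} (i : ZMod N) : (sr i : DihedralGroup N) ≠ 1 := by
  simp [one_def, -r_zero]

/-- The product of the two dihedral quotients has kernel generated by the squared translations. -/
theorem ker_prod_eq_closure (hs : 2 ∣ 2 ^ s * l1) (ht : 2 ∣ 2 ^ t * l2)
    {π₁ : PresentedGroup (rels s t n l1 l2) →* DihedralGroup (2 ^ s * l1)}
    {π₂ : PresentedGroup (rels s t n l1 l2) →* DihedralGroup (2 ^ t * l2)}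
    (h10 : π₁ (g s t n l1 l2 0) = sr 0) (h11 : π₁ (g s t n l1 l2 1) = sr 1)
    (h12 : π₁ (g s t n l1 l2 2) = 1) (h20 : π₂ (g s t n l1 l2 0) = 1)
    (h21 : π₂ (g s t n l1 l2 1) = sr 1) (h22 : π₂ (g s t n l1 l2 2) = sr 0) :
    (π₁.prod π₂).ker = Subgroup.closure
      {transSq (g s t n l1 l2 0) (g s t n l1 l2 1) (g s t n l1 l2 2),
        g s t n l1 l2 1 * transSq (g s t n l1 l2 0) (g s t n l1 l2 1) (g s t n l1 l2 2) *
          g s t n l1 l2 1} := by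
  have h := stringRel_g (s := s) (t := t) (n := n) (l1 := l1) (l2 := l2)
  have hgen := closure_g_eq_top (s := s) (t := t) (n := n) (l1 := l1) (l2 := l2)
  apply le_antisymm
  · intro a ha
    obtain ⟨ha₁, ha₂⟩ := Prod.mk_eq_one.mp (show (π₁ a, π₂ a) = 1 from ha)
    obtain ⟨φ, φ0, φ1, φ2⟩ := exists_hom_one_right (n := n) ht h.sq_left h.sq_mid pow_left_g
    obtain ⟨ψ, ψ0, ψ1, ψ2⟩ := exists_hom_one_left (n := n) hs h.sq_mid h.sq_right pow_right_g
    have e₁ : π₁.comp φ = π₁ := by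
      refine MonoidHom.eq_of_eqOn_dense hgen ?_
      rintro b (rfl | rfl | rfl) <;> simp [φ0, φ1, φ2, h12]
    have e₂ : π₂.comp ψ = π₂ := by
      refine MonoidHom.eq_of_eqOn_dense hgen ?_
      rintro b (rfl | rfl | rfl) <;> simp [ψ0, ψ1, ψ2, h20]
    have mφ : φ a ∈ Subgroup.closure {g s t n l1 l2 0, g s t n l1 l2 1} := by
      have hle : (⊤ : Subgroup _) ≤
          (Subgroup.closure {g s t n l1 l2 0, g s t n l1 l2 1}).comap φ := by
        rw [← hgen, Subgroup.closure_le]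
        rintro b (rfl | rfl | rfl)
        · exact Subgroup.subset_closure (by simp [φ0])
        · exact Subgroup.subset_closure (by simp [φ1])
        · simp [φ2]
      exact hle (Subgroup.mem_top a)
    have mψ : ψ a ∈ Subgroup.closure {g s t n l1 l2 2, g s t n l1 l2 1} := by
      have hle : (⊤ : Subgroup _) ≤
          (Subgroup.closure {g s t n l1 l2 2, g s t n l1 l2 1}).comap ψ := by
        rw [← hgen, Subgroup.closure_le]
        rintro b (rfl | rfl | rfl)
        · simp [ψ0]
        · exact Subgroup.subset_closure (by simp [ψ1])
        · exact Subgroup.subset_closure (by simp [ψ2])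
      exact hle (Subgroup.mem_top a)
    have hp : (g s t n l1 l2 2 * g s t n l1 l2 1) ^ (2 ^ t * l2) = 1 := by
      rw [← inv_inj, ← inv_pow, mul_inv_rev, h.inv_mid, h.inv_right, pow_right_g, inv_one]
    have φa : φ a = 1 := eq_one_of_mem_closure_involutions h.sq_left h.sq_mid pow_left_g π₁ h10 h11
      mφ (by rw [← MonoidHom.comp_apply, e₁, ha₁])
    have ψa : ψ a = 1 := eq_one_of_mem_closure_involutions h.sq_right h.sq_mid hp π₂ h22 h21
      mψ (by rw [← MonoidHom.comp_apply, e₂, ha₂])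
    exact h.mem_closure_transSq_of_retractions hgen φ0 φ1 φ2 ψ0 ψ1 ψ2 φa ψa
  · rw [Subgroup.closure_le]
    rintro a (rfl | rfl) <;>
      simp [transSq, pow_two, h10, h11, h12, h20, h21, h22]

end Order

/-- Theorem 4.1, case `n - s - t` even: the group `G` is a solvable string C-group of
order `2^n ℓ1 ℓ2` and Schläfli type `{2^s ℓ1, 2^t ℓ2}`. -/
theorem stmt_10 (s t n l1 l2 : ℕ) (hs : 2 ≤ s) (ht : 2 ≤ t) (hn : s + t + 1 ≤ n)
    (hnst : Even (n - s - t)) (hl1 : Odd l1) (hl2 : Odd l2)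
    (hl1' : 0 < l1) (hl2' : 0 < l2) :
    Nat.card (PresentedGroup (rels s t n l1 l2)) = 2 ^ n * l1 * l2 ∧
    IsSolvable (PresentedGroup (rels s t n l1 l2)) ∧
    orderOf (g s t n l1 l2 0) = 2 ∧ orderOf (g s t n l1 l2 1) = 2 ∧
    orderOf (g s t n l1 l2 2) = 2 ∧
    orderOf (g s t n l1 l2 0 * g s t n l1 l2 2) = 2 ∧
    orderOf (g s t n l1 l2 0 * g s t n l1 l2 1) = 2 ^ s * l1 ∧
    orderOf (g s t n l1 l2 1 * g s t n l1 l2 2) = 2 ^ t * l2 ∧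
    InterProp ![g s t n l1 l2 0, g s t n l1 l2 1, g s t n l1 l2 2] := by
  have h2s : 4 ∣ 2 ^ s * l1 := (pow_dvd_pow 2 hs).mul_right l1
  have h2t : 4 ∣ 2 ^ t * l2 := (pow_dvd_pow 2 ht).mul_right l2
  have hs' : 2 ∣ 2 ^ s * l1 := (by decide : 2 ∣ 4).trans h2s
  have ht' : 2 ∣ 2 ^ t * l2 := (by decide : 2 ∣ 4).trans h2t
  have : NeZero (2 ^ s * l1) := ⟨by positivity⟩
  have : NeZero (2 ^ t * l2) := ⟨by positivity⟩
  have h := stringRel_g (s := s) (t := t) (n := n) (l1 := l1) (l2 := l2)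
  obtain ⟨π₁, h10, h11, h12⟩ := exists_hom_dihedral_left (s := s) (n := n) (l1 := l1) ht'
  obtain ⟨π₂, h20, h21, h22⟩ := exists_hom_dihedral_right (t := t) (n := n) (l2 := l2) hs'
  have hker := ker_prod_eq_closure hs' ht' h10 h11 h12 h20 h21 h22
  refine ⟨?_, ?_, ?_, ?_, ?_, ?_, ?_, ?_, ?_⟩
  · have hcard := (π₁.prod π₂).ker.card_mul_index
    rw [Subgroup.index_ker, range_prod_eq_ker_parity hs' ht' (π₁.prod π₂) (by simp [h10, h20])
      (by simp [h11, h21]) (by simp [h12, h22]) closure_g_eq_top, card_parity_ker, hker,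
      card_closure_transSq h2s h2t] at hcard
    rw [← hcard]
    obtain ⟨k, hk⟩ : ∃ k, n = s + t + 2 + 2 * k := by
      obtain ⟨c, hc⟩ := hnst
      exact ⟨c - 1, by omega⟩
    have hk' : (n - s - t - 2) / 2 = k := by omega
    rw [hk', hk]
    ring
  · have := isSolvable_dihedralGroup (2 ^ s * l1)
    have := isSolvable_dihedralGroup (2 ^ t * l2)
    have : Group.IsSolvable (π₁.prod π₂).ker := by
      refine Group.isSolvable_of_comm ?_
      rintro ⟨a, ha⟩ ⟨b, hb⟩
      rw [hker, mem_closure_pair_iff_zpow h.commute_transSq] at ha hb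
      obtain ⟨i, j, rfl⟩ := ha
      obtain ⟨i', j', rfl⟩ := hb
      have c := h.commute_transSq
      exact Subtype.ext ((((Commute.refl _).zpow_zpow i i').mul_right (c.zpow_zpow i j')).mul_left
        ((c.symm.zpow_zpow j i').mul_right ((Commute.refl _).zpow_zpow j j'))).eq
    exact Group.isSolvable_of_ker_le_range (π₁.prod π₂).ker.subtype (π₁.prod π₂)
      (Subgroup.range_subtype _).ge
  · exact orderOf_eq_two_of_hom π₁ h.sq_left (h10 ▸ sr_ne_one 0)
  · exact orderOf_eq_two_of_hom π₁ h.sq_mid (h11 ▸ sr_ne_one 1)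
  · exact orderOf_eq_two_of_hom π₂ h.sq_right (h22 ▸ sr_ne_one 0)
  · refine orderOf_eq_two_of_hom π₁ ?_ (by rw [map_mul, h10, h12, mul_one]; exact sr_ne_one 0)
    rw [mul_assoc, ← mul_assoc (g s t n l1 l2 2), ← h.comm, mul_assoc, h.left_cancel, h.sq_right]
  · refine Nat.dvd_antisymm (orderOf_dvd_of_pow_eq_one pow_left_g) ?_
    have hd := orderOf_map_dvd π₁ (g s t n l1 l2 0 * g s t n l1 l2 1)
    rwa [map_mul, h10, h11, DihedralGroup.sr_mul_sr, sub_zero, DihedralGroup.orderOf_r_one] at hd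
  · refine Nat.dvd_antisymm (orderOf_dvd_of_pow_eq_one pow_right_g) ?_
    have hd := orderOf_map_dvd π₂ (g s t n l1 l2 1 * g s t n l1 l2 2)
    rwa [map_mul, h21, h22, DihedralGroup.sr_mul_sr, zero_sub, ← DihedralGroup.inv_r, orderOf_inv,
      DihedralGroup.orderOf_r_one] at hd
  · have e : ![g s t n l1 l2 0, g s t n l1 l2 1, g s t n l1 l2 2] = g s t n l1 l2 := by
      ext i
      fin_cases i <;> rfl
    rw [e]
    exact interProp_of_retractions (exists_retraction hs' ht')

end Stmt10
end

section
/- For every odd prime p and all integers n, s, t with s ≥ 2, t ≥ 2 and n ≥ s + t + 1, there exists a finite group G of order 2^n · p together with elements ρ0, ρ1, ρ2 that generate G, such that ρ0, ρ1, ρ2 and ρ0ρ2 have order exactly 2, ρ0ρ1 has order exactly 2^s · p, ρ1ρ2 has order exactly 2^t, and the triple (ρ0, ρ1, ρ2) satisfies the intersection property in G. -/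
/-- The intersection property for a triple of elements. -/
def InterProp {G : Type*} [Group G] (ρ : Fin 3 → G) : Prop :=
  ∀ I J : Set (Fin 3),
    Subgroup.closure (ρ '' I) ⊓ Subgroup.closure (ρ '' J) =
      Subgroup.closure (ρ '' (I ∩ J))

/-- `(G, (ρ0, ρ1, ρ2))` is a string C-group of order `2^n p` with Schläfli type
`{2^s p, 2^t}`. -/
def IsType1StringC (p n s t : ℕ) (G : Type) [Group G] (ρ0 ρ1 ρ2 : G) : Prop :=
  Nat.card G = 2 ^ n * p ∧
  Subgroup.closure {ρ0, ρ1, ρ2} = ⊤ ∧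
  orderOf ρ0 = 2 ∧ orderOf ρ1 = 2 ∧ orderOf ρ2 = 2 ∧
  orderOf (ρ0 * ρ2) = 2 ∧
  orderOf (ρ0 * ρ1) = 2 ^ s * p ∧ orderOf (ρ1 * ρ2) = 2 ^ t ∧
  InterProp ![ρ0, ρ1, ρ2]

open DihedralGroup

theorem interProp_of_pairs {G : Type*} [Group G] (ρ : Fin 3 → G)
    (h01_12 : ∀ g ∈ Subgroup.closure {ρ 0, ρ 1}, g ∈ Subgroup.closure {ρ 1, ρ 2} →
      g ∈ Subgroup.closure {ρ 1})
    (h01_02 : ∀ g ∈ Subgroup.closure {ρ 0, ρ 1}, g ∈ Subgroup.closure {ρ 0, ρ 2} →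
      g ∈ Subgroup.closure {ρ 0})
    (h02_12 : ∀ g ∈ Subgroup.closure {ρ 0, ρ 2}, g ∈ Subgroup.closure {ρ 1, ρ 2} →
      g ∈ Subgroup.closure {ρ 2})
    (h0_1 : ∀ g ∈ Subgroup.closure {ρ 0}, g ∈ Subgroup.closure {ρ 1} → g = 1)
    (h1_2 : ∀ g ∈ Subgroup.closure {ρ 1}, g ∈ Subgroup.closure {ρ 2} → g = 1) :
    InterProp ρ := by
  have left_mem (a b g : G) (hg : g ∈ Subgroup.closure {a}) : g ∈ Subgroup.closure {a, b} :=
    Subgroup.closure_mono (by simp) hg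
  have right_mem (a b g : G) (hg : g ∈ Subgroup.closure {b}) : g ∈ Subgroup.closure {a, b} :=
    Subgroup.closure_mono (by simp) hg
  have key (i : Fin 3) (I : Set (Fin 3)) (g : G) (hI : g ∈ Subgroup.closure (ρ '' I))
      (hi : g ∈ Subgroup.closure (ρ '' {i}ᶜ)) : g ∈ Subgroup.closure (ρ '' (I \ {i})) := by
    by_cases hiI : i ∈ I
    swap
    · rwa [Set.sdiff_singleton_eq_self hiI]
    have c0 : ({0}ᶜ : Set (Fin 3)) = {1, 2} := by ext j; fin_cases j <;> simp
    have c1 : ({1}ᶜ : Set (Fin 3)) = {0, 2} := by ext j; fin_cases j <;> simp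
    have c2 : ({2}ᶜ : Set (Fin 3)) = {0, 1} := by ext j; fin_cases j <;> simp
    have hcases : I = Set.univ ∨ I = {0, 1} ∨ I = {0, 2} ∨ I = {1, 2} ∨ I = {0} ∨ I = {1} ∨
        I = {2} := by
      by_cases h0 : (0 : Fin 3) ∈ I <;> by_cases h1 : (1 : Fin 3) ∈ I <;>
        by_cases h2 : (2 : Fin 3) ∈ I <;> simp [Set.ext_iff, Fin.forall_fin_succ, *]
      fin_cases i <;> contradiction
    have d (a b : Fin 3) (h : a ≠ b) : ({a, b} \ {a} : Set (Fin 3)) = {b} := by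
      ext j; simp; grind
    have d' (a b : Fin 3) (h : a ≠ b) : ({a, b} \ {b} : Set (Fin 3)) = {a} := by
      ext j; simp; grind
    rcases hcases with rfl | rfl | rfl | rfl | rfl | rfl | rfl <;> fin_cases i <;>
      simp [c0, c1, c2, d, d', Set.image_insert_eq, ← Set.compl_eq_univ_sdiff] at hiI hI hi ⊢
    all_goals grind
  intro I J
  refine le_antisymm (fun g hg => ?_) (le_inf (Subgroup.closure_mono (Set.image_mono
    Set.inter_subset_left)) (Subgroup.closure_mono (Set.image_mono Set.inter_subset_right)))
  obtain ⟨hI, hJ⟩ := hg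
  have step (i : Fin 3) (K : Set (Fin 3)) (hK : g ∈ Subgroup.closure (ρ '' K)) :
      g ∈ Subgroup.closure (ρ '' (K \ ({i} \ J))) := by
    by_cases hi : i ∈ J
    · have : K \ ({i} \ J) = K := by ext j; simp; grind
      rwa [this]
    · have : K \ ({i} \ J) = K \ {i} := by ext j; simp; grind
      rw [this]
      exact key i K g hK (Subgroup.closure_mono (Set.image_mono (by
        intro j hj; simp; rintro rfl; exact hi hj)) hJ)
  refine Subgroup.closure_mono (Set.image_mono ?_) (step 0 _ (step 1 _ (step 2 _ hI)))
  intro j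
  fin_cases j <;> simp

theorem DihedralGroup.sr_ne_one {n : ℕ} (i : ZMod n) : sr i ≠ 1 := by
  rw [one_def]
  nofun

theorem mem_closure_pair_of_involutions {G : Type*} [Group G] {x y g : G} (hx : x * x = 1)
    (hy : y * y = 1) (hg : g ∈ Subgroup.closure {x, y}) :
    ∃ k : ℤ, g = (x * y) ^ k ∨ g = (x * y) ^ k * y := by
  have hx' : x⁻¹ = x := inv_eq_of_mul_eq_one_left hx
  have hy' : y⁻¹ = y := inv_eq_of_mul_eq_one_left hy
  have key (h : G) (z : G) (hz : z = x ∨ z = y)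
      (hh : ∃ k : ℤ, h = (x * y) ^ k ∨ h = (x * y) ^ k * y) :
      ∃ k : ℤ, h * z = (x * y) ^ k ∨ h * z = (x * y) ^ k * y := by
    obtain ⟨k, rfl | rfl⟩ := hh <;> rcases hz with rfl | rfl
    · exact ⟨k + 1, Or.inr (by rw [zpow_add_one, mul_assoc, mul_assoc, hy, mul_one])⟩
    · exact ⟨k, Or.inr rfl⟩
    · exact ⟨k - 1, Or.inl (by rw [zpow_sub_one, mul_inv_rev, hx', hy', mul_assoc])⟩
    · exact ⟨k, Or.inl (by rw [mul_assoc, hy, mul_one])⟩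
  induction hg using Subgroup.closure_induction_right with
  | one => exact ⟨0, Or.inl (by simp)⟩
  | mul_right h _ z hz ih => exact key h z (by simpa using hz) ih
  | mul_inv_cancel h _ z hz ih =>
    have : z⁻¹ = z := by rcases hz with rfl | rfl <;> assumption
    rw [this]
    exact key h z (by simpa using hz) ih

theorem map_eq_one_or_of_mem_closure_pair {G H : Type*} [Group G] [Group H] (f : G →* H)
    {x y g : G} (hx : f x = 1) (hy : y * y = 1) (hg : g ∈ Subgroup.closure {x, y}) :
    f g = 1 ∨ f g = f y := by
  have hy' : f y * f y = 1 := by rw [← map_mul, hy, map_one]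
  induction hg using Subgroup.closure_induction with
  | mem z hz => rcases hz with rfl | rfl <;> simp [hx]
  | one => simp
  | mul a b _ _ ha hb => rcases ha with ha | ha <;> rcases hb with hb | hb <;> simp [ha, hb, hy']
  | inv a _ ha => rcases ha with ha | ha <;> simp [ha, inv_eq_of_mul_eq_one_left hy']

theorem eq_one_or_of_mem_closure_singleton {G : Type*} [Group G] {x g : G} (hx : x * x = 1)
    (hg : g ∈ Subgroup.closure {x}) : g = 1 ∨ g = x := by
  simpa using map_eq_one_or_of_mem_closure_pair (MonoidHom.id G) (x := 1) (y := x) (g := g)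
    (by simp) hx (by simpa using hg)

theorem mem_closure_pair_of_commute {G : Type*} [Group G] {x y g : G} (hx : x * x = 1)
    (hy : y * y = 1) (hxy : x * y = y * x) (hg : g ∈ Subgroup.closure {x, y}) :
    g = 1 ∨ g = x ∨ g = y ∨ g = x * y := by
  have hsq : (x * y) ^ (2 : ℤ) = 1 := by
    rw [zpow_ofNat, Commute.mul_pow hxy, sq, sq, hx, hy, mul_one]
  have hmod (k : ℤ) : (x * y) ^ k = 1 ∨ (x * y) ^ k = x * y := by
    obtain ⟨m, rfl | rfl⟩ := Int.even_or_odd' k <;> simp [zpow_add, zpow_mul, hsq]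
  obtain ⟨k, rfl | rfl⟩ := mem_closure_pair_of_involutions hx hy hg <;>
    rcases hmod k with h | h <;> simp [h, mul_assoc, hy]

/-- A triple of involutions of a group with homomorphisms to two dihedral groups, the first one
faithful on `⟨ρ 0, ρ 1⟩` and the second one on `⟨ρ 1, ρ 2⟩`. -/
structure IsDihedralTriple (M N : ℕ) {G : Type*} [Group G] (ρ : Fin 3 → G)
    (α : G →* DihedralGroup M) (β : G →* DihedralGroup N) : Prop where
  mul_self : ∀ i, ρ i * ρ i = 1
  comm : ρ 0 * ρ 2 = ρ 2 * ρ 0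
  pow_left : (ρ 0 * ρ 1) ^ M = 1
  pow_right : (ρ 1 * ρ 2) ^ N = 1
  left_zero : α (ρ 0) = sr 0
  left_one : α (ρ 1) = sr 1
  left_two : α (ρ 2) = 1
  right_zero : β (ρ 0) = 1
  right_one : β (ρ 1) = sr 1
  right_two : β (ρ 2) = sr 0

namespace IsDihedralTriple

variable {M N : ℕ} {G : Type*} [Group G] {ρ : Fin 3 → G}
  {α : G →* DihedralGroup M} {β : G →* DihedralGroup N}

theorem orderOf_left (h : IsDihedralTriple M N ρ α β) : orderOf (ρ 0 * ρ 1) = M := by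
  refine Nat.dvd_antisymm (orderOf_dvd_of_pow_eq_one h.pow_left) ?_
  have := orderOf_map_dvd α (ρ 0 * ρ 1)
  rwa [map_mul, h.left_zero, h.left_one, sr_mul_sr, sub_zero, orderOf_r_one] at this

theorem orderOf_right (h : IsDihedralTriple M N ρ α β) : orderOf (ρ 1 * ρ 2) = N := by
  refine Nat.dvd_antisymm (orderOf_dvd_of_pow_eq_one h.pow_right) ?_
  have := orderOf_map_dvd β (ρ 1 * ρ 2)
  rwa [map_mul, h.right_one, h.right_two, sr_mul_sr, zero_sub, ← inv_r, orderOf_inv,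
    orderOf_r_one] at this

theorem orderOf_apply (h : IsDihedralTriple M N ρ α β) (i : Fin 3) : orderOf (ρ i) = 2 := by
  refine orderOf_eq_prime ((sq _).trans (h.mul_self i)) fun hi => ?_
  have h0 := congrArg α hi
  have h1 := congrArg β hi
  fin_cases i <;> simp [h.left_zero, h.left_one, h.right_two, DihedralGroup.sr_ne_one] at h0 h1

theorem orderOf_mul (h : IsDihedralTriple M N ρ α β) : orderOf (ρ 0 * ρ 2) = 2 := by
  refine orderOf_eq_prime ?_ fun hi => ?_
  · rw [Commute.mul_pow h.comm, sq, sq, h.mul_self, h.mul_self, one_mul]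
  · have h0 := congrArg α hi
    simp [h.left_zero, h.left_two, DihedralGroup.sr_ne_one] at h0

theorem interProp (h : IsDihedralTriple M N ρ α β) (hM : M ≠ 1) (hN : N ≠ 1) :
    InterProp ρ := by
  have : Nontrivial (ZMod M) := ZMod.nontrivial_iff.2 hM
  have : Nontrivial (ZMod N) := ZMod.nontrivial_iff.2 hN
  have hα := h.left_zero
  have hα' := h.left_one
  have hα'' := h.left_two
  have hβ := h.right_zero
  have hβ' := h.right_one
  have hβ'' := h.right_two
  have hsingle (i : Fin 3) (g : G) (hg : g ∈ Subgroup.closure {ρ i}) : g = 1 ∨ g = ρ i :=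
    eq_one_or_of_mem_closure_singleton (h.mul_self i) hg
  have hα12 (g : G) (hg : g ∈ Subgroup.closure {ρ 1, ρ 2}) : α g = 1 ∨ α g = sr 1 := by
    rw [← hα']
    exact map_eq_one_or_of_mem_closure_pair α hα'' (h.mul_self 1) (Set.pair_comm _ _ ▸ hg)
  have hβ01 (g : G) (hg : g ∈ Subgroup.closure {ρ 0, ρ 1}) : β g = 1 ∨ β g = sr 1 := by
    rw [← hβ']
    exact map_eq_one_or_of_mem_closure_pair β hβ (h.mul_self 1) hg
  have hrot (k : ℤ) : α ((ρ 0 * ρ 1) ^ k) = r k := by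
    rw [map_zpow, map_mul, hα, hα', sr_mul_sr, sub_zero, r_one_zpow]
  have hker (k : ℤ) (hk : (r k : DihedralGroup M) = 1) : (ρ 0 * ρ 1) ^ k = 1 := by
    rw [one_def, r.injEq, ZMod.intCast_zmod_eq_zero_iff_dvd] at hk
    obtain ⟨m, rfl⟩ := hk
    rw [zpow_mul, zpow_natCast, h.pow_left, one_zpow]
  have h02 (g : G) (hg : g ∈ Subgroup.closure {ρ 0, ρ 2}) :
      g = 1 ∨ g = ρ 0 ∨ g = ρ 2 ∨ g = ρ 0 * ρ 2 :=
    mem_closure_pair_of_commute (h.mul_self 0) (h.mul_self 2) h.comm hg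
  refine interProp_of_pairs ρ ?_ ?_ ?_ ?_ ?_
  · intro g hg hg'
    obtain ⟨k, rfl | rfl⟩ := mem_closure_pair_of_involutions (h.mul_self 0) (h.mul_self 1) hg
    · rcases hα12 _ hg' with h1 | h1
      · rw [hrot] at h1
        rw [hker k h1]
        exact one_mem _
      · simp [hrot] at h1
    · rcases hα12 _ hg' with h1 | h1
      · simp [hrot, hα', DihedralGroup.sr_ne_one] at h1
      · rw [map_mul, hrot, hα', mul_eq_right] at h1
        rw [hker k h1, one_mul]
        exact Subgroup.mem_closure_singleton_self _
  · intro g hg hg'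
    have := hβ01 g hg
    rcases h02 g hg' with rfl | rfl | rfl | rfl <;>
      simp_all [DihedralGroup.sr_ne_one]
  · intro g hg hg'
    have := hα12 g hg'
    rcases h02 g hg with rfl | rfl | rfl | rfl <;>
      simp_all [DihedralGroup.sr_ne_one]
  all_goals
    intro g hg hg'
    rcases hsingle _ g hg with rfl | rfl
    · rfl
    rcases hsingle _ _ hg' with h1 | h1
    · exact h1
    · have h2 := congrArg α h1
      simp [hα, hα', hα'', DihedralGroup.sr_ne_one] at h2

end IsDihedralTriple

/-- Generators satisfying the defining relations of the Coxeter group `[4, 4]`. -/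
structure IsFourFourTriple {T : Type*} [Group T] (x : Fin 3 → T) : Prop where
  mul_self : ∀ i, x i * x i = 1
  comm : x 0 * x 2 = x 2 * x 0
  pow_left : (x 0 * x 1) ^ 4 = 1
  pow_right : (x 1 * x 2) ^ 4 = 1
  closure_range : Subgroup.closure (Set.range x) = ⊤

/-- The image of a generating triple in a quotient. -/
theorem IsFourFourTriple.map {T T' : Type*} [Group T] [Group T'] {x : Fin 3 → T}
    (hx : IsFourFourTriple x) (f : T →* T') (hf : Function.Surjective f) :
    IsFourFourTriple (f ∘ x) where
  mul_self i := by simp [← map_mul, hx.mul_self]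
  comm := by simp [← map_mul, hx.comm]
  pow_left := by simp [← map_mul, ← map_pow, hx.pow_left]
  pow_right := by simp [← map_mul, ← map_pow, hx.pow_right]
  closure_range := by
    rw [Set.range_comp, ← MonoidHom.map_closure, hx.closure_range, ← MonoidHom.range_eq_map,
      MonoidHom.range_eq_top.2 hf]

/-- The mix of a triple `x` with the triple generating the tight group of type `{M, N}`. -/
def mix (M N : ℕ) {T : Type*} [Group T] (x : Fin 3 → T) :
    Fin 3 → DihedralGroup M × DihedralGroup N × T :=
  ![(sr 0, 1, x 0), (sr 1, sr 1, x 1), (1, sr 0, x 2)]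

/-- The group generated by `mix M N x`. -/
def mixGroup (M N : ℕ) {T : Type*} [Group T] (x : Fin 3 → T) :
    Subgroup (DihedralGroup M × DihedralGroup N × T) :=
  Subgroup.closure (Set.range (mix M N x))

/-- The triple `mix M N x` inside the group it generates. -/
def mixGen (M N : ℕ) {T : Type*} [Group T] (x : Fin 3 → T) (i : Fin 3) : mixGroup M N x :=
  ⟨mix M N x i, Subgroup.subset_closure ⟨i, rfl⟩⟩

section Mix

variable {M N : ℕ} {T : Type*} [Group T] {x : Fin 3 → T}

theorem closure_range_mixGen : Subgroup.closure (Set.range (mixGen M N x)) = ⊤ := by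
  refine Eq.trans ?_ (Subgroup.closure_closure_coe_preimage (k := Set.range (mix M N x)))
  congr 1
  ext g
  simp [mixGen, Subtype.ext_iff]
  rfl

theorem isDihedralTriple_mixGen (hx : IsFourFourTriple x) (hM : 4 ∣ M) (hN : 4 ∣ N) :
    IsDihedralTriple M N (mixGen M N x)
      ((MonoidHom.fst _ _).comp (mixGroup M N x).subtype)
      (((MonoidHom.fst _ _).comp (MonoidHom.snd _ _)).comp (mixGroup M N x).subtype) where
  mul_self i := by
    have := hx.mul_self i
    fin_cases i <;> simpa [mixGen, mix, Subtype.ext_iff] using this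
  comm := by simp [mixGen, mix, hx.comm]
  pow_left := by
    obtain ⟨m, rfl⟩ := hM
    have h0 : (4 * m : ZMod (4 * m)) = 0 := mod_cast ZMod.natCast_self (4 * m)
    have h4 : (sr 1 : DihedralGroup N) ^ 4 = 1 := by
      rw [pow_mul _ 2 2, sq (sr 1), sr_mul_self, one_pow]
    simp [mixGen, mix, Subtype.ext_iff, pow_mul _ 4 m, hx.pow_left, h4, h0]
  pow_right := by
    obtain ⟨m, rfl⟩ := hN
    have h0 : (4 * m : ZMod (4 * m)) = 0 := mod_cast ZMod.natCast_self (4 * m)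
    have h4 : (sr 1 : DihedralGroup M) ^ 4 = 1 := by
      rw [pow_mul _ 2 2, sq (sr 1), sr_mul_self, one_pow]
    simp [mixGen, mix, Subtype.ext_iff, pow_mul _ 4 m, hx.pow_right, h4, h0]
  left_zero := rfl
  left_one := rfl
  left_two := rfl
  right_zero := rfl
  right_one := rfl
  right_two := rfl

/-- The parity of the index of a rotation or reflection. -/
def DihedralGroup.parity {n : ℕ} (hn : 2 ∣ n) : DihedralGroup n →* Multiplicative (ZMod 2) where
  toFun
    | r i => Multiplicative.ofAdd (ZMod.castHom hn (ZMod 2) i)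
    | sr i => Multiplicative.ofAdd (ZMod.castHom hn (ZMod 2) i)
  map_one' := by simp [one_def, -r_zero]
  map_mul' := by
    rintro (i | i) (j | j) <;> simp only [r_mul_r, r_mul_sr, sr_mul_r, sr_mul_sr, map_add, map_sub,
      ← ofAdd_add, CharTwo.sub_eq_add, add_comm]

theorem parity_sr {n : ℕ} (hn : 2 ∣ n) (i : ZMod n) :
    DihedralGroup.parity hn (sr i) = Multiplicative.ofAdd (ZMod.castHom hn (ZMod 2) i) := rfl

/-- If the mix is determined by its dihedral components, it is a subgroup of the tight group. -/
theorem card_mixGroup_le (hM : 2 ∣ M) (hN : 2 ∣ N) (hM0 : M ≠ 0) (hN0 : N ≠ 0)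
    (h : ∀ z : T, ((1, 1, z) : DihedralGroup M × DihedralGroup N × T) ∈ mixGroup M N x → z = 1) :
    Nat.card (mixGroup M N x) ≤ 2 * M * N := by
  have : NeZero M := ⟨hM0⟩
  have : NeZero N := ⟨hN0⟩
  let σ : DihedralGroup M × DihedralGroup N →* Multiplicative (ZMod 2) :=
    (DihedralGroup.parity hM).coprod (DihedralGroup.parity hN)
  let f : DihedralGroup M × DihedralGroup N × T →* DihedralGroup M × DihedralGroup N :=
    (MonoidHom.fst _ _).prod ((MonoidHom.fst _ _).comp (MonoidHom.snd _ _))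
  have hσ : Function.Surjective σ := by
    intro y
    refine ⟨(sr (Multiplicative.toAdd y).val, 1), ?_⟩
    simp [σ, parity_sr]
  have hcard : 2 * Nat.card σ.ker = 2 * (2 * M * N) := by
    have h1 := σ.ker.card_mul_index
    rw [Subgroup.index_ker, MonoidHom.range_eq_top.2 hσ, Subgroup.card_top, Nat.card_prod,
      nat_card, nat_card] at h1
    have h2 : Nat.card (Multiplicative (ZMod 2)) = 2 := Nat.card_zmod 2
    rw [h2] at h1
    linarith
  have hmem : mixGroup M N x ≤ σ.ker.comap f := by
    rw [mixGroup, Subgroup.closure_le]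
    rintro _ ⟨i, rfl⟩
    fin_cases i
    · simp [mix, f, σ, parity_sr]
    · simp [mix, f, σ, parity_sr]
      rw [ZMod.cast_one hM, ZMod.cast_one hN]
      rfl
    · simp [mix, f, σ, parity_sr]
  have hinj : Function.Injective
      ((f.comp (mixGroup M N x).subtype).codRestrict σ.ker fun g => hmem g.2) := by
    rw [injective_iff_map_eq_one]
    rintro ⟨⟨a, b, z⟩, hg⟩ h1
    have h2 : (a, b) = 1 := congrArg Subtype.val h1
    obtain ⟨rfl, rfl⟩ := Prod.mk.inj h2
    obtain rfl := h z hg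
    rfl
  have := Nat.card_le_card_of_injective _ hinj
  omega

theorem exists_mem_mixGroup (hx : IsFourFourTriple x) (τ : T) :
    ∃ g ∈ mixGroup M N x, g.2.2 = τ := by
  have : (mixGroup M N x).map ((MonoidHom.snd _ _).comp (MonoidHom.snd _ _)) = ⊤ := by
    rw [mixGroup, MonoidHom.map_closure, ← Set.range_comp, ← hx.closure_range]
    congr 2
    ext i
    fin_cases i <;> rfl
  exact Subgroup.mem_map.1 (this ▸ Subgroup.mem_top τ)

end Mix

/-- A nontrivial normal subgroup of a finite 2-group contains a central involution. -/
theorem exists_central_involution {T : Type*} [Group T] [Finite T] (hT : IsPGroup 2 T)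
    (K : Subgroup T) [K.Normal] (hK : K ≠ ⊥) :
    ∃ z ∈ K, z ∈ Subgroup.center T ∧ orderOf z = 2 := by
  have h2 : 2 ∣ Nat.card K :=
    ((hT.to_subgroup K).card_eq_or_dvd).resolve_left fun h => hK (K.card_eq_one.1 h)
  obtain ⟨w, hw, hw1⟩ := (hT.of_equiv ConjAct.toConjAct
    ).exists_fixed_point_of_prime_dvd_card_of_fixed_point K h2 (a := (1 : K)) (fun g => by simp)
  have hwc : (w : T) ∈ Subgroup.center T := by
    rw [← SetLike.mem_coe, ← ConjAct.fixedPoints_eq_center]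
    intro g
    exact congrArg Subtype.val (hw g)
  have hne : K ⊓ Subgroup.center T ≠ ⊥ := by
    intro h
    have : (w : T) ∈ K ⊓ Subgroup.center T := ⟨w.2, hwc⟩
    rw [h, Subgroup.mem_bot] at this
    exact hw1 (Subtype.ext this.symm)
  have h2' : 2 ∣ Nat.card (K ⊓ Subgroup.center T : Subgroup T) :=
    ((hT.to_subgroup _).card_eq_or_dvd).resolve_left fun h => hne (Subgroup.card_eq_one.1 h)
  obtain ⟨z, hz⟩ := exists_prime_orderOf_dvd_card' 2 h2'
  exact ⟨z, z.2.1, z.2.2, by rw [Subgroup.orderOf_coe, hz]⟩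

theorem exists_quotient_card_mixGroup {M N : ℕ} {T : Type} [Group T] [Finite T]
    (hM : M ≠ 0) (hN : N ≠ 0) {x : Fin 3 → T} (hx : IsFourFourTriple x) (hT : IsPGroup 2 T)
    {z : T} (hz : ((1, 1, z) : DihedralGroup M × DihedralGroup N × T) ∈ mixGroup M N x)
    (hz1 : z ≠ 1) :
    ∃ (T' : Type) (_ : Group T') (_ : Finite T') (x' : Fin 3 → T'), IsFourFourTriple x' ∧
      IsPGroup 2 T' ∧ Nat.card T' < Nat.card T ∧
      Nat.card (mixGroup M N x) ≤ 2 * Nat.card (mixGroup M N x') := by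
  have : NeZero M := ⟨hM⟩
  have : NeZero N := ⟨hN⟩
  let K : Subgroup T := (mixGroup M N x).comap ((MonoidHom.inr _ _).comp (MonoidHom.inr _ _))
  have hKn : K.Normal := by
    refine ⟨fun k hk τ => ?_⟩
    obtain ⟨g, hg, rfl⟩ := exists_mem_mixGroup (M := M) (N := N) hx τ
    have := mul_mem (mul_mem hg hk) (inv_mem hg)
    simpa [K, Subgroup.mem_comap, Prod.ext_iff, Prod.mul_def] using this
  have hK : K ≠ ⊥ := fun h => hz1 (by
    rw [← Subgroup.mem_bot, ← h]
    exact hz)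
  obtain ⟨c, -, hc, hc2⟩ := exists_central_involution hT K hK
  let Z := Subgroup.zpowers c
  have hZn : Z.Normal := ⟨fun k hk τ => by
    have : k ∈ Subgroup.center T := (Subgroup.zpowers_le.2 hc) hk
    rwa [Subgroup.mem_center_iff.1 this τ, mul_inv_cancel_right]⟩
  have hZ : Nat.card Z = 2 := by rw [Nat.card_zpowers, hc2]
  refine ⟨T ⧸ Z, inferInstance, inferInstance, QuotientGroup.mk' Z ∘ x,
    hx.map _ (QuotientGroup.mk'_surjective Z), hT.to_quotient Z, ?_, ?_⟩
  · rw [Z.card_eq_card_quotient_mul_card_subgroup, hZ]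
    have : 0 < Nat.card (T ⧸ Z) := Nat.card_pos
    omega
  · let F : DihedralGroup M × DihedralGroup N × T →* DihedralGroup M × DihedralGroup N × (T ⧸ Z) :=
      (MonoidHom.id _).prodMap ((MonoidHom.id _).prodMap (QuotientGroup.mk' Z))
    have hmap : mixGroup M N (QuotientGroup.mk' Z ∘ x) =
        (F.comp (mixGroup M N x).subtype).range := by
      rw [MonoidHom.range_comp, Subgroup.range_subtype, mixGroup, mixGroup,
        MonoidHom.map_closure, ← Set.range_comp]
      congr 2
      ext i : 1
      fin_cases i <;> rfl
    have hker (g : (F.comp (mixGroup M N x).subtype).ker) : g.1.1.2.2 ∈ Z :=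
      (QuotientGroup.eq_one_iff _).1 (congrArg (fun y => y.2.2) g.2)
    have hfst (g : (F.comp (mixGroup M N x).subtype).ker) : g.1.1.1 = 1 :=
      congrArg Prod.fst g.2
    have hsnd (g : (F.comp (mixGroup M N x).subtype).ker) : g.1.1.2.1 = 1 :=
      congrArg (fun y => y.2.1) g.2
    have hle : Nat.card (F.comp (mixGroup M N x).subtype).ker ≤ 2 := by
      rw [← hZ]
      refine Nat.card_le_card_of_injective
        (fun g => (⟨g.1.1.2.2, hker g⟩ : Z)) fun g g' h => ?_
      exact Subtype.ext (Subtype.ext (Prod.ext ((hfst g).trans (hfst g').symm)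
        (Prod.ext ((hsnd g).trans (hsnd g').symm) (congrArg Subtype.val h))))
    have h1 := (F.comp (mixGroup M N x).subtype).ker.card_mul_index
    rw [Subgroup.index_ker, ← hmap] at h1
    rw [← h1]
    gcongr

theorem exists_card_mixGroup_eq {p n s t : ℕ} (hp : p.Prime) (hs : 2 ≤ s) (ht : 2 ≤ t)
    (hn : s + t + 1 ≤ n) (k : ℕ) :
    ∀ (T : Type) [Group T] [Finite T] (x : Fin 3 → T), Nat.card T = k → IsFourFourTriple x →
      IsPGroup 2 T → 2 ^ n * p ≤ Nat.card (mixGroup (2 ^ s * p) (2 ^ t) x) →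
    ∃ (T' : Type) (_ : Group T') (_ : Finite T') (x' : Fin 3 → T'), IsFourFourTriple x' ∧
      Nat.card (mixGroup (2 ^ s * p) (2 ^ t) x') = 2 ^ n * p := by
  have hp0 : p ≠ 0 := hp.ne_zero
  have hM : 2 ^ s * p ≠ 0 := by positivity
  have hN : 2 ^ t ≠ 0 := by positivity
  have hM4 : 4 ∣ 2 ^ s * p := ((pow_dvd_pow 2 hs).mul_right p)
  have hN4 : 4 ∣ 2 ^ t := pow_dvd_pow 2 ht
  have : NeZero (2 ^ s * p) := ⟨hM⟩
  have : NeZero (2 ^ t) := ⟨hN⟩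
  induction k using Nat.strong_induction_on with
  | _ k ih =>
  intro T _ _ x hk hx hT hle
  rcases hle.eq_or_lt with heq | hlt
  · exact ⟨T, _, ‹_›, x, hx, heq.symm⟩
  have hcard : ∃ m, Nat.card (mixGroup (2 ^ s * p) (2 ^ t) x) = 2 ^ m * p := by
    obtain ⟨a, ha⟩ := IsPGroup.iff_card.1 hT
    have h1 : Nat.card (mixGroup (2 ^ s * p) (2 ^ t) x) ∣ 2 ^ (s + t + 2 + a) * p := by
      refine (Subgroup.card_subgroup_dvd_card _).trans (dvd_of_eq ?_)
      rw [Nat.card_prod, Nat.card_prod, nat_card, nat_card, ha]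
      ring
    have h2 : p ∣ Nat.card (mixGroup (2 ^ s * p) (2 ^ t) x) := by
      have h3 := orderOf_dvd_natCard (mixGen (2 ^ s * p) (2 ^ t) x 0 * mixGen _ _ x 1)
      rw [(isDihedralTriple_mixGen hx hM4 hN4).orderOf_left] at h3
      exact (dvd_mul_left _ _).trans h3
    obtain ⟨c, hc⟩ := h2
    rw [hc, mul_comm, Nat.mul_dvd_mul_iff_right hp.pos, Nat.dvd_prime_pow Nat.prime_two] at h1
    obtain ⟨m, -, rfl⟩ := h1
    exact ⟨m, by rw [hc, mul_comm]⟩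
  obtain ⟨m, hm⟩ := hcard
  have hnm : n + 1 ≤ m := by
    rw [hm, Nat.mul_lt_mul_right hp.pos] at hlt
    exact (Nat.pow_lt_pow_iff_right (by norm_num)).1 hlt
  have hz : ∃ z : T, (1, 1, z) ∈ mixGroup (2 ^ s * p) (2 ^ t) x ∧ z ≠ 1 := by
    by_contra! h
    have h1 := card_mixGroup_le ((by norm_num : 2 ∣ 4).trans hM4)
      ((by norm_num : 2 ∣ 4).trans hN4) hM hN h
    have h2 : 2 ^ (s + t + 1) * p ≤ 2 ^ n * p := by gcongr; norm_num
    have h3 : 2 * (2 ^ s * p) * 2 ^ t = 2 ^ (s + t + 1) * p := by ring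
    omega
  obtain ⟨z, hz, hz1⟩ := hz
  obtain ⟨T', _, _, x', hx', hT', hlt', hle'⟩ := exists_quotient_card_mixGroup hM hN hx hT hz hz1
  refine ih _ (hk ▸ hlt') T' x' rfl hx' hT' ?_
  have h1 : 2 ^ (n + 1) * p ≤ 2 ^ m * p := by gcongr; norm_num
  have h2 : 2 ^ (n + 1) * p = 2 * (2 ^ n * p) := by ring
  omega

/-- There are arbitrarily large finite 2-groups that are quotients of the Coxeter group `[4, 4]`. -/
theorem exists_large_isFourFourTriple (k : ℕ) :
    ∃ (T : Type) (_ : Group T) (_ : Finite T) (x : Fin 3 → T), IsFourFourTriple x ∧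
      IsPGroup 2 T ∧ 2 ^ k ≤ Nat.card T := by
  obtain ⟨c, hc1, hcc, hQ⟩ : ∃ c : Multiplicative (ZMod 2),
      c ≠ 1 ∧ c * c = 1 ∧ ∀ q, q = 1 ∨ q = c := by decide
  have hc : c⁻¹ = c := inv_eq_of_mul_eq_one_left hcc
  let y : Fin 3 → DihedralGroup (2 ^ k) ≀ᵣ Multiplicative (ZMod 2) :=
    ![⟨fun q => if q = 1 then sr 1 else 1, 1⟩, ⟨1, c⟩, ⟨fun q => if q = 1 then 1 else sr 0, 1⟩]
  have hW : IsPGroup 2 (DihedralGroup (2 ^ k) ≀ᵣ Multiplicative (ZMod 2)) := by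
    refine IsPGroup.of_card (n := (k + 1) * 2 + 1) ?_
    rw [RegularWreathProduct.card, nat_card]
    have : Nat.card (Multiplicative (ZMod 2)) = 2 := Nat.card_zmod 2
    rw [this]
    ring
  have hself (i : Fin 3) : y i * y i = 1 := by
    fin_cases i <;> (ext q <;> [rcases hQ q with rfl | rfl; skip] <;> simp [y, hcc, hc1])
  have hcomm : y 0 * y 2 = y 2 * y 0 := by
    ext q <;> [rcases hQ q with rfl | rfl; skip] <;> simp [y, hc1]
  have hleft : (y 0 * y 1) ^ 4 = 1 := by
    ext q <;> [rcases hQ q with rfl | rfl; skip] <;> simp [y, hcc, hc1, pow_succ, hc]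
  have hright : (y 1 * y 2) ^ 4 = 1 := by
    ext q <;> [rcases hQ q with rfl | rfl; skip] <;> simp [y, hcc, hc1, pow_succ, hc]
  let x (i : Fin 3) : Subgroup.closure (Set.range y) := ⟨y i, Subgroup.subset_closure ⟨i, rfl⟩⟩
  refine ⟨Subgroup.closure (Set.range y), inferInstance, inferInstance, x, ⟨?_, ?_, ?_, ?_, ?_⟩,
    hW.to_subgroup _, ?_⟩
  · exact fun i => Subtype.ext (hself i)
  · exact Subtype.ext hcomm
  · exact Subtype.ext hleft
  · exact Subtype.ext hright
  · refine Eq.trans ?_ (Subgroup.closure_closure_coe_preimage (k := Set.range y))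
    congr 1
    ext g
    simp [x, Subtype.ext_iff]
  · let g := x 0 * (x 1 * x 2 * x 1)
    have hpow (m : ℕ) : (g ^ m).1.left 1 = r (-(m : ZMod (2 ^ k))) := by
      induction m with
      | zero => simp
      | succ m ih =>
        have hg : g.1.left 1 = r (-1) ∧ g.1.right = 1 := by
          simp [g, x, y, hcc, hc1, hc]
        rw [pow_succ', Subgroup.coe_mul, RegularWreathProduct.mul_left, Pi.mul_apply, hg.1, hg.2,
          inv_one, one_mul, ih, r_mul_r, Nat.cast_succ, neg_add_rev]
    have hdvd : 2 ^ k ∣ orderOf g := by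
      have h1 := hpow (orderOf g)
      rw [pow_orderOf_eq_one] at h1
      have h2 : (r 0 : DihedralGroup (2 ^ k)) = r (-(orderOf g : ZMod (2 ^ k))) := h1
      rw [r.injEq, eq_comm, neg_eq_zero] at h2
      exact (ZMod.natCast_eq_zero_iff _ _).1 h2
    exact Nat.le_of_dvd Nat.card_pos (hdvd.trans (orderOf_dvd_natCard g))

/-- Corollary 4.2: for every odd prime `p` and `s, t ≥ 2`, `n ≥ s + t + 1`, there is a
regular 3-polytope of order `2^n p` with Schläfli type `{2^s p, 2^t}`. -/
theorem stmt_11 (p n s t : ℕ) (hp : p.Prime) (hodd : Odd p)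
    (hs : 2 ≤ s) (ht : 2 ≤ t) (hn : s + t + 1 ≤ n) :
    ∃ (G : Type) (inst : Group G) (ρ0 ρ1 ρ2 : G),
      Finite G ∧ @IsType1StringC p n s t G inst ρ0 ρ1 ρ2 := by
  have hp0 : p ≠ 0 := hp.ne_zero
  have hM4 : 4 ∣ 2 ^ s * p := (pow_dvd_pow 2 hs).mul_right p
  have hN4 : 4 ∣ 2 ^ t := pow_dvd_pow 2 ht
  obtain ⟨T₀, _, _, x₀, hx₀, hT₀, hlarge⟩ := exists_large_isFourFourTriple (n + p)
  have hle : 2 ^ n * p ≤ Nat.card (mixGroup (2 ^ s * p) (2 ^ t) x₀) := by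
    have : NeZero (2 ^ s * p) := ⟨by positivity⟩
    have hsurj : Function.Surjective fun g : mixGroup (2 ^ s * p) (2 ^ t) x₀ => g.1.2.2 := by
      intro τ
      obtain ⟨g, hg, rfl⟩ := exists_mem_mixGroup (M := 2 ^ s * p) (N := 2 ^ t) hx₀ τ
      exact ⟨⟨g, hg⟩, rfl⟩
    calc 2 ^ n * p ≤ 2 ^ n * 2 ^ p := by gcongr; exact Nat.lt_two_pow_self.le
      _ = 2 ^ (n + p) := (pow_add 2 n p).symm
      _ ≤ Nat.card T₀ := hlarge
      _ ≤ _ := Nat.card_le_card_of_surjective _ hsurj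
  obtain ⟨T, _, _, x, hx, hcard⟩ := exists_card_mixGroup_eq hp hs ht hn _ T₀ x₀ rfl hx₀ hT₀ hle
  have htriple := isDihedralTriple_mixGen hx hM4 hN4
  refine ⟨mixGroup (2 ^ s * p) (2 ^ t) x, inferInstance, mixGen _ _ x 0, mixGen _ _ x 1,
    mixGen _ _ x 2, Nat.finite_of_card_ne_zero (by rw [hcard]; positivity), hcard, ?_,
    htriple.orderOf_apply 0, htriple.orderOf_apply 1, htriple.orderOf_apply 2,
    htriple.orderOf_mul, htriple.orderOf_left, htriple.orderOf_right, ?_⟩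
  · rw [← closure_range_mixGen]
    congr 1
    ext g
    simp [Fin.exists_fin_succ, eq_comm]
  · have h1 : ![mixGen (2 ^ s * p) (2 ^ t) x 0, mixGen _ _ x 1, mixGen _ _ x 2] = mixGen _ _ x := by
      ext i : 1
      fin_cases i <;> rfl
    rw [h1]
    refine htriple.interProp ?_ ?_ <;> rintro h <;> simp [h] at hM4 hN4
end
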